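/- arXiv:1711.02916 — 3 statements merged into one kernel-verified Lean document; each statement's English description precedes it below -/
import Mathlib

section
/- For every γ ∈ (0,1] there exists μ₀ > 0 such that for every μ ∈ (0, μ₀] there exists n₀ ∈ ℕ such that for every n ≥ n₀ the following holds: let G = (A ∪ B, E) be a balanced bipartite graph on 2n vertices that has at least one perfect matching, and suppose that for every perfect matching M of G and every edge x = a₁b₁ ∈ M there are at least γn² edges of G that are (x,M)-switchable. Then for every μn-bounded system of conflicts F for E(G), the number of F-conflict-free perfect matchings of G is at least e^{−μ^{1/2} n} times the total number of perfect matchings of G (equivalently, a uniformly random perfect matching of G is F-conflict-free with probability at least e^{−μ^{1/2} n}). -/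
/-- For a perfect matching `M` of `G` containing the edge `x = a₁b₁` (with `a₁ ∈ A`,
`b₁ ∈ B`), an edge `y = ab` of `G` is `(x,M)`-switchable if `y ∉ M` and the 6-cycle
`a₁ b₁ a₂ b a b₂` is a subgraph of `G`, where `a₂b, ab₂ ∈ M`. -/
def Switchable {V : Type*} (G : SimpleGraph V) (M : G.Subgraph) (a₁ b₁ a b : V) : Prop :=
  G.Adj a b ∧ ¬ M.Adj a b ∧
    ∃ a₂ b₂ : V, M.Adj a₂ b ∧ M.Adj a b₂ ∧ G.Adj b₁ a₂ ∧ G.Adj b₂ a₁ ∧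
      List.Pairwise (· ≠ ·) [a₁, b₁, a₂, b, a, b₂]

/-- The set of `(x,M)`-switchable edges of `G`, for `x = a₁b₁` with `a₁ ∈ A`, `b₁ ∈ B`. -/
def switchableEdges {V : Type*} (G : SimpleGraph V) (M : G.Subgraph) (A B : Set V)
    (a₁ b₁ : V) : Set (Sym2 V) :=
  {y : Sym2 V | ∃ a ∈ A, ∃ b ∈ B, y = s(a, b) ∧ Switchable G M a₁ b₁ a b}


open Classical in
lemma lll_aux {Ω ι : Type*} (P : Finset Ω) (E : ι → Ω → Prop) (I : Finset ι)
    (touch : ι → ι → Prop) (p d : ℝ) (hp0 : 0 ≤ p)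
    (hp : ∀ i ∈ I, ∀ S ⊆ I, (∀ j ∈ S, ¬ touch i j) →
      ((P.filter (fun ω => (∀ j ∈ S, ¬ E j ω) ∧ E i ω)).card : ℝ) ≤
        p * ((P.filter (fun ω => ∀ j ∈ S, ¬ E j ω)).card : ℝ))
    (hd : ∀ i ∈ I, ((I.filter (fun j => touch i j)).card : ℝ) ≤ d)
    (hpd : 4 * p * d ≤ 1) :
    ∀ k : ℕ, ∀ S ⊆ I, S.card = k → ∀ i ∈ I,
      ((P.filter (fun ω => (∀ j ∈ S, ¬ E j ω) ∧ E i ω)).card : ℝ) ≤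
        2 * p * ((P.filter (fun ω => ∀ j ∈ S, ¬ E j ω)).card : ℝ) := by
  intro k
  induction k using Nat.strong_induction_on with
  | _ k ih =>
  intro S hS hk i hi
  set S1 := S.filter (fun j => touch i j) with hS1
  set S2 := S.filter (fun j => ¬ touch i j) with hS2
  have hS2I : S2 ⊆ I := (Finset.filter_subset _ _).trans hS
  have h2 := hp i hi S2 hS2I (fun j hj => (Finset.mem_filter.1 hj).2)
  have hmono : ((P.filter (fun ω => (∀ j ∈ S, ¬ E j ω) ∧ E i ω)).card : ℝ) ≤
      ((P.filter (fun ω => (∀ j ∈ S2, ¬ E j ω) ∧ E i ω)).card : ℝ) := by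
    refine Nat.cast_le.2 (Finset.card_le_card ?_)
    intro ω hω
    simp only [Finset.mem_filter, S2] at hω ⊢
    exact ⟨hω.1, fun j hj => hω.2.1 j hj.1, hω.2.2⟩
  rcases S1.eq_empty_or_nonempty with h1 | h1
  · have : S2 = S := by
      rw [hS2, Finset.filter_eq_self]
      intro j hj ht
      have : j ∈ S1 := Finset.mem_filter.2 ⟨hj, ht⟩
      simp [h1] at this
    rw [this] at h2
    have h0 : 0 ≤ p * ((P.filter (fun ω => ∀ j ∈ S, ¬ E j ω)).card : ℝ) := by positivity
    linarith
  · have hcard : S2.card < k := by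
      rw [← hk, hS2]
      apply Finset.card_lt_card
      rw [Finset.filter_ssubset]
      obtain ⟨j, hj⟩ := h1
      have := Finset.mem_filter.1 hj
      exact ⟨j, this.1, fun h => h this.2⟩
    have hsub : P.filter (fun ω => ∀ j ∈ S2, ¬ E j ω) ⊆
        P.filter (fun ω => ∀ j ∈ S, ¬ E j ω) ∪
          S1.biUnion (fun l => P.filter (fun ω => (∀ j ∈ S2, ¬ E j ω) ∧ E l ω)) := by
      intro ω hω
      simp only [Finset.mem_filter, Finset.mem_union, Finset.mem_biUnion] at hω ⊢
      by_cases h : ∀ j ∈ S, ¬ E j ω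
      · exact Or.inl ⟨hω.1, h⟩
      · push Not at h
        obtain ⟨l, hl, hE⟩ := h
        refine Or.inr ⟨l, ?_, hω.1, hω.2, hE⟩
        by_contra hl1
        refine hω.2 l ?_ hE
        exact Finset.mem_filter.2 ⟨hl, fun ht => hl1 (Finset.mem_filter.2 ⟨hl, ht⟩)⟩
    have hc : ((P.filter (fun ω => ∀ j ∈ S2, ¬ E j ω)).card : ℝ) ≤
        ((P.filter (fun ω => ∀ j ∈ S, ¬ E j ω)).card : ℝ) +
        ∑ l ∈ S1, ((P.filter (fun ω => (∀ j ∈ S2, ¬ E j ω) ∧ E l ω)).card : ℝ) := by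
      have h := (Finset.card_le_card hsub).trans ((Finset.card_union_le _ _).trans
        (Nat.add_le_add_left Finset.card_biUnion_le _))
      exact_mod_cast h
    have hsum : ∑ l ∈ S1, ((P.filter (fun ω => (∀ j ∈ S2, ¬ E j ω) ∧ E l ω)).card : ℝ) ≤
        S1.card * (2 * p * ((P.filter (fun ω => ∀ j ∈ S2, ¬ E j ω)).card : ℝ)) := by
      rw [← nsmul_eq_mul]
      apply Finset.sum_le_card_nsmul
      intro l hl
      exact ih _ hcard S2 hS2I rfl l (hS (Finset.mem_filter.1 hl).1)
    have hS1d : (S1.card : ℝ) ≤ d := by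
      refine le_trans (Nat.cast_le.2 (Finset.card_le_card ?_)) (hd i hi)
      exact Finset.filter_subset_filter _ hS
    set N2 := ((P.filter (fun ω => ∀ j ∈ S2, ¬ E j ω)).card : ℝ)
    set N := ((P.filter (fun ω => ∀ j ∈ S, ¬ E j ω)).card : ℝ)
    have hN2 : 0 ≤ N2 := by positivity
    have h3 : S1.card * (2 * p * N2) ≤ d * (2 * p * N2) :=
      mul_le_mul_of_nonneg_right hS1d (by positivity)
    have h4 : (4 * p * d) * N2 ≤ 1 * N2 := mul_le_mul_of_nonneg_right hpd hN2
    have h5 : N2 ≤ 2 * N := by nlinarith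
    have h6 : p * N2 ≤ p * (2 * N) := mul_le_mul_of_nonneg_left h5 hp0
    linarith

open Classical in
lemma lll_main {Ω ι : Type*} (P : Finset Ω) (E : ι → Ω → Prop) (I : Finset ι)
    (touch : ι → ι → Prop) (p d : ℝ) (hp0 : 0 ≤ p) (hp1 : 2 * p ≤ 1)
    (hp : ∀ i ∈ I, ∀ S ⊆ I, (∀ j ∈ S, ¬ touch i j) →
      ((P.filter (fun ω => (∀ j ∈ S, ¬ E j ω) ∧ E i ω)).card : ℝ) ≤
        p * ((P.filter (fun ω => ∀ j ∈ S, ¬ E j ω)).card : ℝ))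
    (hd : ∀ i ∈ I, ((I.filter (fun j => touch i j)).card : ℝ) ≤ d)
    (hpd : 4 * p * d ≤ 1) :
    (1 - 2 * p) ^ I.card * (P.card : ℝ) ≤
      ((P.filter (fun ω => ∀ j ∈ I, ¬ E j ω)).card : ℝ) := by
  have key := lll_aux P E I touch p d hp0 hp hd hpd
  suffices h : ∀ S : Finset ι, S ⊆ I → (1 - 2 * p) ^ S.card * (P.card : ℝ) ≤
      ((P.filter (fun ω => ∀ j ∈ S, ¬ E j ω)).card : ℝ) from h I subset_rfl
  intro S
  induction S using Finset.induction_on with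
  | empty => intro _; simp
  | insert i S hiS ih =>
    intro hI
    have hSI : S ⊆ I := (Finset.subset_insert _ _).trans hI
    have h1 := ih hSI
    have h2 := key _ S hSI rfl i (hI (Finset.mem_insert_self _ _))
    have h3 : (P.filter (fun ω => ∀ j ∈ S, ¬ E j ω)).card =
        (P.filter (fun ω => (∀ j ∈ S, ¬ E j ω) ∧ E i ω)).card +
        (P.filter (fun ω => ∀ j ∈ insert i S, ¬ E j ω)).card := by
      rw [← Finset.card_filter_add_card_filter_not (s := P.filter (fun ω => ∀ j ∈ S, ¬ E j ω))
        (fun ω => E i ω), Finset.filter_filter, Finset.filter_filter]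
      congr 2
      ext ω
      simp only [Finset.mem_filter, Finset.mem_insert, forall_eq_or_imp]
      tauto
    have h3' : ((P.filter (fun ω => ∀ j ∈ S, ¬ E j ω)).card : ℝ) =
        ((P.filter (fun ω => (∀ j ∈ S, ¬ E j ω) ∧ E i ω)).card : ℝ) +
        ((P.filter (fun ω => ∀ j ∈ insert i S, ¬ E j ω)).card : ℝ) := by exact_mod_cast h3
    rw [Finset.card_insert_of_notMem hiS, pow_succ]
    have h4 := mul_le_mul_of_nonneg_left h1 (sub_nonneg.2 hp1)
    nlinarith

/-- the switching of a bijection -/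
noncomputable def swPi {α : Type*} (a₁ a a₂ : α) : Equiv.Perm α :=
  open Classical in Equiv.swap a₁ a * Equiv.swap a a₂

lemma swPi_1 {α : Type*} {a₁ a a₂ : α} (h1 : a₁ ≠ a) (h2 : a₁ ≠ a₂) :
    swPi a₁ a a₂ a₁ = a := by
  classical
  simp [swPi, Equiv.swap_apply_of_ne_of_ne h1 h2]

lemma swPi_2 {α : Type*} {a₁ a a₂ : α} (h2 : a₁ ≠ a₂) (h3 : a ≠ a₂) :
    swPi a₁ a a₂ a = a₂ := by
  classical
  simp [swPi, Equiv.swap_apply_of_ne_of_ne h2.symm h3.symm]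

lemma swPi_3 {α : Type*} {a₁ a a₂ : α} :
    swPi a₁ a a₂ a₂ = a₁ := by
  classical
  simp [swPi]

lemma swPi_4 {α : Type*} {a₁ a a₂ x : α} (h1 : x ≠ a₁) (h2 : x ≠ a) (h3 : x ≠ a₂) :
    swPi a₁ a a₂ x = x := by
  classical
  simp [swPi, Equiv.swap_apply_of_ne_of_ne h2 h3, Equiv.swap_apply_of_ne_of_ne h1 h2]

/-- switchable pairs in the bijection model -/
def SwB {α β : Type*} (adj : α → β → Prop) (σ : α ≃ β) (a₁ : α) (y : α × β) : Prop :=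
  adj y.1 y.2 ∧ σ y.1 ≠ y.2 ∧ adj (σ.symm y.2) (σ a₁) ∧ adj a₁ (σ y.1) ∧
    a₁ ≠ y.1 ∧ a₁ ≠ σ.symm y.2

/-- the event associated with a pair of edges -/
def Ev {α β : Type*} (i : (α × β) × (α × β)) (σ : α ≃ β) : Prop :=
  σ i.1.1 = i.1.2 ∧ σ i.2.1 = i.2.2

open Classical in
lemma step_count {α β : Type*} [Fintype α] [Fintype β] (n : ℕ) (hα : Fintype.card α = n)
    (adj : α → β → Prop) (c : α × β → α × β → Prop) (hsymm : ∀ e f, c e f → c f e)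
    (γ μ : ℝ)
    (hc : ∀ e, ((Finset.univ.filter (fun f => c e f)).card : ℝ) ≤ μ * n)
    (hsw : ∀ σ : α ≃ β, (∀ a, adj a (σ a)) → ∀ a₁,
      γ * (n : ℝ) ^ 2 ≤ ((Finset.univ.filter (SwB adj σ a₁)).card : ℝ))
    (S : Finset ((α × β) × (α × β))) (T : Finset (α × β)) (hT : T.card ≤ 1)
    (e : α × β) (hTe : ∀ t ∈ T, t.1 ≠ e.1)
    (hSc : ∀ i ∈ S, c i.1 i.2 ∧ i.1.1 ≠ i.2.1)
    (hSe : ∀ i ∈ S, i.1.1 ≠ e.1 ∧ i.1.2 ≠ e.2 ∧ i.2.1 ≠ e.1 ∧ i.2.2 ≠ e.2)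
    (P : Finset (α ≃ β)) (hP : ∀ σ, σ ∈ P ↔ ∀ a, adj a (σ a)) :
    (γ * (n : ℝ) ^ 2 - μ * n ^ 2 - 2 * n) *
      ((P.filter (fun σ => (∀ j ∈ S, ¬ Ev j σ) ∧ (∀ t ∈ T, σ t.1 = t.2) ∧ σ e.1 = e.2)).card : ℝ)
      ≤ n * ((P.filter (fun σ => (∀ j ∈ S, ¬ Ev j σ) ∧ (∀ t ∈ T, σ t.1 = t.2))).card : ℝ) := by
  set X := P.filter (fun σ => (∀ j ∈ S, ¬ Ev j σ) ∧ (∀ t ∈ T, σ t.1 = t.2) ∧ σ e.1 = e.2) with hX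
  set Y := P.filter (fun σ => (∀ j ∈ S, ¬ Ev j σ) ∧ (∀ t ∈ T, σ t.1 = t.2)) with hY
  have hβ : Fintype.card β ≤ n ∨ X = ∅ := by
    by_cases h : X.Nonempty
    · obtain ⟨σ, _⟩ := h
      left
      rw [← hα, Fintype.card_congr σ]
    · right
      exact Finset.not_nonempty_iff_eq_empty.1 h
  rcases hβ with hβ | hβ
  swap
  · rw [hβ]; simp only [Finset.card_empty, Nat.cast_zero, mul_zero]; positivity
  let good : (α ≃ β) → Finset (α × β) := fun σ => Finset.univ.filter (fun y =>
    SwB adj σ e.1 y ∧ (∀ a', ¬ c (a', σ a') y) ∧ ∀ t ∈ T, y.1 ≠ t.1 ∧ σ.symm y.2 ≠ t.1)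
  have hgood : ∀ σ ∈ X, γ * (n : ℝ) ^ 2 - μ * n ^ 2 - 2 * n ≤ ((good σ).card : ℝ) := by
    intro σ hσ
    have hσP : ∀ a, adj a (σ a) := (hP σ).1 (Finset.mem_filter.1 hσ).1
    have h0 := hsw σ hσP e.1
    have hsub : Finset.univ.filter (SwB adj σ e.1) ⊆ good σ ∪
        ((Finset.univ : Finset α).biUnion (fun a' => Finset.univ.filter (fun f => c (a', σ a') f)) ∪
        T.biUnion (fun t => (Finset.univ : Finset β).image (fun b => (t.1, b)) ∪
          (Finset.univ : Finset α).image (fun a => (a, σ t.1)))) := by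
      intro y hy
      have hy' := (Finset.mem_filter.1 hy).2
      by_cases h1 : ∀ a', ¬ c (a', σ a') y
      · by_cases h2 : ∀ t ∈ T, y.1 ≠ t.1 ∧ σ.symm y.2 ≠ t.1
        · exact Finset.mem_union_left _ (Finset.mem_filter.2 ⟨Finset.mem_univ _, hy', h1, h2⟩)
        · push Not at h2
          obtain ⟨t, ht, h2⟩ := h2
          refine Finset.mem_union_right _ (Finset.mem_union_right _
            (Finset.mem_biUnion.2 ⟨t, ht, ?_⟩))
          by_cases h3 : y.1 = t.1
          · refine Finset.mem_union_left _ (Finset.mem_image.2 ⟨y.2, Finset.mem_univ _, ?_⟩)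
            rw [← h3]
          · refine Finset.mem_union_right _ (Finset.mem_image.2 ⟨y.1, Finset.mem_univ _, ?_⟩)
            rw [← h2 h3]; simp
      · push Not at h1
        obtain ⟨a', ha'⟩ := h1
        refine Finset.mem_union_right _ (Finset.mem_union_left _
            (Finset.mem_biUnion.2 ⟨a', Finset.mem_univ _, ?_⟩))
        exact Finset.mem_filter.2 ⟨Finset.mem_univ _, ha'⟩
    have h1 := (Finset.card_le_card hsub).trans ((Finset.card_union_le _ _).trans
        (Nat.add_le_add_left (Finset.card_union_le _ _) _))
    have h2 : (((Finset.univ : Finset α).biUnion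
        (fun a' => Finset.univ.filter (fun f => c (a', σ a') f))).card : ℝ) ≤ μ * n ^ 2 := by
      have ha : (((Finset.univ : Finset α).biUnion
        (fun a' => Finset.univ.filter (fun f => c (a', σ a') f))).card : ℝ) ≤
          ∑ a' : α, ((Finset.univ.filter (fun f => c (a', σ a') f)).card : ℝ) := by
        exact_mod_cast Finset.card_biUnion_le
      have hb := Finset.sum_le_card_nsmul (Finset.univ : Finset α)
        (fun a' => ((Finset.univ.filter (fun f => c (a', σ a') f)).card : ℝ)) (μ * n)
        (fun a' _ => hc _)
      rw [nsmul_eq_mul, Finset.card_univ, hα] at hb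
      nlinarith
    have h3 : (T.biUnion (fun t => (Finset.univ : Finset β).image (fun b => (t.1, b)) ∪
          (Finset.univ : Finset α).image (fun a => (a, σ t.1)))).card ≤ 2 * n := by
      refine (Finset.card_biUnion_le_card_mul _ _ (2 * n) ?_).trans ?_
      · intro t _
        refine (Finset.card_union_le _ _).trans ?_
        have := Finset.card_image_le (s := (Finset.univ : Finset β)) (f := fun b => (t.1, b))
        have := Finset.card_image_le (s := (Finset.univ : Finset α)) (f := fun a => (a, σ t.1))
        simp only [Finset.card_univ] at *
        omega
      · nlinarith
    have h1' : ((Finset.univ.filter (SwB adj σ e.1)).card : ℝ) ≤ _ := Nat.cast_le.2 h1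
    have h3' : (_ : ℝ) ≤ _ := Nat.cast_le.2 h3
    push_cast at h1' h3'
    linarith
  let tot := X.sigma good
  have htot : (γ * (n : ℝ) ^ 2 - μ * n ^ 2 - 2 * n) * X.card ≤ (tot.card : ℝ) := by
    rw [Finset.card_sigma]
    push_cast
    rw [mul_comm, ← nsmul_eq_mul]
    exact Finset.card_nsmul_le_sum _ _ _ hgood
  refine htot.trans ?_
  let φ : (Σ _ : α ≃ β, α × β) → α × (α ≃ β) := fun z =>
    (z.2.1, (swPi e.1 z.2.1 (z.1.symm z.2.2)).trans z.1)
  have hmaps : ∀ z ∈ tot, φ z ∈ (Finset.univ : Finset α) ×ˢ Y := by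
    rintro ⟨σ, a, b⟩ hz
    obtain ⟨hσ, hy⟩ := Finset.mem_sigma.1 hz
    obtain ⟨hσP, hσS, hσT, hσe⟩ := Finset.mem_filter.1 hσ
    obtain ⟨⟨k1, k2, k3, k4, k5, k6⟩, hyc, hyT⟩ := (Finset.mem_filter.1 hy).2
    have hadj := (hP σ).1 hσP
    dsimp only at k1 k2 k3 k4 k5 k6 hyc hyT hσ hσS hσT hσe
    have k7 : a ≠ σ.symm b := by
      intro h; apply k2; rw [h]; simp
    refine Finset.mem_product.2 ⟨Finset.mem_univ _, Finset.mem_filter.2 ⟨(hP _).2 ?_, ?_, ?_⟩⟩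
    · intro x
      dsimp only [φ]
      rw [Equiv.trans_apply]
      by_cases x1 : x = e.1
      · subst x1; rw [swPi_1 k5 k6]; exact k4
      by_cases x2 : x = a
      · subst x2; rw [swPi_2 k6 k7]; simpa using k1
      by_cases x3 : x = σ.symm b
      · subst x3; rw [swPi_3]; exact k3
      rw [swPi_4 x1 x2 x3]; exact hadj x
    · have claim : ∀ q : α × β, q.1 ≠ e.1 → q.2 ≠ e.2 →
          ((swPi e.1 a (σ.symm b)).trans σ) q.1 = q.2 → q = (a, b) ∨ σ q.1 = q.2 := by
        intro q q1 q2 hq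
        rw [Equiv.trans_apply] at hq
        by_cases x2 : q.1 = a
        · left
          rw [x2, swPi_2 k6 k7] at hq
          ext
          · exact x2
          · simpa using hq.symm
        by_cases x3 : q.1 = σ.symm b
        · rw [x3, swPi_3] at hq
          exact absurd (hq.symm.trans hσe) q2
        rw [swPi_4 q1 x2 x3] at hq
        exact Or.inr hq
      rintro ⟨q, r⟩ hj ⟨hq, hr⟩
      dsimp only [φ] at hq hr
      obtain ⟨c1, c2⟩ := hSc _ hj
      obtain ⟨d1, d2, d3, d4⟩ := hSe _ hj
      dsimp only at c1 c2 d1 d2 d3 d4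
      rcases claim q d1 d2 hq with u | u <;> rcases claim r d3 d4 hr with v | v
      · exact c2 (by rw [u, v])
      · apply hyc r.1
        rw [v, ← u]
        exact hsymm _ _ c1
      · apply hyc q.1
        rw [u, ← v]
        exact c1
      · exact hσS _ hj ⟨u, v⟩
    · intro t ht
      dsimp only [φ]
      rw [Equiv.trans_apply, swPi_4 (hTe t ht) (hyT t ht).1.symm (hyT t ht).2.symm]
      exact hσT t ht
  have hinj : Set.InjOn φ (tot : Set (Σ _ : α ≃ β, α × β)) := by
    rintro ⟨σ, a, b⟩ hz ⟨τ, a', b'⟩ hz' heq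
    obtain ⟨hσ, hy⟩ := Finset.mem_sigma.1 (Finset.mem_coe.1 hz)
    obtain ⟨hτ, hy'⟩ := Finset.mem_sigma.1 (Finset.mem_coe.1 hz')
    obtain ⟨hσP, hσS, hσT, hσe⟩ := Finset.mem_filter.1 hσ
    obtain ⟨hτP, hτS, hτT, hτe⟩ := Finset.mem_filter.1 hτ
    obtain ⟨⟨k1, k2, k3, k4, k5, k6⟩, hyc, hyT⟩ := (Finset.mem_filter.1 hy).2
    obtain ⟨⟨l1, l2, l3, l4, l5, l6⟩, _, _⟩ := (Finset.mem_filter.1 hy').2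
    dsimp only at *
    have k7 : a ≠ σ.symm b := by
      intro h; apply k2; rw [h]; simp
    have l7 : a' ≠ τ.symm b' := by
      intro h; apply l2; rw [h]; simp
    simp only [φ, Prod.mk.injEq] at heq
    obtain ⟨rfl, heq⟩ := heq
    have hb : b = b' := by
      have := DFunLike.congr_fun heq a
      simpa [Equiv.trans_apply, swPi_2 k6 k7, swPi_2 l6 l7] using this
    subst hb
    have h2 : σ.symm b = τ.symm b := by
      have := DFunLike.congr_fun heq (σ.symm b)
      rw [Equiv.trans_apply, swPi_3, hσe, ← hτe] at this
      have h' : ((swPi e.1 a (τ.symm b)).trans τ) (τ.symm b) = τ e.1 := by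
        rw [Equiv.trans_apply, swPi_3]
      rw [← h'] at this
      exact (Equiv.injective _ this).symm
    have : σ = τ := by
      rw [h2] at heq
      ext x
      have := DFunLike.congr_fun heq ((swPi e.1 a (τ.symm b)).symm x)
      simpa using this
    subst this
    rfl
  have hle := Finset.card_le_card_of_injOn φ hmaps hinj
  rw [Finset.card_product, Finset.card_univ, hα] at hle
  exact_mod_cast hle

open Classical in
lemma count_pairs {κ : Type*} [Fintype κ] (c : κ → κ → Prop) (m : ℝ)
    (hc : ∀ e, ((Finset.univ.filter (fun f => c e f)).card : ℝ) ≤ m)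
    (W : Finset κ) :
    ((Finset.univ.filter (fun j : κ × κ => j.1 ∈ W ∧ c j.1 j.2)).card : ℝ) ≤ W.card * m := by
  have hsub : Finset.univ.filter (fun j : κ × κ => j.1 ∈ W ∧ c j.1 j.2) ⊆
      W.biUnion (fun w => (Finset.univ.filter (fun f => c w f)).image (fun f => (w, f))) := by
    rintro ⟨w, f⟩ h
    simp only [Finset.mem_filter, Finset.mem_univ, true_and] at h
    refine Finset.mem_biUnion.2 ⟨w, h.1, Finset.mem_image.2 ⟨f, ?_, rfl⟩⟩
    simpa using h.2
  have h1 : ((Finset.univ.filter (fun j : κ × κ => j.1 ∈ W ∧ c j.1 j.2)).card : ℝ) ≤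
      ∑ w ∈ W, ((Finset.univ.filter (fun f => c w f)).card : ℝ) := by
    have := (Finset.card_le_card hsub).trans (Finset.card_biUnion_le.trans
      (Finset.sum_le_sum (fun w _ => Finset.card_image_le)))
    exact_mod_cast this
  refine h1.trans ?_
  rw [← nsmul_eq_mul]
  exact Finset.sum_le_card_nsmul _ _ _ (fun w _ => hc w)

open Classical in
lemma count_pairs' {κ : Type*} [Fintype κ] (c : κ → κ → Prop) (m : ℝ)
    (hsymm : ∀ e f, c e f → c f e)
    (hc : ∀ e, ((Finset.univ.filter (fun f => c e f)).card : ℝ) ≤ m)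
    (W : Finset κ) :
    ((Finset.univ.filter (fun j : κ × κ => j.2 ∈ W ∧ c j.1 j.2)).card : ℝ) ≤ W.card * m := by
  refine le_trans (Nat.cast_le.2 ?_) (count_pairs c m hc W)
  refine Finset.card_le_card_of_injOn Prod.swap ?_ (Prod.swap_injective.injOn)
  intro j hj
  simp only [Finset.coe_filter, Finset.mem_univ, true_and, Set.mem_ofPred_eq, Prod.fst_swap,
    Prod.snd_swap] at hj ⊢
  exact ⟨hj.1, hsymm _ _ hj.2⟩

/-- two edges share an endpoint -/
def Tv {α β : Type*} (e f : α × β) : Prop := f.1 = e.1 ∨ f.2 = e.2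

/-- two pairs of edges touch -/
def Tch {α β : Type*} (i j : (α × β) × (α × β)) : Prop :=
  (Tv i.1 j.1 ∨ Tv i.2 j.1) ∨ (Tv i.1 j.2 ∨ Tv i.2 j.2)

lemma arith_one (γ μ x : ℝ) (hγ : γ ≠ 0) (hx : x ≠ 0) :
    4 * (4 / (γ ^ 2 * x ^ 2)) * (8 * μ * x ^ 2) = 128 * μ / γ ^ 2 := by
  field_simp
  ring

lemma arith_two (γ μ x : ℝ) (hγ : γ ≠ 0) (hx : x ≠ 0) :
    μ * x ^ 3 * (4 * (4 / (γ ^ 2 * x ^ 2))) = 16 * μ / γ ^ 2 * x := by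
  field_simp
  norm_num

set_option maxHeartbeats 1000000 in
open Classical in
lemma core_bound {α β : Type*} [Fintype α] [Fintype β] (n : ℕ) (hα : Fintype.card α = n)
    (hβ : Fintype.card β = n)
    (adj : α → β → Prop) (c : α × β → α × β → Prop) (hsymm : ∀ e f, c e f → c f e)
    (γ μ : ℝ) (hγ0 : 0 < γ) (hγ1 : γ ≤ 1) (hμ0 : 0 < μ) (hμ : μ ≤ γ ^ 4 / 256)
    (hn : 8 / γ ≤ n)
    (hc : ∀ e, ((Finset.univ.filter (fun f => c e f)).card : ℝ) ≤ μ * n)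
    (hsw : ∀ σ : α ≃ β, (∀ a, adj a (σ a)) → ∀ a₁,
      γ * (n : ℝ) ^ 2 ≤ ((Finset.univ.filter (SwB adj σ a₁)).card : ℝ)) :
    Real.exp (-(Real.sqrt μ) * n) *
      ((Finset.univ.filter (fun σ : α ≃ β => ∀ a, adj a (σ a))).card : ℝ) ≤
      ((Finset.univ.filter (fun σ : α ≃ β => (∀ a, adj a (σ a)) ∧
        ∀ a a', a ≠ a' → ¬ c (a, σ a) (a', σ a'))).card : ℝ) := by
  set P := Finset.univ.filter (fun σ : α ≃ β => ∀ a, adj a (σ a)) with hPdef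
  have hP : ∀ σ, σ ∈ P ↔ ∀ a, adj a (σ a) := by intro σ; simp [P]
  set I : Finset ((α × β) × (α × β)) :=
    Finset.univ.filter (fun i => c i.1 i.2 ∧ i.1.1 ≠ i.2.1) with hI
  have hnpos : (0 : ℝ) < n := lt_of_lt_of_le (by positivity) hn
  have hγn : 8 ≤ γ * n := by
    rw [div_le_iff₀ hγ0] at hn; linarith
  have hγ4 : γ ^ 4 ≤ γ ^ 2 := pow_le_pow_of_le_one hγ0.le hγ1 (by norm_num)
  have hγ2 : γ ^ 2 ≤ γ := by nlinarith
  have hm : γ / 2 * (n : ℝ) ^ 2 ≤ γ * (n : ℝ) ^ 2 - μ * n ^ 2 - 2 * n := by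
    have h1 : μ ≤ γ / 4 := by linarith
    have h2 : μ * (n : ℝ) ^ 2 ≤ γ / 4 * n ^ 2 := mul_le_mul_of_nonneg_right h1 (by positivity)
    have h3 : 8 * (n : ℝ) ≤ γ * n * n := mul_le_mul_of_nonneg_right hγn hnpos.le
    nlinarith
  have step : ∀ (S : Finset ((α × β) × (α × β))) (T : Finset (α × β)) (_ : T.card ≤ 1)
    (e : α × β) (_ : ∀ t ∈ T, t.1 ≠ e.1)
    (_ : S ⊆ I) (_ : ∀ i ∈ S, ¬ Tv e i.1 ∧ ¬ Tv e i.2),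
      γ / 2 * n * ((P.filter (fun σ => (∀ j ∈ S, ¬ Ev j σ) ∧ (∀ t ∈ T, σ t.1 = t.2) ∧
        σ e.1 = e.2)).card : ℝ)
      ≤ ((P.filter (fun σ => (∀ j ∈ S, ¬ Ev j σ) ∧ (∀ t ∈ T, σ t.1 = t.2))).card : ℝ) := by
    intro S T hT e hTe hS hSe
    have h := step_count n hα adj c hsymm γ μ hc hsw S T hT e hTe
      (fun i hi => (Finset.mem_filter.1 (hS hi)).2)
      (fun i hi => by
        have := hSe i hi
        simp only [Tv, not_or] at this
        exact ⟨this.1.1, this.1.2, this.2.1, this.2.2⟩) P hP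
    have h2 := (mul_le_mul_of_nonneg_right hm (Nat.cast_nonneg _)).trans h
    refine le_of_mul_le_mul_left ?_ hnpos
    refine le_trans (le_of_eq ?_) h2
    ring
  set p : ℝ := 4 / (γ ^ 2 * n ^ 2) with hp
  have hp0 : 0 ≤ p := by positivity
  have hden : 64 ≤ γ ^ 2 * (n : ℝ) ^ 2 := by nlinarith
  have hpsmall : 4 * p ≤ 1 := by
    rw [hp, ← mul_div_assoc, div_le_one (by positivity)]; linarith
  have hprob : ∀ i ∈ I, ∀ S ⊆ I, (∀ j ∈ S, ¬ Tch i j) →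
      ((P.filter (fun ω => (∀ j ∈ S, ¬ Ev j ω) ∧ Ev i ω)).card : ℝ) ≤
        p * ((P.filter (fun ω => ∀ j ∈ S, ¬ Ev j ω)).card : ℝ) := by
    rintro ⟨e, f⟩ hi S hS ht
    have hne := (Finset.mem_filter.1 hi).2.2
    dsimp only at hne
    have h1 := step S {f} (by simp) e (by simpa using hne.symm) hS (fun i hi => by
      have := ht i hi; simp only [Tch, not_or] at this; exact ⟨this.1.1, this.2.1⟩)
    have h2 := step S ∅ (by simp) f (by simp) hS (fun i hi => by
      have := ht i hi; simp only [Tch, not_or] at this; exact ⟨this.1.2, this.2.2⟩)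
    simp only [Finset.mem_singleton, forall_eq, Finset.notMem_empty, false_imp_iff,
      implies_true, true_and, and_true] at h1 h2
    have h0 : (P.filter (fun ω => (∀ j ∈ S, ¬ Ev j ω) ∧ Ev (e, f) ω)) =
      (P.filter (fun σ => (∀ j ∈ S, ¬ Ev j σ) ∧ σ f.1 = f.2 ∧ σ e.1 = e.2)) := by
      ext σ
      simp only [Finset.mem_filter]
      have : Ev (e, f) σ ↔ σ f.1 = f.2 ∧ σ e.1 = e.2 := and_comm
      rw [this]
    rw [h0]
    have h3 := mul_le_mul_of_nonneg_left h1 (show 0 ≤ γ / 2 * n by positivity)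
    have h4 := h3.trans h2
    rw [hp, div_mul_eq_mul_div, le_div_iff₀ (by positivity)]
    linarith
  have hW : ∀ e : α × β, ((Finset.univ.filter (fun f => Tv e f)).card : ℝ) ≤ 2 * n := by
    intro e
    have hsub : Finset.univ.filter (fun f => Tv e f) ⊆
        (Finset.univ : Finset β).image (fun b => (e.1, b)) ∪
          (Finset.univ : Finset α).image (fun a => (a, e.2)) := by
      rintro ⟨a, b⟩ h
      rcases (Finset.mem_filter.1 h).2 with h | h
      · refine Finset.mem_union_left _ (Finset.mem_image.2 ⟨b, Finset.mem_univ _, ?_⟩)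
        rw [← h]
      · refine Finset.mem_union_right _ (Finset.mem_image.2 ⟨a, Finset.mem_univ _, ?_⟩)
        rw [← h]
    have h := (Finset.card_le_card hsub).trans (Finset.card_union_le _ _)
    have h1 := Finset.card_image_le (s := (Finset.univ : Finset β)) (f := fun b => (e.1, b))
    have h2 := Finset.card_image_le (s := (Finset.univ : Finset α)) (f := fun a => (a, e.2))
    simp only [Finset.card_univ] at h1 h2
    have : (Finset.univ.filter (fun f => Tv e f)).card ≤ 2 * n := by omega
    exact_mod_cast this
  have hdeg : ∀ i ∈ I, ((I.filter (fun j => Tch i j)).card : ℝ) ≤ 8 * μ * n ^ 2 := by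
    rintro ⟨e, f⟩ _
    set W := Finset.univ.filter (fun g => Tv e g) ∪ Finset.univ.filter (fun g => Tv f g) with hWd
    have hWc : (W.card : ℝ) ≤ 4 * n := by
      have h : (W.card : ℝ) ≤ (Finset.univ.filter (fun g => Tv e g)).card +
        (Finset.univ.filter (fun g => Tv f g)).card := by
        exact_mod_cast Finset.card_union_le _ _
      linarith [hW e, hW f]
    have hsub : I.filter (fun j => Tch (e, f) j) ⊆
        Finset.univ.filter (fun j : (α × β) × (α × β) => j.1 ∈ W ∧ c j.1 j.2) ∪
        Finset.univ.filter (fun j : (α × β) × (α × β) => j.2 ∈ W ∧ c j.1 j.2) := by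
      intro j hj
      obtain ⟨hj1, hj2⟩ := Finset.mem_filter.1 hj
      have hcj := (Finset.mem_filter.1 hj1).2.1
      simp only [W, Finset.mem_filter, Finset.mem_union, Finset.mem_univ, true_and]
      rcases hj2 with h | h
      · exact Or.inl ⟨h, hcj⟩
      · exact Or.inr ⟨h, hcj⟩
    have h := (Finset.card_le_card hsub).trans (Finset.card_union_le _ _)
    have h' : ((I.filter (fun j => Tch (e, f) j)).card : ℝ) ≤
      ((Finset.univ.filter (fun j : (α × β) × (α × β) => j.1 ∈ W ∧ c j.1 j.2)).card : ℝ) +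
      ((Finset.univ.filter (fun j : (α × β) × (α × β) => j.2 ∈ W ∧ c j.1 j.2)).card : ℝ) := by
      exact_mod_cast h
    have h1 : ((Finset.univ.filter (fun j : (α × β) × (α × β) => j.1 ∈ W ∧ c j.1 j.2)).card : ℝ)
        ≤ W.card * (μ * n) := by
      convert count_pairs c _ hc W
    have h2 : ((Finset.univ.filter (fun j : (α × β) × (α × β) => j.2 ∈ W ∧ c j.1 j.2)).card : ℝ)
        ≤ W.card * (μ * n) := by
      convert count_pairs' c _ hsymm hc W
    have h3 : (W.card : ℝ) * (μ * n) ≤ 4 * n * (μ * n) :=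
      mul_le_mul_of_nonneg_right hWc (by positivity)
    have h4 : 4 * (n : ℝ) * (μ * n) = 4 * μ * n ^ 2 := by ring
    rw [h4] at h3
    have h5 := h'.trans (add_le_add (h1.trans h3) (h2.trans h3))
    refine h5.trans (le_of_eq ?_)
    ring
  have hIc : (I.card : ℝ) ≤ μ * n ^ 3 := by
    have h1 := count_pairs c _ hc Finset.univ
    have h2 := h1
    rw [Finset.card_univ, Fintype.card_prod, hα, hβ] at h2
    push_cast at h2
    refine le_trans (le_trans (Nat.cast_le.2 (Finset.card_le_card ?_)) h2) (le_of_eq ?_)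
    · intro j hj
      simp only [I, Finset.mem_filter, Finset.mem_univ, true_and] at hj ⊢
      exact hj.1
    · ring
  have hpd : 4 * p * (8 * μ * n ^ 2) ≤ 1 := by
    have : 4 * p * (8 * μ * n ^ 2) = 128 * μ / γ ^ 2 := by
      rw [hp]; exact arith_one γ μ n hγ0.ne' hnpos.ne'
    rw [this, div_le_one (by positivity)]
    have : 0 < γ ^ 2 := by positivity
    linarith
  have main := lll_main P Ev I Tch p _ hp0 (by linarith)
    (fun i hi S hS ht => by convert hprob i hi S hS ht)
    (fun i hi => by convert hdeg i hi) hpd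
  refine le_trans ?_ (main.trans (Nat.cast_le.2 (Finset.card_le_card ?_)))
  swap
  · intro σ hσ
    obtain ⟨h1, h2⟩ := (@Finset.mem_filter _ _ (_) _ _).1 hσ
    refine Finset.mem_filter.2 ⟨Finset.mem_univ _, (hP σ).1 h1, ?_⟩
    intro a a' hne hcc
    exact h2 ((a, σ a), (a', σ a')) (Finset.mem_filter.2 ⟨Finset.mem_univ _, hcc, hne⟩) ⟨rfl, rfl⟩
  refine mul_le_mul_of_nonneg_right ?_ (Nat.cast_nonneg _)
  have hexp : Real.exp (-(4 * p)) ≤ 1 - 2 * p := by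
    have h1 := Real.add_one_le_exp (4 * p)
    rw [Real.exp_neg, inv_le_iff_one_le_mul₀ (Real.exp_pos _)]
    have : 0 ≤ 1 - 2 * p := by linarith
    nlinarith [mul_le_mul_of_nonneg_left h1 this]
  refine le_trans ?_ (pow_le_pow_left₀ (Real.exp_pos _).le hexp I.card)
  rw [← Real.exp_nat_mul]
  apply Real.exp_le_exp.2
  have h1 : (I.card : ℝ) * (4 * p) ≤ μ * n ^ 3 * (4 * p) :=
    mul_le_mul_of_nonneg_right hIc (by positivity)
  have h2 : μ * n ^ 3 * (4 * p) = 16 * μ / γ ^ 2 * n := by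
    rw [hp]; exact arith_two γ μ n hγ0.ne' hnpos.ne'
  have h3 : 16 * μ / γ ^ 2 ≤ Real.sqrt μ := by
    rw [div_le_iff₀ (by positivity)]
    have hs : Real.sqrt μ ≤ γ ^ 2 / 16 := by
      rw [Real.sqrt_le_left (by positivity)]
      refine hμ.trans (le_of_eq (by ring))
    have hs2 := Real.mul_self_sqrt hμ0.le
    have hs0 := Real.sqrt_nonneg μ
    nlinarith
  have h4 := mul_le_mul_of_nonneg_right h3 hnpos.le
  linarith

/-- the subgraph of a bijection -/
def toSub {V : Type*} (G : SimpleGraph V) {A B : Set V} (σ : ↥A ≃ ↥B)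
    (h : ∀ a : ↥A, G.Adj a (σ a)) : G.Subgraph where
  verts := Set.univ
  Adj u v := ∃ a : ↥A, (u = a ∧ v = σ a) ∨ (v = a ∧ u = σ a)
  adj_sub := by
    rintro u v ⟨a, ⟨rfl, rfl⟩ | ⟨rfl, rfl⟩⟩
    · exact h a
    · exact (h a).symm
  edge_vert := fun _ => Set.mem_univ _
  symm := by
    constructor
    rintro u v ⟨a, h⟩
    exact ⟨a, h.symm⟩

lemma toSub_adj {V : Type*} (G : SimpleGraph V) {A B : Set V} (hAB : Disjoint A B) (σ : ↥A ≃ ↥B)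
    (h : ∀ a : ↥A, G.Adj a (σ a)) (a : ↥A) (b : ↥B) :
    (toSub G σ h).Adj a b ↔ σ a = b := by
  constructor
  · rintro ⟨a', ⟨h1, h2⟩ | ⟨h1, h2⟩⟩
    · have : a = a' := Subtype.ext h1
      subst this
      exact (Subtype.ext h2).symm
    · exact absurd (h1 ▸ a'.2) (Set.disjoint_right.1 hAB b.2)
  · rintro rfl
    exact ⟨a, Or.inl ⟨rfl, rfl⟩⟩

lemma toSub_pm {V : Type*} (G : SimpleGraph V) {A B : Set V} (hU : A ∪ B = Set.univ)
    (hAB : Disjoint A B) (σ : ↥A ≃ ↥B)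
    (h : ∀ a : ↥A, G.Adj a (σ a)) : (toSub G σ h).IsPerfectMatching := by
  rw [SimpleGraph.Subgraph.isPerfectMatching_iff]
  intro v
  have hv : v ∈ A ∪ B := hU ▸ Set.mem_univ v
  rcases hv with hv | hv
  · refine ⟨σ ⟨v, hv⟩, ⟨⟨v, hv⟩, Or.inl ⟨rfl, rfl⟩⟩, ?_⟩
    rintro w ⟨a, ⟨rfl, rfl⟩ | ⟨rfl, h2⟩⟩
    · rfl
    · exact absurd (h2 ▸ (σ a).2) (Set.disjoint_left.1 hAB hv)
  · refine ⟨σ.symm ⟨v, hv⟩, ⟨σ.symm ⟨v, hv⟩, Or.inr ⟨rfl, by simp⟩⟩, ?_⟩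
    rintro w ⟨a, ⟨rfl, rfl⟩ | ⟨rfl, h2⟩⟩
    · exact absurd hv (Set.disjoint_left.1 hAB a.2)
    · have : (⟨v, hv⟩ : ↥B) = σ a := Subtype.ext h2
      rw [this]; simp

lemma pm_exists {V : Type*} (G : SimpleGraph V) {A B : Set V} (hU : A ∪ B = Set.univ)
    (hAB : Disjoint A B)
    (hbip : ∀ u v : V, G.Adj u v → (u ∈ A ∧ v ∈ B) ∨ (u ∈ B ∧ v ∈ A))
    (M : G.Subgraph) (hM : M.IsPerfectMatching) :
    ∃ (σ : ↥A ≃ ↥B) (h : ∀ a : ↥A, G.Adj a (σ a)), toSub G σ h = M := by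
  rw [SimpleGraph.Subgraph.isPerfectMatching_iff] at hM
  choose f hf hu using hM
  have hfA : ∀ a ∈ A, f a ∈ B := by
    intro a ha
    rcases hbip _ _ (hf a).adj_sub with h | h
    · exact h.2
    · exact absurd h.1 (Set.disjoint_left.1 hAB ha)
  have hfB : ∀ a ∈ B, f a ∈ A := by
    intro a ha
    rcases hbip _ _ (hf a).adj_sub with h | h
    · exact absurd ha (Set.disjoint_left.1 hAB h.1)
    · exact h.2
  have hff : ∀ v, f (f v) = v := fun v => (hu _ _ (hf v).symm).symm
  let σ : ↥A ≃ ↥B :=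
    { toFun := fun a => ⟨f a, hfA a a.2⟩
      invFun := fun b => ⟨f b, hfB b b.2⟩
      left_inv := fun a => Subtype.ext (hff a)
      right_inv := fun b => Subtype.ext (hff b) }
  refine ⟨σ, fun a => (hf a).adj_sub, ?_⟩
  ext u v
  · simp only [toSub, Set.mem_univ, true_iff]
    exact M.edge_vert (hf u)
  · constructor
    · rintro ⟨a, ⟨rfl, rfl⟩ | ⟨rfl, rfl⟩⟩
      · exact hf a
      · exact (hf a).symm
    · intro h
      rcases hbip _ _ h.adj_sub with ⟨h1, h2⟩ | ⟨h1, h2⟩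
      · exact ⟨⟨u, h1⟩, Or.inl ⟨rfl, hu _ _ h⟩⟩
      · exact ⟨⟨v, h2⟩, Or.inr ⟨rfl, hu _ _ h.symm⟩⟩

open Classical in
lemma pm_ncard {V : Type*} [Fintype V] (G : SimpleGraph V) {A B : Set V} (hU : A ∪ B = Set.univ)
    (hAB : Disjoint A B)
    (hbip : ∀ u v : V, G.Adj u v → (u ∈ A ∧ v ∈ B) ∨ (u ∈ B ∧ v ∈ A))
    (Q : G.Subgraph → Prop) (R : (↥A ≃ ↥B) → Prop)
    (hQR : ∀ σ h, Q (toSub G σ h) ↔ R σ) :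
    ({M : G.Subgraph | M.IsPerfectMatching ∧ Q M}).ncard =
      (Finset.univ.filter (fun σ : ↥A ≃ ↥B => (∀ a : ↥A, G.Adj a (σ a)) ∧ R σ)).card := by
  rw [← Set.ncard_coe_finset]
  symm
  refine Set.ncard_congr (fun σ hσ => toSub G σ (Finset.mem_filter.1 hσ).2.1) ?_ ?_ ?_
  · intro σ hσ
    exact ⟨toSub_pm G hU hAB σ _, (hQR _ _).2 (Finset.mem_filter.1 hσ).2.2⟩
  · intro σ τ hσ hτ h
    ext a
    have h1 := (toSub_adj G hAB σ (Finset.mem_filter.1 hσ).2.1 a (σ a)).2 rfl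
    rw [h, toSub_adj G hAB] at h1
    rw [h1]
  · rintro M ⟨hM, hQ⟩
    obtain ⟨σ, h, rfl⟩ := pm_exists G hU hAB hbip M hM
    exact ⟨σ, Finset.mem_coe.2 (Finset.mem_filter.2 ⟨Finset.mem_univ _, h, (hQR _ _).1 hQ⟩), rfl⟩

/-- if every edge of every perfect matching of a balanced bipartite graph `G`
on `2n` vertices has at least `γn²` switchable edges, then for every `μn`-bounded system
of conflicts `F`, at least an `e^{−√μ n}` proportion of the perfect matchings of `G`
are `F`-conflict-free. -/
theorem conflict_free_PM_via_switchings :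
    ∀ γ : ℝ, γ ∈ Set.Ioc (0 : ℝ) 1 →
    ∃ μ₀ : ℝ, 0 < μ₀ ∧ ∀ μ ∈ Set.Ioc (0 : ℝ) μ₀,
    ∃ n₀ : ℕ, ∀ n : ℕ, n₀ ≤ n →
      ∀ (V : Type) [Fintype V] (G : SimpleGraph V) (A B : Set V),
        A ∪ B = Set.univ → Disjoint A B → A.ncard = n → B.ncard = n →
        (∀ u v : V, G.Adj u v → (u ∈ A ∧ v ∈ B) ∨ (u ∈ B ∧ v ∈ A)) →
        (∃ M : G.Subgraph, M.IsPerfectMatching) →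
        (∀ M : G.Subgraph, M.IsPerfectMatching →
          ∀ a₁ ∈ A, ∀ b₁ ∈ B, M.Adj a₁ b₁ →
            γ * (n : ℝ) ^ 2 ≤ ((switchableEdges G M A B a₁ b₁).ncard : ℝ)) →
        ∀ F : Set (Sym2 (Sym2 V)),
          (∀ p ∈ F, ∀ e ∈ p, e ∈ G.edgeSet) →
          (∀ e ∈ G.edgeSet, (({f : Sym2 V | s(e, f) ∈ F}).ncard : ℝ) ≤ μ * n) →
          Real.exp (-(Real.sqrt μ) * n) * (({M : G.Subgraph | M.IsPerfectMatching}).ncard : ℝ)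
            ≤ (({M : G.Subgraph | M.IsPerfectMatching ∧
                ∀ e ∈ M.edgeSet, ∀ f ∈ M.edgeSet, e ≠ f → s(e, f) ∉ F}).ncard : ℝ) := by
  classical
  intro γ hγ
  refine ⟨γ ^ 4 / 256, by have := hγ.1; positivity, ?_⟩
  intro μ hμ
  refine ⟨⌈8 / γ⌉₊, ?_⟩
  intro n hn V _ G A B hU hAB hAn hBn hbip _ hsw F hF hFb
  have hn' : 8 / γ ≤ n := Nat.ceil_le.1 hn
  have hneAB : ∀ (a : ↥A) (b : ↥B), (a : V) ≠ b := fun a b h =>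
    Set.disjoint_left.1 hAB a.2 (h ▸ b.2)
  have hsinj : ∀ e f : ↥A × ↥B, s((e.1 : V), (e.2 : V)) = s((f.1 : V), (f.2 : V)) → e = f := by
    rintro ⟨a, b⟩ ⟨a', b'⟩ h
    rcases Sym2.eq_iff.1 h with ⟨h1, h2⟩ | ⟨h1, h2⟩
    · exact Prod.ext (Subtype.ext h1) (Subtype.ext h2)
    · exact absurd h1 (hneAB _ _)
  let c : ↥A × ↥B → ↥A × ↥B → Prop := fun e f =>
    s(s((e.1 : V), (e.2 : V)), s((f.1 : V), (f.2 : V))) ∈ F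
  have hcore := core_bound n (by rw [← hAn, Set.ncard_eq_toFinset_card', Set.toFinset_card])
    (by rw [← hBn, Set.ncard_eq_toFinset_card', Set.toFinset_card])
    (fun (a : ↥A) (b : ↥B) => G.Adj a b) c
    (fun e f h => by dsimp only [c] at h ⊢; rwa [Sym2.eq_swap])
    γ μ hγ.1 hγ.2 hμ.1 hμ.2 hn' ?_ ?_
  · have e1 := pm_ncard G hU hAB hbip (fun _ => True) (fun _ => True) (by simp)
    have e2 := pm_ncard G hU hAB hbip
      (fun M => ∀ e ∈ M.edgeSet, ∀ f ∈ M.edgeSet, e ≠ f → s(e, f) ∉ F)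
      (fun σ => ∀ a a', a ≠ a' → ¬ c (a, σ a) (a', σ a')) ?_
    · simp only [and_true] at e1
      rw [e1, e2]
      convert hcore
    · intro σ h
      have hedge : ∀ e ∈ (toSub G σ h).edgeSet, ∃ a : ↥A, e = s((a : V), (σ a : V)) := by
        intro e
        induction e using Sym2.ind with
        | _ u v =>
        rintro ⟨a, ⟨rfl, rfl⟩ | ⟨rfl, rfl⟩⟩
        · exact ⟨a, rfl⟩
        · exact ⟨a, Sym2.eq_swap⟩
      constructor
      · intro H a a' hne hc
        refine H s((a : V), (σ a : V)) ⟨a, Or.inl ⟨rfl, rfl⟩⟩ s((a' : V), (σ a' : V))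
          ⟨a', Or.inl ⟨rfl, rfl⟩⟩ ?_ hc
        intro heq
        exact hne (congrArg Prod.fst (hsinj (a, σ a) (a', σ a') heq))
      · intro H e he f hf hef
        obtain ⟨a, rfl⟩ := hedge e he
        obtain ⟨a', rfl⟩ := hedge f hf
        exact H a a' (fun h => hef (by rw [h]))
  · rintro ⟨a, b⟩
    by_cases hab : G.Adj a b
    · refine le_trans (Nat.cast_le.2 ?_) (hFb s((a : V), (b : V)) hab)
      rw [← Set.ncard_coe_finset]
      refine Set.ncard_le_ncard_of_injOn (fun f : ↥A × ↥B => s((f.1 : V), (f.2 : V))) ?_ ?_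
        (Set.toFinite _)
      · intro f hf
        exact (Finset.mem_filter.1 (Finset.mem_coe.1 hf)).2
      · intro e _ f _ h
        exact hsinj e f h
    · have : Finset.univ.filter (fun f => c (a, b) f) = ∅ := by
        rw [Finset.filter_eq_empty_iff]
        intro f _ hf
        exact hab (hF _ hf _ (Sym2.mem_mk_left _ _))
      rw [this]
      have := hμ.1
      simp only [Finset.card_empty, Nat.cast_zero]
      positivity
  · intro σ hσ a₁
    have h0 := hsw (toSub G σ hσ) (toSub_pm G hU hAB σ hσ) a₁ a₁.2 (σ a₁) (σ a₁).2
      ((toSub_adj G hAB σ hσ _ _).2 rfl)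
    refine h0.trans (Nat.cast_le.2 ?_)
    have hsub : switchableEdges G (toSub G σ hσ) A B a₁ (σ a₁) ⊆
        (fun f : ↥A × ↥B => s((f.1 : V), (f.2 : V))) ''
        ((Finset.univ.filter (SwB (fun (a : ↥A) (b : ↥B) => G.Adj a b) σ a₁) :
          Finset (↥A × ↥B)) : Set (↥A × ↥B)) := by
      rintro y ⟨a, ha, b, hb, rfl, hadj, hnM, a₂, b₂, h1, h2, h3, h4, hpw⟩
      have ha₂ : a₂ ∈ A := by
        rcases hbip _ _ h1.adj_sub with h | h
        · exact h.1
        · exact absurd hb (Set.disjoint_left.1 hAB h.2)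
      have hb₂ : b₂ ∈ B := by
        rcases hbip _ _ h2.adj_sub with h | h
        · exact h.2
        · exact absurd h.1 (Set.disjoint_left.1 hAB ha)
      have g1 := (toSub_adj G hAB σ hσ ⟨a₂, ha₂⟩ ⟨b, hb⟩).1 h1
      have g2 := (toSub_adj G hAB σ hσ ⟨a, ha⟩ ⟨b₂, hb₂⟩).1 h2
      have g1' : σ.symm ⟨b, hb⟩ = ⟨a₂, ha₂⟩ := by rw [← g1]; simp
      simp only [List.pairwise_cons, List.mem_cons, List.not_mem_nil, or_false, ne_eq,
        forall_eq_or_imp, forall_eq] at hpw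
      refine ⟨(⟨a, ha⟩, ⟨b, hb⟩), ?_, rfl⟩
      refine Finset.mem_coe.2 (Finset.mem_filter.2 ⟨Finset.mem_univ _, hadj, ?_, ?_, ?_, ?_, ?_⟩)
      · intro h
        exact hnM ((toSub_adj G hAB σ hσ ⟨a, ha⟩ ⟨b, hb⟩).2 h)
      · dsimp only
        rw [g1']; exact h3.symm
      · dsimp only
        rw [g2]; exact h4.symm
      · intro h
        exact hpw.1.2.2.2.1 (congrArg Subtype.val h)
      · dsimp only
        rw [g1']
        intro h
        exact hpw.1.2.1 (congrArg Subtype.val h)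
    refine (Set.ncard_le_ncard hsub (Set.toFinite _)).trans ?_
    refine (Set.ncard_image_le (Set.toFinite _)).trans ?_
    rw [Set.ncard_coe_finset]
end

section
/- For every η ∈ (0,1) there exists c ∈ (0,1) such that for every ν ∈ (0,c] and every α ≥ 1/c there exist μ₀ > 0 and β > 0 such that for every μ ∈ (0, μ₀] there exists N₀ ∈ ℕ such that for every N ≥ N₀ the following holds: let C₁, …, C_N be finite multisets of ℕ satisfying (B1) νN ≤ |C_i| ≤ N for every i ∈ [N], and (B2) Σ_{i=1}^N m(k, C_i) ≤ μN for every k ∈ ℕ. Let ℓ ∈ ℕ with 1 ≤ ℓ ≤ βνN and αℓ ∈ ℕ, and let U ⊆ ℕ be a set with |U| = αℓ. Then there exists T ⊆ U such that (T1) |T| ≥ ℓ, and (T2) |C_i ∖⁺ T| ≥ (1 − η)|C_i| for every i ∈ [N]. -/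
/-- A nonzero vector supported on `F` with zero sum, orthogonal to the rows in `A`. -/
lemma exists_kernel_vec {ι : Type*} [DecidableEq ι] (a : ι → ℕ → ℝ) (F : Finset ℕ) (A : Finset ι)
    (h : A.card + 1 < F.card) :
    ∃ v : ℕ → ℝ, (∀ k, k ∉ F → v k = 0) ∧ (∃ k ∈ F, v k ≠ 0) ∧ ∑ k ∈ F, v k = 0 ∧
      ∀ i ∈ A, ∑ k ∈ F, a i k * v k = 0 := by
  let L : (F → ℝ) →ₗ[ℝ] (Option A → ℝ) :=
    LinearMap.pi fun o => match o with
      | none => ∑ k : F, LinearMap.proj k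
      | some i => ∑ k : F, a i.1 k.1 • LinearMap.proj k
  have hk : LinearMap.ker L ≠ ⊥ := by
    apply LinearMap.ker_ne_bot_of_finrank_lt
    simp
    omega
  obtain ⟨w, hw, hw0⟩ := (Submodule.ne_bot_iff _).1 hk
  rw [LinearMap.mem_ker] at hw
  refine ⟨fun k => if hk : k ∈ F then w ⟨k, hk⟩ else 0, fun k hk => by simp [hk], ?_, ?_, ?_⟩
  · obtain ⟨k, hk⟩ := Function.ne_iff.1 hw0
    exact ⟨k.1, k.2, by simpa using hk⟩
  · have := congrFun hw none
    rw [← Finset.sum_coe_sort F]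
    simpa [L] using this
  · intro i hi
    have := congrFun hw (some ⟨i, hi⟩)
    rw [← Finset.sum_coe_sort F]
    simpa [L] using this

/-- Move along `v` until a fractional coordinate becomes integral. -/
lemma exists_step (x v : ℕ → ℝ) (F : Finset ℕ) (hx : ∀ k ∈ F, 0 < x k ∧ x k < 1)
    (hv : ∃ k ∈ F, v k ≠ 0) :
    ∃ r : ℝ, (∀ k ∈ F, 0 ≤ x k + r * v k ∧ x k + r * v k ≤ 1) ∧
      ∃ k ∈ F, x k + r * v k = 0 ∨ x k + r * v k = 1 := by
  let ρ : ℕ → ℝ := fun k => if 0 < v k then (1 - x k) / v k else x k / (- v k)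
  obtain ⟨k₀, hk₀, hmin⟩ := Finset.exists_min_image (F.filter fun k => v k ≠ 0) ρ (by
    obtain ⟨k, hk, h⟩ := hv
    exact ⟨k, by simp [hk, h]⟩)
  rw [Finset.mem_filter] at hk₀
  have hpos : 0 ≤ ρ k₀ := by
    have := hx k₀ hk₀.1
    simp only [ρ]
    split_ifs with h
    · exact div_nonneg (by linarith) h.le
    · exact div_nonneg this.1.le (by linarith)
  refine ⟨ρ k₀, fun k hk => ?_, k₀, hk₀.1, ?_⟩
  · have hxk := hx k hk
    rcases lt_trichotomy (v k) 0 with h | h | h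
    · have h1 := hmin k (by simp [hk, h.ne])
      have h2 : ρ k = x k / (- v k) := by simp [ρ, h.le]
      rw [h2, le_div_iff₀ (by linarith)] at h1
      constructor <;> nlinarith
    · simp [h, hxk.1.le, hxk.2.le]
    · have h1 := hmin k (by simp [hk, h.ne'])
      have h2 : ρ k = (1 - x k) / v k := by simp [ρ, h]
      rw [h2, le_div_iff₀ h] at h1
      constructor <;> nlinarith
  · rcases lt_or_gt_of_ne hk₀.2 with h | h
    · left
      have h2 : ρ k₀ = x k₀ / (- v k₀) := by simp [ρ, h.le]
      have h3 := hk₀.2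
      rw [h2, div_neg, neg_mul, div_mul_cancel₀ _ h3]; ring
    · right
      have h2 : ρ k₀ = (1 - x k₀) / v k₀ := by simp [ρ, h]
      rw [h2]; field_simp; ring

lemma beck_fiala {ι : Type*} [Fintype ι] [DecidableEq ι] (a : ι → ℕ → ℝ) (ha : ∀ i k, 0 ≤ a i k)
    (t : ℝ) (ht : 0 < t) (hcol : ∀ k, ∑ i, a i k ≤ t) (U : Finset ℕ) (b : ι → ℝ) (s : ℝ) :
    ∀ n : ℕ, ∀ x : ℕ → ℝ, (∀ k ∈ U, 0 ≤ x k ∧ x k ≤ 1) →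
      (U.filter fun k => 0 < x k ∧ x k < 1).card = n → s ≤ ∑ k ∈ U, x k →
      (∀ i, ∑ k ∈ U, a i k * x k ≤ b i ∨
        ∑ k ∈ U.filter (fun k => 0 < x k), a i k ≤ b i + 2 * t) →
      ∃ T ⊆ U, s ≤ T.card ∧ ∀ i, ∑ k ∈ T, a i k ≤ b i + 2 * t := by
  intro n
  induction n using Nat.strong_induction_on with
  | _ n ih =>
  intro x hx hn hs hrow
  set F := U.filter fun k => 0 < x k ∧ x k < 1 with hF
  have hFU : F ⊆ U := Finset.filter_subset _ _
  have hFx : ∀ k ∈ F, 0 < x k ∧ x k < 1 := fun k hk => (Finset.mem_filter.1 hk).2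
  -- rows with small floating mass are safe
  have hsafe : ∀ i, ∑ k ∈ F, a i k ≤ 2 * t →
      ∑ k ∈ U.filter (fun k => 0 < x k), a i k ≤ b i + 2 * t := by
    intro i hi
    rcases hrow i with h | h
    · have : ∑ k ∈ U.filter (fun k => 0 < x k), a i k ≤
          ∑ k ∈ U, a i k * x k + ∑ k ∈ F, a i k := by
        rw [Finset.sum_filter, hF, Finset.sum_filter, ← Finset.sum_add_distrib]
        apply Finset.sum_le_sum
        intro k hk
        have h1 := hx k hk
        have h2 := ha i k
        by_cases h3 : 0 < x k
        · by_cases h4 : x k < 1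
          · simp only [h3, h4, and_self, if_true]; nlinarith
          · have : x k = 1 := le_antisymm h1.2 (not_lt.1 h4)
            simp [this]
        · have : x k = 0 := le_antisymm (not_lt.1 h3) h1.1
          simp [this]
      linarith
    · exact h
  by_cases hn2 : 2 ≤ n
  · set A := Finset.univ.filter fun i => 2 * t < ∑ k ∈ F, a i k with hA
    have hcard : A.card + 1 < F.card := by
      have h1 : ∑ i ∈ A, ∑ k ∈ F, a i k ≤ F.card * t := by
        calc ∑ i ∈ A, ∑ k ∈ F, a i k ≤ ∑ i, ∑ k ∈ F, a i k :=
              Finset.sum_le_sum_of_subset_of_nonneg (Finset.subset_univ _)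
                (fun i _ _ => Finset.sum_nonneg fun k _ => ha i k)
          _ = ∑ k ∈ F, ∑ i, a i k := Finset.sum_comm
          _ ≤ ∑ k ∈ F, t := Finset.sum_le_sum fun k _ => hcol k
          _ = F.card * t := by simp
      rcases A.eq_empty_or_nonempty with h | h
      · rw [h]; simp; omega
      · have h2 : ∑ i ∈ A, 2 * t < ∑ i ∈ A, ∑ k ∈ F, a i k :=
          Finset.sum_lt_sum_of_nonempty h fun i hi => (Finset.mem_filter.1 hi).2
        rw [Finset.sum_const, nsmul_eq_mul] at h2
        have h3 : ((2 * A.card : ℕ) : ℝ) < F.card := by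
          push_cast
          by_contra! h4
          nlinarith
        have h4 : 2 * A.card < F.card := by exact_mod_cast h3
        omega
    obtain ⟨v, hv0, hvne, hvs, hva⟩ := exists_kernel_vec a F A hcard
    obtain ⟨r, hr, k₀, hk₀, hk₀'⟩ := exists_step x v F hFx hvne
    set y : ℕ → ℝ := fun k => x k + r * v k with hy
    have hyx : ∀ k, k ∉ F → y k = x k := fun k hk => by simp [hy, hv0 k hk]
    have hvsU : ∑ k ∈ U, v k = 0 := by
      rw [← hvs]; exact (Finset.sum_subset hFU fun k _ hk => hv0 k hk).symm
    have hsub : ∀ k ∈ U, 0 < y k → 0 < x k := by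
      intro k hk h
      by_cases hkF : k ∈ F
      · exact (hFx k hkF).1
      · rwa [hyx k hkF] at h
    refine ih _ ?_ y ?_ rfl ?_ ?_
    · rw [← hn]
      apply Finset.card_lt_card
      rw [Finset.ssubset_iff_of_subset]
      · refine ⟨k₀, hk₀, ?_⟩
        intro h
        have := (Finset.mem_filter.1 h).2
        simp only [hy] at this
        rcases hk₀' with h | h <;> linarith [this.1, this.2]
      · intro k hk
        by_contra hkF
        rw [Finset.mem_filter, hyx k hkF] at hk
        exact hkF (Finset.mem_filter.2 hk)
    · intro k hk
      by_cases hkF : k ∈ F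
      · exact hr k hkF
      · rw [hyx k hkF]; exact hx k hk
    · simp only [hy, Finset.sum_add_distrib, ← Finset.mul_sum, hvsU]
      simpa using hs
    · intro i
      have hmono : ∑ k ∈ U.filter (fun k => 0 < y k), a i k ≤
          ∑ k ∈ U.filter (fun k => 0 < x k), a i k := by
        apply Finset.sum_le_sum_of_subset_of_nonneg
        · intro k hk
          rw [Finset.mem_filter] at hk ⊢
          exact ⟨hk.1, hsub k hk.1 hk.2⟩
        · exact fun k _ _ => ha i k
      by_cases hi : i ∈ A
      · rcases hrow i with h | h
        · left
          have h1 : ∑ k ∈ U, a i k * v k = 0 := by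
            rw [← hva i hi]
            exact (Finset.sum_subset hFU fun k _ hk => by simp [hv0 k hk]).symm
          have h2 : ∑ k ∈ U, a i k * y k = ∑ k ∈ U, a i k * x k + r * ∑ k ∈ U, a i k * v k := by
            rw [Finset.mul_sum, ← Finset.sum_add_distrib]
            exact Finset.sum_congr rfl fun k _ => by simp only [hy]; ring
          rw [h2, h1]; simpa using h
        · right; exact hmono.trans h
      · right
        refine hmono.trans (hsafe i ?_)
        simpa [hA] using hi
  · refine ⟨U.filter (fun k => 0 < x k), Finset.filter_subset _ _, ?_, fun i => hsafe i ?_⟩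
    · refine hs.trans ?_
      rw [Finset.card_filter]
      push_cast
      apply Finset.sum_le_sum
      intro k hk
      have := hx k hk
      split_ifs with h
      · exact this.2
      · exact not_lt.1 h
    · calc ∑ k ∈ F, a i k ≤ ∑ k ∈ F, t := Finset.sum_le_sum fun k _ =>
            (Finset.single_le_sum (f := fun j => a j k) (fun j _ => ha j k)
              (Finset.mem_univ i)).trans (hcol k)
        _ = F.card * t := by simp
        _ ≤ 2 * t := by
          have : (F.card : ℝ) ≤ 2 := by
            have : F.card ≤ 2 := by omega
            exact_mod_cast this
          nlinarith

lemma sum_count_finset (M : Multiset ℕ) (T : Finset ℕ) :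
    ∑ k ∈ T, M.count k = (M.filter (fun k => k ∈ T)).card := by
  rw [← Multiset.sum_count_eq_card (s := T) (m := M.filter (fun k => k ∈ T))]
  · exact Finset.sum_congr rfl fun k hk => (Multiset.count_filter_of_pos hk).symm
  · intro k hk
    exact (Multiset.mem_filter.1 hk).2


/-- technical multiset lemma. For every η ∈ (0,1) there exists c ∈ (0,1) such
that for every ν ∈ (0,c] and α ≥ 1/c there are μ₀ > 0 and β > 0 such that for every
μ ∈ (0,μ₀] there is N₀ such that for every N ≥ N₀ the following holds: if C₁,…,C_N are
multisets of ℕ with (B1) νN ≤ |Cᵢ| ≤ N and (B2) Σᵢ m(k,Cᵢ) ≤ μN for every k, and if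
ℓ ∈ ℕ satisfies 1 ≤ ℓ ≤ βνN with αℓ ∈ ℕ, and U ⊆ ℕ has |U| = αℓ, then there is T ⊆ U
with (T1) |T| ≥ ℓ and (T2) |Cᵢ ∖⁺ T| ≥ (1−η)|Cᵢ| for every i. -/
theorem multiset_colour_deletion :
    ∀ η : ℝ, η ∈ Set.Ioo (0 : ℝ) 1 →
    ∃ c ∈ Set.Ioo (0 : ℝ) 1, ∀ ν α : ℝ, ν ∈ Set.Ioc (0 : ℝ) c → 1 / c ≤ α →
    ∃ μ₀ β : ℝ, 0 < μ₀ ∧ 0 < β ∧ ∀ μ ∈ Set.Ioc (0 : ℝ) μ₀,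
    ∃ N₀ : ℕ, ∀ N : ℕ, N₀ ≤ N →
      ∀ C : Fin N → Multiset ℕ,
        (∀ i : Fin N, ν * N ≤ ((C i).card : ℝ) ∧ ((C i).card : ℝ) ≤ N) →
        (∀ k : ℕ, ((∑ i : Fin N, (C i).count k : ℕ) : ℝ) ≤ μ * N) →
        ∀ ℓ : ℕ, 1 ≤ ℓ → (ℓ : ℝ) ≤ β * ν * N →
        ∀ U : Finset ℕ, (U.card : ℝ) = α * ℓ →
        ∃ T : Finset ℕ, T ⊆ U ∧ ℓ ≤ T.card ∧
          ∀ i : Fin N,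
            (1 - η) * ((C i).card : ℝ) ≤ (((C i).filter (fun k => k ∉ T)).card : ℝ) := by
  intro η hη
  obtain ⟨hη0, hη1⟩ := hη
  refine ⟨η / 2, ⟨by linarith, by linarith⟩, ?_⟩
  intro ν α hν hα
  have hν0 : 0 < ν := hν.1
  refine ⟨η * ν / 4, 1, by positivity, one_pos, ?_⟩
  intro μ hμ
  refine ⟨1, ?_⟩
  intro N hN C hC hcol ℓ _ _ U hU
  have hN0 : (0 : ℝ) < N := by exact_mod_cast hN
  have ht : 0 < μ * N := mul_pos hμ.1 hN0
  have hs : (ℓ : ℝ) ≤ ∑ k ∈ U, (fun _ : ℕ => η / 2) k := by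
    rw [Finset.sum_const, nsmul_eq_mul, hU]
    have h1 : 1 ≤ α * (η / 2) := (div_le_iff₀ (by linarith)).1 hα
    have h2 : (0 : ℝ) ≤ ℓ := Nat.cast_nonneg _
    nlinarith
  obtain ⟨T, hTU, hT, hrow⟩ := beck_fiala (fun i k => ((C i).count k : ℝ))
    (fun i k => Nat.cast_nonneg _) (μ * N) ht (fun k => by exact_mod_cast hcol k) U
    (fun i => η / 2 * (C i).card) ℓ _ (fun _ => η / 2)
    (fun k _ => ⟨by linarith, by linarith⟩) rfl hs (by
      intro i
      left
      rw [← Finset.sum_mul, mul_comm]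
      have h1 : ∑ k ∈ U, (C i).count k ≤ (C i).card := by
        rw [sum_count_finset]
        exact Multiset.card_le_card (Multiset.filter_le _ _)
      have h2 : ∑ k ∈ U, ((C i).count k : ℝ) ≤ (C i).card := by exact_mod_cast h1
      exact mul_le_mul_of_nonneg_left h2 (by linarith))
  refine ⟨T, hTU, by exact_mod_cast hT, fun i => ?_⟩
  have h1 : ((C i).filter (fun k => k ∈ T)).card + ((C i).filter (fun k => k ∉ T)).card
      = (C i).card := by
    rw [← Multiset.card_add, Multiset.filter_add_not]
  have h2 : (((C i).filter (fun k => k ∈ T)).card : ℝ) + ((C i).filter (fun k => k ∉ T)).card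
      = (C i).card := by exact_mod_cast h1
  have h3 := hrow i
  have h4 : ∑ k ∈ T, ((C i).count k : ℝ) = ((C i).filter (fun k => k ∈ T)).card := by
    exact_mod_cast sum_count_finset (C i) T
  simp only [h4] at h3
  have h5 := (hC i).1
  have h6 : μ * N ≤ η * ν / 4 * N := mul_le_mul_of_nonneg_right hμ.2 hN0.le
  have h7 : η * (ν * N) ≤ η * (C i).card := mul_le_mul_of_nonneg_left h5 hη0.le
  nlinarith
end

section
/- There exists ε₀ ∈ (0,1) such that for every ε ∈ (0, ε₀] there exist μ > 0 and n₀ ∈ ℕ such that for every n ≥ n₀ the following holds: if G = (A ∪ B, E) is an ε-extremal Dirac bipartite graph on 2n vertices, then for every μn-bounded edge colouring χ of G there exists a perfect matching of G that is rainbow with respect to χ. -/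
/-- `ε`-extremal balanced bipartite graph with parts `A`, `B` of size `n`. -/
def EpsExtremal {V : Type*} (G : SimpleGraph V) (A B : Set V) (n : ℕ) (ε : ℝ) : Prop :=
  ∃ A₁ A₂ B₁ B₂ : Set V,
    A₁ ∪ A₂ = A ∧ Disjoint A₁ A₂ ∧ B₁ ∪ B₂ = B ∧ Disjoint B₁ B₂ ∧
    |(A₁.ncard : ℝ) - (A₂.ncard : ℝ)| ≤ ε * n ∧
    |(B₁.ncard : ℝ) - (B₂.ncard : ℝ)| ≤ ε * n ∧
    (({p : V × V | p.1 ∈ A₁ ∧ p.2 ∈ B₂ ∧ G.Adj p.1 p.2}).ncard : ℝ) ≤ ε * n ^ 2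

section RainbowHelpers
open Finset Classical

/-- single-edge switching bound -/
lemma switch_bound {Ω : Type*} (W : Finset Ω) (R P : Ω → Prop)
    (q : ℝ) (hq : 0 ≤ q) (Sw : Ω → Finset Ω)
    (h1 : ∀ σ ∈ W, P σ → R σ → ∀ σ' ∈ Sw σ, σ' ∈ W ∧ P σ')
    (h2 : ∀ σ ∈ W, ∀ τ ∈ W, R σ → R τ → ∀ σ', σ' ∈ Sw σ → σ' ∈ Sw τ → σ = τ)
    (h3 : ∀ σ ∈ W, P σ → R σ → 1 ≤ q * ((Sw σ).card : ℝ)) :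
    ((W.filter (fun σ => P σ ∧ R σ)).card : ℝ) ≤ q * ((W.filter P).card : ℝ) := by
  have hb : ((W.filter (fun σ => P σ ∧ R σ)).biUnion Sw) ⊆ W.filter P := by
    intro σ' h
    simp only [mem_biUnion, mem_filter] at h
    obtain ⟨σ, ⟨hW, hP, hR⟩, hs⟩ := h
    simpa using h1 σ hW hP hR σ' hs
  have hc := card_le_card hb
  rw [card_biUnion] at hc
  · have : ((∑ σ ∈ W.filter (fun σ => P σ ∧ R σ), (Sw σ).card : ℕ) : ℝ) ≤ ((W.filter P).card : ℝ) := by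
      exact_mod_cast hc
    calc ((W.filter (fun σ => P σ ∧ R σ)).card : ℝ)
        = ∑ σ ∈ W.filter (fun σ => P σ ∧ R σ), (1:ℝ) := by simp
      _ ≤ ∑ σ ∈ W.filter (fun σ => P σ ∧ R σ), q * ((Sw σ).card : ℝ) := by
          apply sum_le_sum
          intro σ h
          simp only [mem_filter] at h
          exact h3 σ h.1 h.2.1 h.2.2
      _ = q * ((∑ σ ∈ W.filter (fun σ => P σ ∧ R σ), (Sw σ).card : ℕ) : ℝ) := by
          push_cast; rw [mul_sum]
      _ ≤ _ := by gcongr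
  · intro σ hσ τ hτ hne
    refine Finset.disjoint_left.2 ?_
    intro a ha hb
    simp only [coe_filter, Set.mem_ofPred_eq] at hσ hτ
    exact hne (h2 σ hσ.1 τ hτ.1 hσ.2.2 hτ.2.2 a ha hb)

/-- avoidance of a set of conflicts -/
def Avoids {Ω E : Type*} (has : Ω → E → Prop) (S : Finset (E × E)) (σ : Ω) : Prop :=
  ∀ c ∈ S, ¬ (has σ c.1 ∧ has σ c.2)

/-- The switching hypothesis for an edge `e`. -/
def SwitchHyp {Ω E : Type*} (W : Finset Ω) (has : Ω → E → Prop) (T : E → E → Prop)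
    (q : E → ℝ) (e : E) : Prop :=
  ∃ Sw : Ω → Finset Ω,
    (∀ σ ∈ W, has σ e → ∀ σ' ∈ Sw σ, σ' ∈ W ∧ ∀ g, has σ' g → has σ g ∨ T e g) ∧
    (∀ σ ∈ W, ∀ τ ∈ W, has σ e → has τ e → ∀ σ', σ' ∈ Sw σ → σ' ∈ Sw τ → σ = τ) ∧
    (∀ σ ∈ W, has σ e → ∀ f, f ≠ e →
      1 ≤ q e * (((Sw σ).filter (fun σ' => has σ f → has σ' f)).card : ℝ))

lemma pair_bound {Ω E : Type*} (W : Finset Ω) (has : Ω → E → Prop) (T : E → E → Prop)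
    (q : E → ℝ) (hq : ∀ e, 0 ≤ q e) (e f : E) (hef : e ≠ f)
    (he : SwitchHyp W has T q e) (hf : SwitchHyp W has T q f)
    (S : Finset (E × E))
    (hS : ∀ c ∈ S, ¬ T e c.1 ∧ ¬ T e c.2 ∧ ¬ T f c.1 ∧ ¬ T f c.2) :
    ((W.filter (fun σ => Avoids has S σ ∧ (has σ e ∧ has σ f))).card : ℝ)
      ≤ q e * q f * ((W.filter (Avoids has S)).card : ℝ) := by
  obtain ⟨Se, e1, e2, e3⟩ := he
  obtain ⟨Sf, f1, f2, f3⟩ := hf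
  have A := switch_bound W (fun σ => has σ f) (Avoids has S) (q f) (hq f) Sf
    (by
      intro σ hW hP hR σ' hs
      obtain ⟨h, h'⟩ := f1 σ hW hR σ' hs
      refine ⟨h, fun c hc hcc => hP c hc ?_⟩
      have := hS c hc
      exact ⟨(h' _ hcc.1).resolve_right this.2.2.1, (h' _ hcc.2).resolve_right this.2.2.2⟩)
    f2
    (by
      intro σ hW hP hR
      refine (f3 σ hW hR e hef).trans ?_
      have := hq f
      gcongr
      exact filter_subset _ _)
  have B := switch_bound W (fun σ => has σ e) (fun σ => Avoids has S σ ∧ has σ f) (q e) (hq e)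
    (fun σ => (Se σ).filter (fun σ' => has σ f → has σ' f))
    (by
      intro σ hW hP hR σ' hs
      simp only [mem_filter] at hs
      obtain ⟨h, h'⟩ := e1 σ hW hR σ' hs.1
      refine ⟨h, fun c hc hcc => hP.1 c hc ?_, hs.2 hP.2⟩
      have := hS c hc
      exact ⟨(h' _ hcc.1).resolve_right this.1, (h' _ hcc.2).resolve_right this.2.1⟩)
    (by
      intro σ hσ τ hτ h h' σ' a b
      simp only [mem_filter] at a b
      exact e2 σ hσ τ hτ h h' σ' a.1 b.1)
    (by
      intro σ hW hP hR
      exact e3 σ hW hR f hef.symm)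
  refine le_trans (le_of_eq ?_) (B.trans ?_)
  · congr 2
    ext σ
    simp only [mem_filter]
    tauto
  · rw [mul_assoc]
    refine mul_le_mul_of_nonneg_left (le_trans (le_of_eq ?_) A) (hq e)
    congr!

/-- The lopsided local lemma, in the form needed here. -/
theorem lll {Ω E : Type*} (W : Finset Ω) (hW : W.Nonempty) (has : Ω → E → Prop)
    (T : E → E → Prop) (hT : ∀ e, T e e)
    (q : E → ℝ) (hq : ∀ e, 0 ≤ q e)
    (K : Finset (E × E))
    (hK : ∀ c ∈ K, c.1 ≠ c.2 ∧ SwitchHyp W has T q c.1 ∧ SwitchHyp W has T q c.2)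
    (hsum : ∀ c ∈ K, ∑ s ∈ K.filter (fun s => T c.1 s.1 ∨ T c.1 s.2 ∨ T c.2 s.1 ∨ T c.2 s.2),
      q s.1 * q s.2 ≤ 1 / 4) :
    ∃ σ ∈ W, Avoids has K σ := by
  have main : ∀ N : ℕ, ∀ S : Finset (E × E), S ⊆ K → S.card = N → ∀ c ∈ K,
      ((W.filter (fun σ => Avoids has S σ ∧ (has σ c.1 ∧ has σ c.2))).card : ℝ)
      ≤ 2 * (q c.1 * q c.2) * ((W.filter (Avoids has S)).card : ℝ) := by
    intro N
    induction N using Nat.strong_induction_on with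
    | _ N ih =>
    intro S hSK hSN c hc
    let nb : E × E → Prop := fun s => T c.1 s.1 ∨ T c.1 s.2 ∨ T c.2 s.1 ∨ T c.2 s.2
    have hqc : 0 ≤ q c.1 * q c.2 := mul_nonneg (hq _) (hq _)
    let S1 := S.filter nb
    let S2 := S.filter (fun s => ¬ nb s)
    have hpb := pair_bound W has T q hq c.1 c.2 (hK c hc).1 (hK c hc).2.1 (hK c hc).2.2 S2
      (by
        intro s hs
        simp only [S2, mem_filter, nb] at hs
        tauto)
    have hS12 : ∀ σ, Avoids has S σ → Avoids has S2 σ := by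
      intro σ h s hs
      exact h s (mem_filter.1 hs).1
    have hle : ((W.filter (fun σ => Avoids has S σ ∧ (has σ c.1 ∧ has σ c.2))).card : ℝ) ≤
        ((W.filter (fun σ => Avoids has S2 σ ∧ (has σ c.1 ∧ has σ c.2))).card : ℝ) := by
      exact_mod_cast card_le_card (by
        intro σ h
        simp only [mem_filter] at h ⊢
        exact ⟨h.1, hS12 σ h.2.1, h.2.2⟩)
    by_cases hS1 : S1 = ∅
    · have : S2 = S := by
        apply filter_true_of_mem
        intro s hs hn
        have : s ∈ S1 := mem_filter.2 ⟨hs, hn⟩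
        simp [hS1] at this
      rw [this] at hpb
      have h0 : (0:ℝ) ≤ ((W.filter (Avoids has S)).card : ℝ) := by positivity
      nlinarith [mul_nonneg hqc h0]
    · have hlt : S2.card < N := by
        rw [← hSN]
        apply card_lt_card
        refine ⟨filter_subset _ _, fun h => hS1 ?_⟩
        apply filter_false_of_mem
        intro s hs
        exact (mem_filter.1 (h hs)).2
      have hsub : (W.filter (Avoids has S2)) ⊆ (W.filter (Avoids has S)) ∪
          S1.biUnion (fun s => W.filter (fun σ => Avoids has S2 σ ∧ (has σ s.1 ∧ has σ s.2))) := by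
        intro σ h
        simp only [mem_filter, mem_union, mem_biUnion] at h ⊢
        by_cases hA : Avoids has S σ
        · exact Or.inl ⟨h.1, hA⟩
        · right
          simp only [Avoids, not_forall, not_not] at hA
          obtain ⟨s, hs, hss⟩ := hA
          refine ⟨s, ?_, h.1, h.2, hss⟩
          by_contra hn
          refine h.2 s (mem_filter.2 ⟨hs, fun hnb => hn (mem_filter.2 ⟨hs, hnb⟩)⟩) hss
      have hcard : ((W.filter (Avoids has S2)).card : ℝ) ≤ ((W.filter (Avoids has S)).card : ℝ) +
          ∑ s ∈ S1, ((W.filter (fun σ => Avoids has S2 σ ∧ (has σ s.1 ∧ has σ s.2))).card : ℝ) := by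
        have := (card_le_card hsub).trans ((card_union_le _ _).trans
          (Nat.add_le_add_left card_biUnion_le _))
        exact_mod_cast this
      have hs : ∑ s ∈ S1, ((W.filter (fun σ => Avoids has S2 σ ∧ (has σ s.1 ∧ has σ s.2))).card : ℝ)
          ≤ ∑ s ∈ S1, 2 * (q s.1 * q s.2) * ((W.filter (Avoids has S2)).card : ℝ) := by
        apply sum_le_sum
        intro s hs
        exact ih _ hlt S2 ((filter_subset _ _).trans hSK) rfl s (hSK (mem_filter.1 hs).1)
      have hs2 : ∑ s ∈ S1, q s.1 * q s.2 ≤ 1 / 4 := by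
        refine le_trans ?_ (hsum c hc)
        apply sum_le_sum_of_subset_of_nonneg
        · intro s hs
          exact mem_filter.2 ⟨hSK (mem_filter.1 hs).1, (mem_filter.1 hs).2⟩
        · intro s _ _
          exact mul_nonneg (hq _) (hq _)
      rw [← sum_mul, ← mul_sum] at hs
      have h0 : (0:ℝ) ≤ ((W.filter (Avoids has S2)).card : ℝ) := by positivity
      have h4 : ((W.filter (Avoids has S2)).card : ℝ) ≤ 2 * ((W.filter (Avoids has S)).card : ℝ) := by
        nlinarith
      nlinarith [mul_le_mul_of_nonneg_left h4 hqc]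
  have pos : ∀ S : Finset (E × E), S ⊆ K → 0 < (W.filter (Avoids has S)).card := by
    intro S
    induction S using Finset.induction_on with
    | empty =>
      intro _
      have : W.filter (Avoids has ∅) = W := by
        apply filter_true_of_mem
        intro σ _ c hc
        simp at hc
      rw [this]
      exact hW.card_pos
    | insert c S hcS ih =>
      intro hSK
      have hc : c ∈ K := hSK (mem_insert_self _ _)
      have hS : S ⊆ K := fun s hs => hSK (mem_insert_of_mem hs)
      have hp := ih hS
      have hm := main _ S hS rfl c hc
      have hqc : q c.1 * q c.2 ≤ 1 / 4 := by
        refine le_trans ?_ (hsum c hc)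
        exact single_le_sum (f := fun s : E × E => q s.1 * q s.2)
          (fun s _ => mul_nonneg (hq _) (hq _)) (mem_filter.2 ⟨hc, Or.inl (hT _)⟩)
      have hsub : W.filter (Avoids has S) ⊆ W.filter (Avoids has (insert c S)) ∪
          W.filter (fun σ => Avoids has S σ ∧ (has σ c.1 ∧ has σ c.2)) := by
        intro σ h
        simp only [mem_filter, mem_union] at h ⊢
        by_cases hh : has σ c.1 ∧ has σ c.2
        · exact Or.inr ⟨h.1, h.2, hh⟩
        · left
          refine ⟨h.1, fun s hs => ?_⟩
          rcases mem_insert.1 hs with rfl | hs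
          · exact hh
          · exact h.2 s hs
      have hcard : ((W.filter (Avoids has S)).card : ℝ) ≤
          ((W.filter (Avoids has (insert c S))).card : ℝ) +
          ((W.filter (fun σ => Avoids has S σ ∧ (has σ c.1 ∧ has σ c.2))).card : ℝ) := by
        exact_mod_cast (card_le_card hsub).trans (card_union_le _ _)
      have hp' : (0:ℝ) < ((W.filter (Avoids has S)).card : ℝ) := by exact_mod_cast hp
      have : (0:ℝ) < ((W.filter (Avoids has (insert c S))).card : ℝ) := by nlinarith
      exact_mod_cast this
  obtain ⟨σ, hσ⟩ := card_pos.1 (pos K (Subset.refl _))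
  exact ⟨σ, (mem_filter.1 hσ).1, (mem_filter.1 hσ).2⟩

/-- The combinatorial data: class-preserving edges `H`, and `k` groups of `t` crossing edges. -/
structure CoreData (α β : Type*) (k t : ℕ) where
  cA : α → Bool
  cB : β → Bool
  H : α → β → Prop
  xs : Fin k → Fin t → α
  ys : Fin k → Fin t → β
  xinj : ∀ i j i' j', xs i j = xs i' j' → i = i' ∧ j = j'
  yinj : ∀ i j i' j', ys i j = ys i' j' → i = i' ∧ j = j'
  xcl : ∀ i j, cA (xs i j) = true
  ycl : ∀ i j, cB (ys i j) = false
  Hcl : ∀ a b, H a b → cA a = cB b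
  Hx : ∀ i j j' b, H (xs i j) b → H (xs i j') b
  Hy : ∀ i j j' a, H a (ys i j) → H a (ys i j')

namespace CoreData
variable {α β : Type*} {k t : ℕ} (C : CoreData α β k t)

/-- crossing edges -/
def F (a : α) (b : β) : Prop := ∃ i j, a = C.xs i j ∧ b = C.ys i j

/-- admissible perfect matchings -/
def Good (σ : α ≃ β) : Prop :=
  (∀ a, C.H a (σ a) ∨ C.F a (σ a)) ∧ ∀ i, ∃! j, σ (C.xs i j) = C.ys i j

/-- the touching relation on edges -/
def T (e g : α × β) : Prop :=
  e.1 = g.1 ∨ e.2 = g.2 ∨ ∃ i j j', e = (C.xs i j, C.ys i j) ∧ g = (C.xs i j', C.ys i j')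

lemma F_cl {a b} (h : C.F a b) : C.cA a = true ∧ C.cB b = false := by
  obtain ⟨i, j, rfl, rfl⟩ := h
  exact ⟨C.xcl _ _, C.ycl _ _⟩

lemma not_H_of_F {a b} (h : C.F a b) : ¬ C.H a b := by
  intro h'
  have := C.Hcl a b h'
  have h2 := C.F_cl h
  rw [h2.1, h2.2] at this
  simp at this

/-- `H`-neighbours -/
noncomputable def nA [Fintype β] (a : α) : Finset β := univ.filter (fun b => C.H a b)
noncomputable def nB [Fintype α] (b : β) : Finset α := univ.filter (fun a => C.H a b)

lemma swap_good {σ : α ≃ β} (hσ : C.Good σ) {a x : α} 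
    (h1 : C.H a (σ x)) (h2 : C.H x (σ a)) : C.Good ((Equiv.swap a x).trans σ) := by
  have key : ∀ u, (u = a ∨ u = x) → C.H u (((Equiv.swap a x).trans σ) u) := by
    rintro u (rfl | rfl)
    · simpa using h1
    · simpa using h2
  have key2 : ∀ u, ¬ (u = a ∨ u = x) → ((Equiv.swap a x).trans σ) u = σ u := by
    intro u hu
    push Not at hu
    simp [Equiv.swap_apply_of_ne_of_ne hu.1 hu.2]
  have same : C.cA a = C.cA x := by
    rcases hσ.1 a with h | h
    · rw [C.Hcl _ _ h, C.Hcl _ _ h2]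
    · rcases hσ.1 x with h' | h'
      · rw [C.Hcl _ _ h', C.Hcl _ _ h1]
      · rw [(C.F_cl h).1, (C.F_cl h').1]
  have hnc : ∀ u, (u = a ∨ u = x) → C.H u (σ u) := by
    intro u hu
    rcases hσ.1 u with h | h
    · exact h
    · exfalso
      have h3 := C.Hcl _ _ h1
      have h4 := C.Hcl _ _ h2
      have h5 := C.F_cl h
      rcases hu with rfl | rfl
      · rw [h5.2, ← same, h5.1] at h4; simp at h4
      · rw [h5.2, same, h5.1] at h3; simp at h3
  refine ⟨fun u => ?_, fun i => ?_⟩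
  · by_cases hu : u = a ∨ u = x
    · exact Or.inl (key u hu)
    · rw [key2 u hu]; exact hσ.1 u
  · have : ∀ j, ((Equiv.swap a x).trans σ) (C.xs i j) = C.ys i j ↔ σ (C.xs i j) = C.ys i j := by
      intro j
      by_cases hu : C.xs i j = a ∨ C.xs i j = x
      · have h1 := key _ hu
        have h2 := hnc _ hu
        constructor
        · intro h; rw [h] at h1; exact absurd h1 (C.not_H_of_F ⟨i, j, rfl, rfl⟩)
        · intro h; rw [h] at h2; exact absurd h2 (C.not_H_of_F ⟨i, j, rfl, rfl⟩)
      · rw [key2 _ hu]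
    simp only [this]
    exact hσ.2 i

lemma sw1 [Fintype α] [Fintype β] (q : α × β → ℝ) (m : ℕ)
    (hm1 : (univ.filter (fun a => C.cA a = true)).card ≤ m)
    (hm2 : (univ.filter (fun b => C.cB b = false)).card ≤ m)
    (e : α × β) (he : C.H e.1 e.2) (hq0 : 0 ≤ q e)
    (hq : 1 ≤ q e * (((C.nA e.1).card : ℝ) + ((C.nB e.2).card : ℝ) - m - 1)) :
    SwitchHyp (univ.filter (fun σ : α ≃ β => C.Good σ)) (fun σ e => σ e.1 = e.2) C.T q e := by
  obtain ⟨a, b⟩ := e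
  simp only at he hq ⊢
  let X : (α ≃ β) → Finset α := fun σ => univ.filter (fun x => C.H a (σ x) ∧ C.H x b)
  refine ⟨fun σ => (X σ).image (fun x => (Equiv.swap a x).trans σ), ?_, ?_, ?_⟩
  · intro σ hσ hab σ' hσ'
    simp only [mem_filter, mem_univ, true_and] at hσ
    simp only [X, mem_image, mem_filter, mem_univ, true_and] at hσ' 
    obtain ⟨x, ⟨h1, h2⟩, rfl⟩ := hσ'
    replace hab : σ a = b := hab
    subst hab
    refine ⟨by simpa using C.swap_good hσ h1 h2, ?_⟩
    rintro ⟨u, w⟩ hg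
    simp only at hg ⊢
    by_cases hua : u = a
    · right; left; exact hua.symm
    by_cases hux : u = x
    · right; right; left
      subst hux
      simpa using hg
    · left
      rw [← hg]
      simp [Equiv.swap_apply_of_ne_of_ne hua hux]
  · intro σ hσ τ hτ hab hab' σ' h1 h2
    simp only [X, mem_image, mem_filter, mem_univ, true_and] at h1 h2
    obtain ⟨x, ⟨h1, h2⟩, rfl⟩ := h1
    obtain ⟨y, ⟨h3, h4⟩, h5⟩ := h2
    have hxy : x = y := by
      have e1 : ((Equiv.swap a x).trans σ) x = b := by simpa using hab
      have e2 : ((Equiv.swap a y).trans τ) y = b := by simpa using hab'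
      rw [h5] at e2
      exact ((Equiv.swap a x).trans σ).injective (e1.trans e2.symm)
    subst hxy
    ext u
    have := congrArg (fun f : α ≃ β => f ((Equiv.swap a x) u)) h5
    simpa using this.symm
  · intro σ hσ hab f hf
    simp only [mem_filter, mem_univ, true_and] at hσ
    replace hab : σ a = b := hab
    subst hab
    have hX : (C.nA a).card + (C.nB (σ a)).card ≤ (X σ).card + m := by
      have e1 : (C.nA a).card = (univ.filter (fun x => C.H a (σ x))).card := by
        have : C.nA a = (univ.filter (fun x => C.H a (σ x))).map σ.toEmbedding := by
          ext b
          simp only [nA, mem_filter, mem_univ, true_and, mem_map, Equiv.coe_toEmbedding]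
          constructor
          · intro h; exact ⟨σ.symm b, by simpa using h, by simp⟩
          · rintro ⟨x, h, rfl⟩; exact h
        rw [this, card_map]
      have e2 := card_union_add_card_inter (univ.filter (fun x => C.H a (σ x))) (C.nB (σ a))
      have e3 : (univ.filter (fun x => C.H a (σ x))) ∩ (C.nB (σ a)) = X σ := by
        ext x; simp [nB, X]
      have e4 : ((univ.filter (fun x => C.H a (σ x))) ∪ (C.nB (σ a))).card ≤ m := by
        cases hc : C.cA a with
        | true =>
          refine (card_le_card ?_).trans hm1
          intro x hx
          simp only [nB, mem_union, mem_filter, mem_univ, true_and] at hx ⊢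
          rcases hx with hx | hx
          · have h1 := C.Hcl _ _ hx
            rcases hσ.1 x with h | h
            · rw [C.Hcl _ _ h, ← h1, hc]
            · exact (C.F_cl h).1
          · rw [C.Hcl _ _ hx, ← C.Hcl _ _ he, hc]
        | false =>
          have : (univ.filter (fun x => C.cB (σ x) = false)).card ≤ m := by
            refine le_trans (le_of_eq ?_) hm2
            apply card_bij (fun x _ => σ x)
            · intro x hx; simpa using hx
            · intro x _ y _ h; exact σ.injective h
            · intro b hb; exact ⟨σ.symm b, by simpa using hb, by simp⟩
          refine (card_le_card ?_).trans this
          intro x hx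
          simp only [nB, mem_union, mem_filter, mem_univ, true_and] at hx ⊢
          rcases hx with hx | hx
          · rw [← C.Hcl _ _ hx, hc]
          · rcases hσ.1 x with h | h
            · rw [← C.Hcl _ _ h, C.Hcl _ _ hx, ← C.Hcl _ _ he, hc]
            · exact (C.F_cl h).2
      rw [e3] at e2
      omega
    have hfil : ((X σ).erase f.1).image (fun x => (Equiv.swap a x).trans σ) ⊆
        ((X σ).image (fun x => (Equiv.swap a x).trans σ)).filter
          (fun σ' => σ f.1 = f.2 → σ' f.1 = f.2) := by
      intro σ' h
      simp only [mem_image, mem_erase] at h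
      obtain ⟨x, ⟨hne, hx⟩, rfl⟩ := h
      rw [mem_filter]
      refine ⟨mem_image_of_mem _ hx, ?_⟩
      intro hff
      have hfa : f.1 ≠ a := by
        intro h
        apply hf
        ext
        · exact h
        · rw [← hff, h]
      simp [Equiv.swap_apply_of_ne_of_ne hfa hne.symm, hff]
    have hinj : (((X σ).erase f.1).image (fun x => (Equiv.swap a x).trans σ)).card =
        ((X σ).erase f.1).card := by
      apply card_image_of_injective
      intro x y hxy
      have := congrArg (fun f : α ≃ β => f.symm (σ a)) hxy
      simpa using this
    have h1 := card_le_card hfil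
    rw [hinj] at h1
    have h2 := pred_card_le_card_erase (s := X σ) (a := f.1)
    have h3 : (C.nA a).card + (C.nB (σ a)).card ≤ (((X σ).image (fun x => (Equiv.swap a x).trans σ)).filter
          (fun σ' => σ f.1 = f.2 → σ' f.1 = f.2)).card + m + 1 := by omega
    have h4 : ((C.nA a).card : ℝ) + ((C.nB (σ a)).card : ℝ) ≤ ((((X σ).image (fun x => (Equiv.swap a x).trans σ)).filter
          (fun σ' => σ f.1 = f.2 → σ' f.1 = f.2)).card : ℝ) + m + 1 := by exact_mod_cast h3
    refine hq.trans ?_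
    apply mul_le_mul_of_nonneg_left _ hq0
    linarith

end CoreData

namespace CoreData
variable {α β : Type*} {k t : ℕ} (C : CoreData α β k t)

/-- the rotation replacing the crossing edge `j` by `j'` in group `i` -/
noncomputable def rot (σ : α ≃ β) (i : Fin k) (j j' : Fin t) : α ≃ β :=
  ((Equiv.swap (C.xs i j) (C.xs i j')).trans
    (Equiv.swap (C.xs i j) (σ.symm (C.ys i j')))).trans σ

lemma rot_spec {σ : α ≃ β} (hσ : C.Good σ) {i : Fin k} {j j' : Fin t}
    (hj : σ (C.xs i j) = C.ys i j) (hjj : j' ≠ j) :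
    C.H (C.xs i j') (σ (C.xs i j')) ∧ C.H (σ.symm (C.ys i j')) (C.ys i j') ∧
    C.rot σ i j j' (C.xs i j) = σ (C.xs i j') ∧
    C.rot σ i j j' (C.xs i j') = C.ys i j' ∧
    C.rot σ i j j' (σ.symm (C.ys i j')) = C.ys i j ∧
    (∀ u, u ≠ C.xs i j → u ≠ C.xs i j' → u ≠ σ.symm (C.ys i j') → C.rot σ i j j' u = σ u) := by
  have huniq : ∀ j1, σ (C.xs i j1) = C.ys i j1 → j1 = j := fun j1 h => (hσ.2 i).unique h hj
  have hx : C.H (C.xs i j') (σ (C.xs i j')) := by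
    rcases hσ.1 (C.xs i j') with h | ⟨i1, j1, h1, h2⟩
    · exact h
    · obtain ⟨rfl, rfl⟩ := C.xinj _ _ _ _ h1
      exact absurd (huniq _ h2) hjj
  have hy : C.H (σ.symm (C.ys i j')) (C.ys i j') := by
    rcases hσ.1 (σ.symm (C.ys i j')) with h | ⟨i1, j1, h1, h2⟩
    · simpa using h
    · rw [Equiv.apply_symm_apply] at h2
      obtain ⟨rfl, rfl⟩ := C.yinj _ _ _ _ h2
      rw [Equiv.symm_apply_eq] at h1
      exact absurd (huniq _ h1.symm) hjj
  have hxx : C.xs i j' ≠ C.xs i j := fun h => hjj (C.xinj _ _ _ _ h).2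
  have hane : ∀ j1, σ.symm (C.ys i j') ≠ C.xs i j1 := by
    intro j1 h
    have h1 := C.Hcl _ _ hy
    rw [h, C.xcl, C.ycl] at h1
    simp at h1
  refine ⟨hx, hy, ?_, ?_, ?_, ?_⟩
  · simp [rot, Equiv.swap_apply_of_ne_of_ne hxx (hane j').symm]
  · simp [rot]
  · simp [rot, Equiv.swap_apply_of_ne_of_ne (hane j) (hane j'), hj]
  · intro u h1 h2 h3
    simp [rot, Equiv.swap_apply_of_ne_of_ne h1 h2, Equiv.swap_apply_of_ne_of_ne h1 h3]

lemma rot_group {σ : α ≃ β} (hσ : C.Good σ) {i : Fin k} {j j' : Fin t}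
    (hj : σ (C.xs i j) = C.ys i j) (hjj : j' ≠ j) (j1 : Fin t) :
    C.rot σ i j j' (C.xs i j1) = C.ys i j1 ↔ j1 = j' := by
  obtain ⟨hx, hy, r1, r2, r3, r4⟩ := C.rot_spec hσ hj hjj
  constructor
  · intro h
    by_contra hne
    by_cases h1 : j1 = j
    · subst h1
      rw [r1] at h
      rw [h] at hx
      have := C.Hcl _ _ hx
      rw [C.xcl, C.ycl] at this
      simp at this
    · rw [r4] at h
      · exact h1 ((hσ.2 i).unique h hj)
      · exact fun h => h1 (C.xinj _ _ _ _ h).2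
      · exact fun h => hne (C.xinj _ _ _ _ h).2
      · intro h2
        have := C.Hcl _ _ hy
        rw [← h2, C.xcl, C.ycl] at this
        simp at this
  · rintro rfl
    exact r2

lemma rot_good {σ : α ≃ β} (hσ : C.Good σ) {i : Fin k} {j j' : Fin t}
    (hj : σ (C.xs i j) = C.ys i j) (hjj : j' ≠ j) : C.Good (C.rot σ i j j') := by
  obtain ⟨hx, hy, r1, r2, r3, r4⟩ := C.rot_spec hσ hj hjj
  refine ⟨fun u => ?_, fun i1 => ?_⟩
  · by_cases h1 : u = C.xs i j
    · subst h1
      rw [r1]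
      exact Or.inl (C.Hx _ _ _ _ hx)
    by_cases h2 : u = C.xs i j'
    · subst h2
      rw [r2]
      exact Or.inr ⟨i, j', rfl, rfl⟩
    by_cases h3 : u = σ.symm (C.ys i j')
    · subst h3
      rw [r3]
      exact Or.inl (C.Hy _ _ _ _ hy)
    · rw [r4 u h1 h2 h3]
      exact hσ.1 u
  · by_cases hi : i1 = i
    · subst hi
      exact ⟨j', (C.rot_group hσ hj hjj j').2 rfl, fun j1 h => (C.rot_group hσ hj hjj j1).1 h⟩
    · have : ∀ j1, C.rot σ i j j' (C.xs i1 j1) = σ (C.xs i1 j1) := by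
        intro j1
        apply r4
        · exact fun h => hi (C.xinj _ _ _ _ h).1
        · exact fun h => hi (C.xinj _ _ _ _ h).1
        · intro h2
          have := C.Hcl _ _ hy
          rw [← h2, C.xcl, C.ycl] at this
          simp at this
      simp only [this]
      exact hσ.2 i1

lemma sw2 [Fintype α] [Fintype β] (q : α × β → ℝ)
    (i : Fin k) (j : Fin t) (hq0 : 0 ≤ q (C.xs i j, C.ys i j))
    (hq : 1 ≤ q (C.xs i j, C.ys i j) * ((t : ℝ) - 3)) :
    SwitchHyp (univ.filter (fun σ : α ≃ β => C.Good σ)) (fun σ e => σ e.1 = e.2) C.T q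
      (C.xs i j, C.ys i j) := by
  refine ⟨fun σ => (univ.erase j).image (fun j' => C.rot σ i j j'), ?_, ?_, ?_⟩
  · intro σ hσ hab σ' hσ'
    simp only [mem_filter, mem_univ, true_and] at hσ
    simp only [mem_image, mem_erase, mem_univ, and_true] at hσ'
    replace hab : σ (C.xs i j) = C.ys i j := hab
    obtain ⟨j', hjj, rfl⟩ := hσ'
    refine ⟨by simpa using C.rot_good hσ hab hjj, ?_⟩
    obtain ⟨hx, hy, r1, r2, r3, r4⟩ := C.rot_spec hσ hab hjj
    rintro ⟨u, w⟩ hg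
    simp only at hg ⊢
    by_cases h1 : u = C.xs i j
    · right; left; exact h1.symm
    by_cases h2 : u = C.xs i j'
    · right; right; right
      refine ⟨i, j, j', rfl, ?_⟩
      subst h2
      rw [r2] at hg
      rw [hg]
    by_cases h3 : u = σ.symm (C.ys i j')
    · right; right; left
      subst h3
      rw [r3] at hg
      exact hg
    · left
      rw [← hg, r4 u h1 h2 h3]
  · intro σ hσ τ hτ hab hab' σ' h1 h2
    simp only [mem_filter, mem_univ, true_and] at hσ hτ
    simp only [mem_image, mem_erase, mem_univ, and_true] at h1 h2
    replace hab : σ (C.xs i j) = C.ys i j := hab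
    replace hab' : τ (C.xs i j) = C.ys i j := hab'
    obtain ⟨j1, hj1, rfl⟩ := h1
    obtain ⟨j2, hj2, h5⟩ := h2
    have hj12 : j2 = j1 := by
      rw [← C.rot_group hσ hab hj1 j2, ← h5, C.rot_group hτ hab' hj2 j2]
    subst hj12
    obtain ⟨hx, hy, r1, r2, r3, r4⟩ := C.rot_spec hσ hab hj1
    obtain ⟨hx', hy', r1', r2', r3', r4'⟩ := C.rot_spec hτ hab' hj2
    have ha : σ.symm (C.ys i j2) = τ.symm (C.ys i j2) := by
      apply (C.rot σ i j j2).injective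
      rw [r3, ← h5, r3']
    unfold rot at h5
    rw [ha] at h5
    ext u
    have := congrArg (fun f : α ≃ β => f (((Equiv.swap (C.xs i j) (C.xs i j2)).trans
    (Equiv.swap (C.xs i j) (τ.symm (C.ys i j2)))).symm u)) h5
    simpa using this.symm
  · intro σ hσ hab f hf
    simp only [mem_filter, mem_univ, true_and] at hσ
    replace hab : σ (C.xs i j) = C.ys i j := hab
    let J := (univ.erase j).filter (fun j' => f.1 ≠ C.xs i j' ∧ f.2 ≠ C.ys i j')
    have hfil : J.image (fun j' => C.rot σ i j j') ⊆
        ((univ.erase j).image (fun j' => C.rot σ i j j')).filter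
          (fun σ' => σ f.1 = f.2 → σ' f.1 = f.2) := by
      intro σ' h
      simp only [J, mem_image, mem_filter] at h
      obtain ⟨j', ⟨hj', hn1, hn2⟩, rfl⟩ := h
      rw [mem_filter]
      refine ⟨mem_image_of_mem _ hj', ?_⟩
      intro hff
      obtain ⟨hx, hy, r1, r2, r3, r4⟩ := C.rot_spec hσ hab (mem_erase.1 hj').1
      rw [r4 _ _ hn1, hff]
      · intro h
        rw [h, Equiv.apply_symm_apply] at hff
        exact hn2 hff.symm
      · intro h
        apply hf
        ext
        · exact h
        · rw [← hff, h, hab]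
    have hinj : (J.image (fun j' => C.rot σ i j j')).card = J.card := by
      apply card_image_of_injOn
      intro x hx y hy hxy
      have h1 : x ≠ j := (mem_erase.1 (mem_filter.1 hx).1).1
      have h2 : y ≠ j := (mem_erase.1 (mem_filter.1 hy).1).1
      simp only at hxy
      rw [← C.rot_group hσ hab h2 x, ← hxy, C.rot_group hσ hab h1 x]
    have hJ : t ≤ J.card + 3 := by
      have hsub : (univ : Finset (Fin t)) ⊆ J ∪ ({j} ∪ ((univ.filter (fun j' => f.1 = C.xs i j')) ∪
          (univ.filter (fun j' => f.2 = C.ys i j')))) := by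
        intro x _
        simp only [J, mem_union, mem_filter, mem_erase, mem_univ, mem_singleton, true_and, and_true]
        tauto
      have h1 : (univ.filter (fun j' => f.1 = C.xs i j')).card ≤ 1 := by
        rw [card_le_one]
        intro x hx y hy
        simp only [mem_filter, mem_univ, true_and] at hx hy
        exact (C.xinj _ _ _ _ (hx.symm.trans hy)).2
      have h2 : (univ.filter (fun j' => f.2 = C.ys i j')).card ≤ 1 := by
        rw [card_le_one]
        intro x hx y hy
        simp only [mem_filter, mem_univ, true_and] at hx hy
        exact (C.yinj _ _ _ _ (hx.symm.trans hy)).2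
      have h3 := card_le_card hsub
      have h4 := card_union_le J ({j} ∪ ((univ.filter (fun j' => f.1 = C.xs i j')) ∪
          (univ.filter (fun j' => f.2 = C.ys i j'))))
      have h5 := card_union_le {j} ((univ.filter (fun j' => f.1 = C.xs i j')) ∪
          (univ.filter (fun j' => f.2 = C.ys i j')))
      have h6 := card_union_le (univ.filter (fun j' => f.1 = C.xs i j'))
          (univ.filter (fun j' => f.2 = C.ys i j'))
      simp only [card_univ, Fintype.card_fin, card_singleton] at h3 h5
      omega
    have h1 := card_le_card hfil
    rw [hinj] at h1
    have h4 : (t : ℝ) - 3 ≤ ((((univ.erase j).image (fun j' => C.rot σ i j j')).filter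
          (fun σ' => σ f.1 = f.2 → σ' f.1 = f.2)).card : ℝ) := by
      have : t ≤ (((univ.erase j).image (fun j' => C.rot σ i j j')).filter
          (fun σ' => σ f.1 = f.2 → σ' f.1 = f.2)).card + 3 := by omega
      have : (t : ℝ) ≤ ((((univ.erase j).image (fun j' => C.rot σ i j j')).filter
          (fun σ' => σ f.1 = f.2 → σ' f.1 = f.2)).card : ℝ) + 3 := by exact_mod_cast this
      linarith
    refine hq.trans ?_
    exact mul_le_mul_of_nonneg_left h4 hq0

end CoreData

lemma sum_union_le_add {ι : Type*} [DecidableEq ι] (s t : Finset ι) (f : ι → ℝ) (hf : ∀ x, 0 ≤ f x) :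
    ∑ x ∈ s ∪ t, f x ≤ ∑ x ∈ s, f x + ∑ x ∈ t, f x := by
  have := sum_union_inter (s₁ := s) (s₂ := t) (f := f)
  have h2 : 0 ≤ ∑ x ∈ s ∩ t, f x := sum_nonneg (fun x _ => hf x)
  linarith

namespace CoreData
variable {α β : Type*} {k : ℕ}

theorem core [Fintype α] [Fintype β] (C : CoreData α β k 1003) (χ : α → β → ℕ) (m : ℕ)
    (hm1 : (univ.filter (fun a => C.cA a = true)).card ≤ m)
    (hm2 : (univ.filter (fun b => C.cB b = false)).card ≤ m)
    (d0 : ℝ) (hd0 : 0 < d0)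
    (hdA : ∀ a, d0 ≤ ((C.nA a).card : ℝ)) (hdB : ∀ b, d0 ≤ ((C.nB b).card : ℝ))
    (hOre : ∀ a b, C.H a b → min ((C.nA a).card : ℝ) ((C.nB b).card : ℝ) / 2 ≤
      ((C.nA a).card : ℝ) + ((C.nB b).card : ℝ) - m - 1)
    (hQA : ∀ a, ∑ b ∈ C.nA a, 2 / min ((C.nA a).card : ℝ) ((C.nB b).card : ℝ) ≤ 7)
    (hQB : ∀ b, ∑ a ∈ C.nB b, 2 / min ((C.nA a).card : ℝ) ((C.nB b).card : ℝ) ≤ 7)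
    (hcol : ∀ c, ((univ.filter (fun e : α × β => C.H e.1 e.2 ∧ χ e.1 e.2 = c)).card : ℝ)
      * (2 / d0) ≤ 1 / 1000)
    (hrb : ∀ i j i' j', χ (C.xs i j) (C.ys i j) = χ (C.xs i' j') (C.ys i' j') → i = i' ∧ j = j')
    (hne : ∃ σ : α ≃ β, C.Good σ) :
    ∃ σ : α ≃ β, C.Good σ ∧ ∀ a a', χ a (σ a) = χ a' (σ a') → a = a' := by
  let q : α × β → ℝ := fun e =>
    if C.H e.1 e.2 then 2 / min ((C.nA e.1).card : ℝ) ((C.nB e.2).card : ℝ) else 1 / 1000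
  have hmin : ∀ a b, d0 ≤ min ((C.nA a).card : ℝ) ((C.nB b).card : ℝ) := fun a b =>
    le_min (hdA a) (hdB b)
  have hqH : ∀ e : α × β, C.H e.1 e.2 →
      q e = 2 / min ((C.nA e.1).card : ℝ) ((C.nB e.2).card : ℝ) := fun e h => if_pos h
  have hqF : ∀ e : α × β, C.F e.1 e.2 → q e = 1 / 1000 := fun e h => if_neg (C.not_H_of_F h)
  have hq : ∀ e, 0 ≤ q e := by
    intro e
    by_cases h : C.H e.1 e.2
    · rw [hqH e h]
      have := hmin e.1 e.2
      exact div_nonneg (by norm_num) (by linarith)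
    · simp only [q, if_neg h]; norm_num
  let U : α × β → Prop := fun e => C.H e.1 e.2 ∨ C.F e.1 e.2
  let K : Finset ((α × β) × (α × β)) := univ.filter (fun c =>
    c.1 ≠ c.2 ∧ U c.1 ∧ U c.2 ∧ χ c.1.1 c.1.2 = χ c.2.1 c.2.2)
  have hsw : ∀ e, U e →
      SwitchHyp (univ.filter (fun σ : α ≃ β => C.Good σ)) (fun σ e => σ e.1 = e.2) C.T q e := by
    rintro ⟨a, b⟩ (h | ⟨i, j, hi, hj⟩)
    · apply C.sw1 q m hm1 hm2 (a, b) h (hq _)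
      rw [hqH _ h]
      have h1 := hOre a b h
      have h2 := hmin a b
      have h3 : 0 < min ((C.nA a).card : ℝ) ((C.nB b).card : ℝ) := by linarith
      simp only
      calc (1:ℝ) = 2 / min ((C.nA a).card : ℝ) ((C.nB b).card : ℝ) *
            (min ((C.nA a).card : ℝ) ((C.nB b).card : ℝ) / 2) := by field_simp
        _ ≤ _ := by gcongr
    · simp only at hi hj
      subst hi hj
      apply C.sw2 q i j (hq _)
      rw [hqF _ ⟨i, j, rfl, rfl⟩]
      norm_num
  have hFset : ∀ s : Finset (α × β), (∀ e ∈ s, C.F e.1 e.2) → ∀ N : ℕ, s.card ≤ N →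
      ∑ e ∈ s, q e ≤ N * (1 / 1000) := by
    intro s hs N hN
    rw [sum_congr rfl (fun e he => hqF e (hs e he)), sum_const, nsmul_eq_mul]
    have : (s.card : ℝ) ≤ N := by exact_mod_cast hN
    gcongr
  have inner : ∀ c, ∑ h ∈ univ.filter (fun h : α × β => U h ∧ χ h.1 h.2 = c), q h ≤ 1 / 500 := by
    intro c
    have hsub : univ.filter (fun h : α × β => U h ∧ χ h.1 h.2 = c) ⊆
        univ.filter (fun h : α × β => C.H h.1 h.2 ∧ χ h.1 h.2 = c) ∪
        univ.filter (fun h : α × β => C.F h.1 h.2 ∧ χ h.1 h.2 = c) := by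
      intro h
      simp only [mem_union, mem_filter, mem_univ, true_and, U]
      tauto
    have h1 := sum_le_sum_of_subset_of_nonneg hsub (f := q) (fun x _ _ => hq x)
    have h2 := sum_union_le_add (univ.filter (fun h : α × β => C.H h.1 h.2 ∧ χ h.1 h.2 = c))
        (univ.filter (fun h : α × β => C.F h.1 h.2 ∧ χ h.1 h.2 = c)) q hq
    have h3 : ∑ h ∈ univ.filter (fun h : α × β => C.H h.1 h.2 ∧ χ h.1 h.2 = c), q h ≤ 1 / 1000 := by
      refine le_trans ?_ (hcol c)
      rw [← nsmul_eq_mul]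
      apply sum_le_card_nsmul
      intro e he
      simp only [mem_filter, mem_univ, true_and] at he
      rw [hqH e he.1]
      have := hmin e.1 e.2
      gcongr
    have h4 : ∑ h ∈ univ.filter (fun h : α × β => C.F h.1 h.2 ∧ χ h.1 h.2 = c), q h ≤
        ((1:ℕ):ℝ) * (1 / 1000) := by
      apply hFset
      · intro e he
        exact (mem_filter.1 he).2.1
      · rw [card_le_one]
        rintro ⟨a, b⟩ h1 ⟨a', b'⟩ h2
        simp only [mem_filter, mem_univ, true_and] at h1 h2
        obtain ⟨⟨i, j, rfl, rfl⟩, h1⟩ := h1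
        obtain ⟨⟨i', j', rfl, rfl⟩, h2⟩ := h2
        obtain ⟨rfl, rfl⟩ := hrb i j i' j' (h1.trans h2.symm)
        rfl
    norm_num at h4
    linarith
  have outer : ∀ e, ∑ g ∈ univ.filter (fun g : α × β => U g ∧ C.T e g), q g ≤ 17 := by
    rintro ⟨a, b⟩
    let s1 := univ.filter (fun g : α × β => C.H g.1 g.2 ∧ g.1 = a)
    let s2 := univ.filter (fun g : α × β => C.H g.1 g.2 ∧ g.2 = b)
    let s3 := univ.filter (fun g : α × β => C.F g.1 g.2 ∧ g.1 = a)
    let s4 := univ.filter (fun g : α × β => C.F g.1 g.2 ∧ g.2 = b)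
    let s5 := univ.filter (fun g : α × β => ∃ i j j', (a, b) = (C.xs i j, C.ys i j) ∧
      g = (C.xs i j', C.ys i j'))
    have hsub : univ.filter (fun g : α × β => U g ∧ C.T (a, b) g) ⊆
        s1 ∪ (s2 ∪ (s3 ∪ (s4 ∪ s5))) := by
      intro g hg
      replace hg := (mem_filter.1 hg).2
      simp only [U, T] at hg
      obtain ⟨h1, h2⟩ := hg
      simp only [mem_union, s1, s2, s3, s4, s5, mem_filter, mem_univ, true_and]
      rcases h2 with h2 | h2 | h2
      · rcases h1 with h1 | h1
        · exact Or.inl ⟨h1, h2.symm⟩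
        · exact Or.inr (Or.inr (Or.inl ⟨h1, h2.symm⟩))
      · rcases h1 with h1 | h1
        · exact Or.inr (Or.inl ⟨h1, h2.symm⟩)
        · exact Or.inr (Or.inr (Or.inr (Or.inl ⟨h1, h2.symm⟩)))
      · exact Or.inr (Or.inr (Or.inr (Or.inr h2)))
    have h0 := sum_le_sum_of_subset_of_nonneg hsub (f := q) (fun x _ _ => hq x)
    have u1 := sum_union_le_add s1 (s2 ∪ (s3 ∪ (s4 ∪ s5))) q hq
    have u2 := sum_union_le_add s2 (s3 ∪ (s4 ∪ s5)) q hq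
    have u3 := sum_union_le_add s3 (s4 ∪ s5) q hq
    have u4 := sum_union_le_add s4 s5 q hq
    have b1 : ∑ g ∈ s1, q g ≤ 7 := by
      refine le_trans (le_of_eq ?_) (hQA a)
      symm
      apply sum_bij (fun b _ => (a, b))
      · intro b hb
        simpa [s1, nA] using hb
      · intro b _ b' _ h
        exact (Prod.ext_iff.1 h).2
      · rintro ⟨a', b'⟩ hg
        simp only [s1, mem_filter, mem_univ, true_and] at hg
        obtain ⟨h1, rfl⟩ := hg
        exact ⟨b', by simpa [nA] using h1, rfl⟩
      · intro b hb
        rw [hqH]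
        simpa [nA] using hb
    have b2 : ∑ g ∈ s2, q g ≤ 7 := by
      refine le_trans (le_of_eq ?_) (hQB b)
      symm
      apply sum_bij (fun a _ => (a, b))
      · intro b hb
        simpa [s2, nB] using hb
      · intro b _ b' _ h
        exact (Prod.ext_iff.1 h).1
      · rintro ⟨a', b'⟩ hg
        simp only [s2, mem_filter, mem_univ, true_and] at hg
        obtain ⟨h1, rfl⟩ := hg
        exact ⟨a', by simpa [nB] using h1, rfl⟩
      · intro b hb
        rw [hqH]
        simpa [nB] using hb
    have b3 : ∑ g ∈ s3, q g ≤ ((1:ℕ):ℝ) * (1 / 1000) := by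
      apply hFset
      · intro e he
        exact (mem_filter.1 he).2.1
      · rw [card_le_one]
        rintro ⟨a1, b1⟩ h1 ⟨a2, b2⟩ h2
        simp only [s3, mem_filter, mem_univ, true_and] at h1 h2
        obtain ⟨⟨i, j, rfl, rfl⟩, h1⟩ := h1
        obtain ⟨⟨i', j', rfl, rfl⟩, h2⟩ := h2
        obtain ⟨rfl, rfl⟩ := C.xinj i j i' j' (h1.trans h2.symm)
        rfl
    have b4 : ∑ g ∈ s4, q g ≤ ((1:ℕ):ℝ) * (1 / 1000) := by
      apply hFset
      · intro e he
        exact (mem_filter.1 he).2.1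
      · rw [card_le_one]
        rintro ⟨a1, b1⟩ h1 ⟨a2, b2⟩ h2
        simp only [s4, mem_filter, mem_univ, true_and] at h1 h2
        obtain ⟨⟨i, j, rfl, rfl⟩, h1⟩ := h1
        obtain ⟨⟨i', j', rfl, rfl⟩, h2⟩ := h2
        obtain ⟨rfl, rfl⟩ := C.yinj i j i' j' (h1.trans h2.symm)
        rfl
    have b5 : ∑ g ∈ s5, q g ≤ ((1003:ℕ):ℝ) * (1 / 1000) := by
      apply hFset
      · intro e he
        obtain ⟨i, j, j', h1, h2⟩ := (mem_filter.1 he).2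
        rw [h2]
        exact ⟨i, j', rfl, rfl⟩
      · by_cases hex : ∃ i j, (a, b) = (C.xs i j, C.ys i j)
        · obtain ⟨i, j, hij⟩ := hex
          have : s5 ⊆ univ.image (fun j' => (C.xs i j', C.ys i j')) := by
            intro g hg
            obtain ⟨i1, j1, j', h1, h2⟩ := (mem_filter.1 hg).2
            rw [hij] at h1
            obtain ⟨rfl, rfl⟩ := C.xinj _ _ _ _ (Prod.ext_iff.1 h1).1
            rw [h2]
            exact mem_image_of_mem _ (mem_univ _)
          refine (card_le_card this).trans (card_image_le.trans ?_)
          simp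
        · have : s5 = ∅ := by
            apply filter_false_of_mem
            rintro g _ ⟨i, j, j', h1, h2⟩
            exact hex ⟨i, j, h1⟩
          rw [this]
          simp
    norm_num at b3 b4 b5
    linarith
  have four : ∀ e, ∑ s ∈ K.filter (fun s => C.T e s.1), q s.1 * q s.2 ≤ 17 / 500 := by
    intro e
    have hsub : K.filter (fun s => C.T e s.1) ⊆
        ((univ.filter (fun g : α × β => U g ∧ C.T e g)).sigma
          (fun g => univ.filter (fun h : α × β => U h ∧ χ h.1 h.2 = χ g.1 g.2))).image
          (fun x => (x.1, x.2)) := by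
      rintro ⟨g, h⟩ hs
      simp only [K, mem_filter, mem_univ, true_and] at hs
      simp only [mem_image, mem_sigma, mem_filter, mem_univ, true_and]
      exact ⟨⟨g, h⟩, ⟨⟨hs.1.2.1, hs.2⟩, hs.1.2.2.1, hs.1.2.2.2.symm⟩, rfl⟩
    have h0 := sum_le_sum_of_subset_of_nonneg hsub (f := fun s => q s.1 * q s.2)
      (fun x _ _ => mul_nonneg (hq _) (hq _))
    refine h0.trans ?_
    rw [sum_image, sum_sigma]
    · calc _ ≤ ∑ g ∈ univ.filter (fun g : α × β => U g ∧ C.T e g), q g * (1 / 500) := by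
            apply sum_le_sum
            intro g _
            simp only
            rw [← mul_sum]
            exact mul_le_mul_of_nonneg_left (inner _) (hq g)
        _ = (∑ g ∈ univ.filter (fun g : α × β => U g ∧ C.T e g), q g) * (1 / 500) := by
            rw [sum_mul]
        _ ≤ 17 * (1 / 500) := by
            have := outer e
            gcongr
        _ = _ := by norm_num
    · rintro ⟨g, h⟩ _ ⟨g', h'⟩ _ hh
      simp only [Prod.mk.injEq] at hh
      obtain ⟨rfl, rfl⟩ := hh
      rfl
  have four' : ∀ e, ∑ s ∈ K.filter (fun s => C.T e s.2), q s.1 * q s.2 ≤ 17 / 500 := by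
    intro e
    refine le_trans (le_of_eq ?_) (four e)
    apply sum_bij (fun s _ => (s.2, s.1))
    · rintro ⟨g, h⟩ hs
      simp only [K, mem_filter, mem_univ, true_and] at hs ⊢
      exact ⟨⟨hs.1.1.symm, hs.1.2.2.1, hs.1.2.1, hs.1.2.2.2.symm⟩, hs.2⟩
    · rintro ⟨g, h⟩ _ ⟨g', h'⟩ _ hh
      simp only [Prod.mk.injEq] at hh
      simp [hh.1, hh.2]
    · rintro ⟨g, h⟩ hs
      simp only [K, mem_filter, mem_univ, true_and] at hs
      refine ⟨(h, g), ?_, rfl⟩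
      simp only [K, mem_filter, mem_univ, true_and]
      exact ⟨⟨hs.1.1.symm, hs.1.2.2.1, hs.1.2.1, hs.1.2.2.2.symm⟩, hs.2⟩
    · rintro ⟨g, h⟩ _
      simp only
      ring
  obtain ⟨σ, hσ, hav⟩ := lll (univ.filter (fun σ : α ≃ β => C.Good σ))
    (by obtain ⟨σ, h⟩ := hne; exact ⟨σ, by simpa using h⟩)
    (fun σ e => σ e.1 = e.2) C.T (fun e => Or.inl rfl) q hq K
    (by
      intro c hc
      simp only [K, mem_filter, mem_univ, true_and] at hc
      exact ⟨hc.1, hsw _ hc.2.1, hsw _ hc.2.2.1⟩)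
    (by
      intro c hc
      have hsub : K.filter (fun s => C.T c.1 s.1 ∨ C.T c.1 s.2 ∨ C.T c.2 s.1 ∨ C.T c.2 s.2) ⊆
          K.filter (fun s => C.T c.1 s.1) ∪ (K.filter (fun s => C.T c.1 s.2) ∪
          (K.filter (fun s => C.T c.2 s.1) ∪ K.filter (fun s => C.T c.2 s.2))) := by
        intro s
        simp only [mem_union, mem_filter]
        tauto
      have hqq : ∀ s : (α × β) × (α × β), 0 ≤ q s.1 * q s.2 := fun s => mul_nonneg (hq _) (hq _)
      have h0 := sum_le_sum_of_subset_of_nonneg hsub (f := fun s => q s.1 * q s.2)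
        (fun x _ _ => hqq x)
      have u1 := sum_union_le_add (K.filter (fun s => C.T c.1 s.1)) (K.filter (fun s => C.T c.1 s.2) ∪
          (K.filter (fun s => C.T c.2 s.1) ∪ K.filter (fun s => C.T c.2 s.2))) _ hqq
      have u2 := sum_union_le_add (K.filter (fun s => C.T c.1 s.2))
          (K.filter (fun s => C.T c.2 s.1) ∪ K.filter (fun s => C.T c.2 s.2)) _ hqq
      have u3 := sum_union_le_add (K.filter (fun s => C.T c.2 s.1))
          (K.filter (fun s => C.T c.2 s.2)) _ hqq
      have f1 := four c.1
      have f2 := four' c.1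
      have f3 := four c.2
      have f4 := four' c.2
      refine le_trans ?_ (show (17:ℝ)/500 + (17/500 + (17/500+17/500)) ≤ 1/4 by norm_num)
      linarith)
  simp only [mem_filter, mem_univ, true_and] at hσ
  refine ⟨σ, hσ, ?_⟩
  intro a a' haa
  by_contra hne
  refine hav ((a, σ a), (a', σ a')) ?_ ⟨rfl, rfl⟩
  simp only [K, mem_filter, mem_univ, true_and]
  exact ⟨fun h => hne (Prod.ext_iff.1 h).1, hσ.1 a, hσ.1 a', haa⟩

end CoreData

lemma hall_sub {α β : Type*} (P : Finset α) (Q : Finset β) (hPQ : P.card = Q.card)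
    (H : α → β → Prop) (D : ℕ) 
    (h1 : ∀ a ∈ P, D ≤ (Q.filter (fun b => H a b)).card)
    (h2 : ∀ b ∈ Q, D ≤ (P.filter (fun a => H a b)).card)
    (Sp : Finset α) (hSp : Sp.card ≤ D)
    (h3 : ∀ a ∈ P, a ∉ Sp → Q.card < (Q.filter (fun b => H a b)).card + D)
    (S : Finset α) (hS : S ⊆ P) :
    S.card ≤ (Q.filter (fun b => ∃ a ∈ S, H a b)).card := by
  have hmono : ∀ a ∈ S, (Q.filter (fun b => H a b)).card ≤ (Q.filter (fun b => ∃ a ∈ S, H a b)).card := by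
    intro a ha
    apply card_le_card
    intro b hb
    rw [mem_filter] at hb ⊢
    exact ⟨hb.1, a, ha, hb.2⟩
  by_cases hD : S.card ≤ D
  · rcases S.eq_empty_or_nonempty with rfl | ⟨a, ha⟩
    · simp
    · exact hD.trans ((h1 a (hS ha)).trans (hmono a ha))
  · push Not at hD
    obtain ⟨a, ha, haS⟩ := exists_mem_notMem_of_card_lt_card (lt_of_le_of_lt hSp hD)
    have h4 := h3 a (hS ha) haS
    have h5 := hmono a ha
    by_cases hc : Q.filter (fun b => ∃ a ∈ S, H a b) = Q
    · rw [hc, ← hPQ]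
      exact card_le_card hS
    · have : ∃ b ∈ Q, ∀ a ∈ S, ¬ H a b := by
        by_contra hcon
        push Not at hcon
        exact hc (filter_true_of_mem hcon)
      obtain ⟨b, hb, hbS⟩ := this
      have h6 := h2 b hb
      have h7 : P.filter (fun a => H a b) ⊆ P \ S := by
        intro a ha
        rw [mem_filter] at ha
        rw [mem_sdiff]
        exact ⟨ha.1, fun h => hbS a h ha.2⟩
      have h8 := card_le_card h7
      rw [card_sdiff_of_subset hS] at h8
      have := card_le_card hS
      omega

namespace CoreData
variable {α β : Type*} {k t : ℕ}

theorem exists_good [Fintype α] [Fintype β] (C : CoreData α β k t) (j0 : Fin t)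
    (hc1 : (univ.filter (fun a => C.cA a = true)).card = (univ.filter (fun b => C.cB b = true)).card + k)
    (hc2 : (univ.filter (fun a => C.cA a = false)).card + k = (univ.filter (fun b => C.cB b = false)).card)
    (D : ℕ) (hdA : ∀ a, D + k ≤ (C.nA a).card) (hdB : ∀ b, D + k ≤ (C.nB b).card)
    (Sp : Finset α) (hSp : Sp.card ≤ D)
    (hns : ∀ a, a ∉ Sp → (univ.filter (fun b => C.cB b = C.cA a)).card < (C.nA a).card + D) :
    ∃ σ : α ≃ β, C.Good σ := by
  let X0 : Finset α := univ.image (fun i => C.xs i j0)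
  let Y0 : Finset β := univ.image (fun i => C.ys i j0)
  have hX0 : X0.card = k := by
    rw [card_image_of_injective]
    · simp
    · intro i i' h; exact (C.xinj _ _ _ _ h).1
  have hY0 : Y0.card = k := by
    rw [card_image_of_injective]
    · simp
    · intro i i' h; exact (C.yinj _ _ _ _ h).1
  have hX0c : ∀ a ∈ X0, C.cA a = true := by
    intro a ha
    obtain ⟨i, _, rfl⟩ := mem_image.1 ha
    exact C.xcl _ _
  have hY0c : ∀ b ∈ Y0, C.cB b = false := by
    intro a ha
    obtain ⟨i, _, rfl⟩ := mem_image.1 ha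
    exact C.ycl _ _
  let A1 := univ.filter (fun a => C.cA a = true)
  let A2 := univ.filter (fun a => C.cA a = false)
  let B1 := univ.filter (fun b => C.cB b = true)
  let B2 := univ.filter (fun b => C.cB b = false)
  have hXA : X0 ⊆ A1 := fun a ha => by simpa [A1] using hX0c a ha
  have hYB : Y0 ⊆ B2 := fun a ha => by simpa [B2] using hY0c a ha
  have nAsub : ∀ a c, C.cA a = c → C.nA a ⊆ univ.filter (fun b => C.cB b = c) := by
    intro a c hc b hb
    simp only [nA, mem_filter, mem_univ, true_and] at hb ⊢
    rw [← C.Hcl _ _ hb, hc]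
  have nBsub : ∀ b c, C.cB b = c → C.nB b ⊆ univ.filter (fun a => C.cA a = c) := by
    intro b c hc a ha
    simp only [nB, mem_filter, mem_univ, true_and] at ha ⊢
    rw [C.Hcl _ _ ha, hc]
  have S1 := hall_sub (A1 \ X0) B1 (by
      rw [card_sdiff_of_subset hXA, hX0]
      change A1.card = B1.card + k at hc1
      omega) C.H D
    (by
      intro a ha
      have ha' : C.cA a = true := by simpa [A1] using (mem_sdiff.1 ha).1
      have : C.nA a ⊆ B1.filter (fun b => C.H a b) := by
        intro b hb
        exact mem_filter.2 ⟨nAsub a _ ha' hb, (mem_filter.1 hb).2⟩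
      have := card_le_card this
      have := hdA a
      omega)
    (by
      intro b hb
      have hb' : C.cB b = true := by simpa [B1] using hb
      have : C.nB b \ X0 ⊆ (A1 \ X0).filter (fun a => C.H a b) := by
        intro a ha
        rw [mem_sdiff] at ha
        exact mem_filter.2 ⟨mem_sdiff.2 ⟨nBsub b _ hb' ha.1, ha.2⟩, (mem_filter.1 ha.1).2⟩
      have := card_le_card this
      have := le_card_sdiff X0 (C.nB b)
      have := hdB b
      omega)
    Sp hSp
    (by
      intro a ha haS
      have ha' : C.cA a = true := by simpa [A1] using (mem_sdiff.1 ha).1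
      have : C.nA a ⊆ B1.filter (fun b => C.H a b) := by
        intro b hb
        exact mem_filter.2 ⟨nAsub a _ ha' hb, (mem_filter.1 hb).2⟩
      have := card_le_card this
      have := hns a haS
      rw [ha'] at this
      change B1.card < _ at this
      omega)
  have S2 := hall_sub A2 (B2 \ Y0) (by
      rw [card_sdiff_of_subset hYB, hY0]
      change A2.card + k = B2.card at hc2
      omega) C.H D
    (by
      intro a ha
      have ha' : C.cA a = false := by simpa [A2] using ha
      have : C.nA a \ Y0 ⊆ (B2 \ Y0).filter (fun b => C.H a b) := by
        intro b hb
        rw [mem_sdiff] at hb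
        exact mem_filter.2 ⟨mem_sdiff.2 ⟨nAsub a _ ha' hb.1, hb.2⟩, (mem_filter.1 hb.1).2⟩
      have := card_le_card this
      have := le_card_sdiff Y0 (C.nA a)
      have := hdA a
      omega)
    (by
      intro b hb
      have hb' : C.cB b = false := by simpa [B2] using (mem_sdiff.1 hb).1
      have : C.nB b ⊆ A2.filter (fun a => C.H a b) := by
        intro a ha
        exact mem_filter.2 ⟨nBsub b _ hb' ha, (mem_filter.1 ha).2⟩
      have := card_le_card this
      have := hdB b
      omega)
    Sp hSp
    (by
      intro a ha haS
      have ha' : C.cA a = false := by simpa [A2] using ha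
      have h1 : C.nA a \ Y0 ⊆ (B2 \ Y0).filter (fun b => C.H a b) := by
        intro b hb
        rw [mem_sdiff] at hb
        exact mem_filter.2 ⟨mem_sdiff.2 ⟨nAsub a _ ha' hb.1, hb.2⟩, (mem_filter.1 hb.1).2⟩
      have := card_le_card h1
      have := le_card_sdiff Y0 (C.nA a)
      have h2 := hns a haS
      rw [ha'] at h2
      change B2.card < _ at h2
      have := card_sdiff_of_subset hYB
      have := card_le_card hYB
      omega)
  let r : α → β → Prop := fun a b => (∃ i, a = C.xs i j0 ∧ b = C.ys i j0) ∨
    (a ∉ X0 ∧ b ∉ Y0 ∧ C.H a b)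
  have hall : ∀ S : Finset α, S.card ≤ (univ.filter (fun b => ∃ a ∈ S, r a b)).card := by
    intro S
    let T0 := S ∩ X0
    let T1 := S ∩ (A1 \ X0)
    let T2 := S ∩ A2
    have hTS : S ⊆ T0 ∪ (T1 ∪ T2) := by
      intro a ha
      simp only [T0, T1, T2, A1, A2, mem_union, mem_inter, mem_sdiff, mem_filter, mem_univ, true_and]
      have : C.cA a = true ∨ C.cA a = false := by cases C.cA a <;> simp
      tauto
    have hcS := (card_le_card hTS).trans ((card_union_le _ _).trans
      (Nat.add_le_add_left (card_union_le _ _) _))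
    let N0 := (univ.filter (fun i => C.xs i j0 ∈ S)).image (fun i => C.ys i j0)
    let N1 := B1.filter (fun b => ∃ a ∈ T1, C.H a b)
    let N2 := (B2 \ Y0).filter (fun b => ∃ a ∈ T2, C.H a b)
    have hN0 : T0.card ≤ N0.card := by
      rw [card_image_of_injective _ (fun i i' h => (C.yinj _ _ _ _ h).1)]
      have : T0 ⊆ (univ.filter (fun i => C.xs i j0 ∈ S)).image (fun i => C.xs i j0) := by
        intro a ha
        obtain ⟨h1, h2⟩ := mem_inter.1 ha
        obtain ⟨i, _, rfl⟩ := mem_image.1 h2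
        exact mem_image.2 ⟨i, by simpa using h1, rfl⟩
      exact (card_le_card this).trans card_image_le
    have hN1 : T1.card ≤ N1.card := S1 T1 inter_subset_right
    have hN2 : T2.card ≤ N2.card := S2 T2 inter_subset_right
    have hN0Y : N0 ⊆ Y0 := by
      intro b hb
      obtain ⟨i, _, rfl⟩ := mem_image.1 hb
      exact mem_image.2 ⟨i, mem_univ _, rfl⟩
    have d12 : Disjoint N1 N2 := by
      rw [Finset.disjoint_left]
      intro b h1 h2
      have h3 := (mem_filter.1 (mem_filter.1 h1).1).2
      have h4 := (mem_filter.1 (mem_sdiff.1 (mem_filter.1 h2).1).1).2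
      rw [h3] at h4; simp at h4
    have d0 : Disjoint N0 (N1 ∪ N2) := by
      rw [Finset.disjoint_left]
      intro b h1 h2
      have h5 := hN0Y h1
      rcases mem_union.1 h2 with h2 | h2
      · have h3 := (mem_filter.1 (mem_filter.1 h2).1).2
        have h4 := hY0c b h5
        rw [h3] at h4; simp at h4
      · exact (mem_sdiff.1 (mem_filter.1 h2).1).2 h5
    have hsub : N0 ∪ (N1 ∪ N2) ⊆ univ.filter (fun b => ∃ a ∈ S, r a b) := by
      intro b hb
      simp only [mem_filter, mem_univ, true_and]
      rcases mem_union.1 hb with hb | hb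
      · obtain ⟨i, hi, rfl⟩ := mem_image.1 hb
        exact ⟨C.xs i j0, (mem_filter.1 hi).2, Or.inl ⟨i, rfl, rfl⟩⟩
      rcases mem_union.1 hb with hb | hb
      · obtain ⟨h1, a, ha, hab⟩ := mem_filter.1 hb
        obtain ⟨ha1, ha2⟩ := mem_inter.1 ha
        refine ⟨a, ha1, Or.inr ⟨(mem_sdiff.1 ha2).2, fun h => ?_, hab⟩⟩
        have h3 := (mem_filter.1 h1).2
        have h4 := hY0c b h
        rw [h3] at h4; simp at h4
      · obtain ⟨h1, a, ha, hab⟩ := mem_filter.1 hb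
        obtain ⟨ha1, ha2⟩ := mem_inter.1 ha
        refine ⟨a, ha1, Or.inr ⟨fun h => ?_, (mem_sdiff.1 h1).2, hab⟩⟩
        have h3 := (mem_filter.1 ha2).2
        have h4 := hX0c a h
        rw [h3] at h4; simp at h4
    have h9 := card_le_card hsub
    rw [card_union_of_disjoint d0, card_union_of_disjoint d12] at h9
    omega
  obtain ⟨f, hf, hr⟩ := (Fintype.all_card_le_filter_rel_iff_exists_injective r).1
    (by intro S; convert hall S)
  have hcard : Fintype.card α = Fintype.card β := by
    have e1 := card_filter_add_card_filter_not (s := (univ : Finset α)) (fun a => C.cA a = true)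
    have e2 := card_filter_add_card_filter_not (s := (univ : Finset β)) (fun a => C.cB a = true)
    simp only [Bool.not_eq_true] at e1 e2
    rw [card_univ] at e1 e2
    omega
  have hbij : Function.Bijective f := (Fintype.bijective_iff_injective_and_card f).2 ⟨hf, hcard⟩
  refine ⟨Equiv.ofBijective f hbij, fun a => ?_, fun i => ⟨j0, ?_, ?_⟩⟩
  · rcases hr a with ⟨i, h1, h2⟩ | ⟨h1, h2, h3⟩
    · exact Or.inr ⟨i, j0, h1, h2⟩
    · exact Or.inl h3
  · rcases hr (C.xs i j0) with ⟨i', h1, h2⟩ | ⟨h1, h2, h3⟩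
    · obtain ⟨rfl, -⟩ := C.xinj _ _ _ _ h1
      exact h2
    · exact absurd (mem_image.2 ⟨i, mem_univ _, rfl⟩) h1
  · intro j hj
    simp only [Equiv.ofBijective_apply] at hj
    rcases hr (C.xs i j) with ⟨i', h1, h2⟩ | ⟨h1, h2, h3⟩
    · exact (C.xinj _ _ _ _ h1).2
    · rw [hj] at h3
      exact absurd h3 (C.not_H_of_F ⟨i, j, rfl, rfl⟩)

end CoreData

/-- number of elements satisfying a predicate -/
noncomputable def cnt {γ : Type} [Fintype γ] (P : γ → Prop) : ℕ :=
  (@Finset.filter γ P (fun _ => propDecidable _) univ).card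

lemma cnt_eq {γ : Type} [Fintype γ] (P : γ → Prop) [DecidablePred P] :
    cnt P = (univ.filter P).card := by
  unfold cnt
  congr!

lemma hQ_aux {γ : Type} {N : ℝ} (hNp : 0 < N) (u : ℝ) (s S : Finset γ) (f : γ → ℝ) (hus : u = s.card)
    (hu1 : 40 * (N / 10 ^ 6) ≤ u) (hu2 : u ≤ N / 2 + N / 10 ^ 6) (hS : (S.card : ℝ) ≤ N / 10 ^ 6)
    (hf1 : ∀ b ∈ s, 40 * (N / 10 ^ 6) ≤ f b)
    (hf2 : ∀ b ∈ s, b ∉ S → N / 2 - 4 * (N / 10 ^ 6) ≤ f b) :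
    ∑ b ∈ s, 2 / min u (f b) ≤ 7 := by
  have hup : 0 < u := by linarith [show 0 < N / 10 ^ 6 by positivity]
  have hterm : ∀ b ∈ s, 2 / min u (f b) ≤ 3 / u + if b ∈ S then 2 / (40 * (N / 10 ^ 6)) else 0 := by
    intro b hb
    by_cases hbS : b ∈ S
    · rw [if_pos hbS]
      have h1 : 2 / min u (f b) ≤ 2 / (40 * (N / 10 ^ 6)) := by
        apply div_le_div_of_nonneg_left (by norm_num) (by positivity) (le_min hu1 (hf1 b hb))
      have : 0 ≤ 3 / u := by positivity
      linarith
    · rw [if_neg hbS, add_zero]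
      have h1 : u * (2 / 3) ≤ min u (f b) := by
        apply le_min
        · linarith
        · linarith [hf2 b hb hbS]
      calc 2 / min u (f b) ≤ 2 / (u * (2 / 3)) :=
            div_le_div_of_nonneg_left (by norm_num) (by positivity) h1
        _ = 3 / u := by field_simp
  refine (sum_le_sum hterm).trans ?_
  rw [sum_add_distrib, sum_const, nsmul_eq_mul, ← hus, mul_div_cancel₀ _ hup.ne', sum_ite,
    sum_const_zero, add_zero, sum_const, nsmul_eq_mul]
  have h2 : ((s.filter (fun b => b ∈ S)).card : ℝ) ≤ N / 10 ^ 6 := by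
    refine le_trans ?_ hS
    norm_cast
    apply card_le_card
    intro b hb
    exact (mem_filter.1 hb).2
  have h3 : ((s.filter (fun b => b ∈ S)).card : ℝ) * (2 / (40 * (N / 10 ^ 6))) ≤
    (N / 10 ^ 6) * (2 / (40 * (N / 10 ^ 6))) := mul_le_mul_of_nonneg_right h2 (by positivity)
  have h4 : (N / 10 ^ 6) * (2 / (40 * (N / 10 ^ 6))) = 1 / 20 := by
    field_simp; norm_num
  linarith

set_option maxHeartbeats 2000000 in
/-- From structural data to a rainbow perfect matching. -/
theorem assemble {α β : Type} [Fintype α] [Fintype β] {k : ℕ} (N : ℝ) (hN : 10 ^ 9 ≤ N)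
    (E : α → β → Prop) (χ : α → β → ℕ) (cA : α → Bool) (cB : β → Bool)
    (SA : Finset α) (SB : Finset β) (xs : Fin k → Fin 1003 → α) (ys : Fin k → Fin 1003 → β)
    (hA : ∀ c, N / 2 - N / 10 ^ 6 ≤ (cnt (fun a => cA a = c) : ℝ) ∧
      (cnt (fun a => cA a = c) : ℝ) ≤ N / 2 + N / 10 ^ 6)
    (hB : ∀ c, N / 2 - N / 10 ^ 6 ≤ (cnt (fun b => cB b = c) : ℝ) ∧
      (cnt (fun b => cB b = c) : ℝ) ≤ N / 2 + N / 10 ^ 6)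
    (hc1 : (cnt (fun a => cA a = true)) = (cnt (fun b => cB b = true)) + k)
    (hc2 : (cnt (fun a => cA a = false)) + k = (cnt (fun b => cB b = false)))
    (hSA : (SA.card : ℝ) ≤ N / 10 ^ 6) (hSB : (SB.card : ℝ) ≤ N / 10 ^ 6)
    (hnsA : ∀ a, a ∉ SA → (cnt (fun b => cB b = cA a ∧ ¬ E a b) : ℝ) ≤ 2 * (N / 10 ^ 6))
    (hnsB : ∀ b, b ∉ SB → (cnt (fun a => cA a = cB b ∧ ¬ E a b) : ℝ) ≤ 2 * (N / 10 ^ 6))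
    (hspA : ∀ a ∈ SA, 45 * (N / 10 ^ 6) ≤ (cnt (fun b => cB b = cA a ∧ E a b) : ℝ))
    (hspB : ∀ b ∈ SB, 45 * (N / 10 ^ 6) ≤ (cnt (fun a => cA a = cB b ∧ E a b) : ℝ))
    (xinj : ∀ i j i' j', xs i j = xs i' j' → i = i' ∧ j = j')
    (yinj : ∀ i j i' j', ys i j = ys i' j' → i = i' ∧ j = j')
    (xcl : ∀ i j, cA (xs i j) = true) (ycl : ∀ i j, cB (ys i j) = false)
    (hxS : ∀ i j, xs i j ∈ SA) (hyS : ∀ i j, ys i j ∈ SB)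
    (hE : ∀ i j, E (xs i j) (ys i j))
    (hxd : ∀ i j, (cnt (fun b => cB b = true ∧ ¬ E (xs i j) b) : ℝ) ≤ 100 * (N / 10 ^ 6))
    (hyd : ∀ i j, (cnt (fun a => cA a = false ∧ ¬ E a (ys i j)) : ℝ) ≤ 100 * (N / 10 ^ 6))
    (hrb : ∀ i j i' j', χ (xs i j) (ys i j) = χ (xs i' j') (ys i' j') → i = i' ∧ j = j')
    (hcol : ∀ c, (cnt (fun e : α × β => E e.1 e.2 ∧ χ e.1 e.2 = c) : ℝ) ≤ N / 10 ^ 9) :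
    ∃ σ : α ≃ β, (∀ a, E a (σ a)) ∧ ∀ a a', χ a (σ a) = χ a' (σ a') → a = a' := by
  simp only [cnt_eq] at hA hB hc1 hc2 hnsA hnsB hspA hspB hxd hyd hcol
  let H : α → β → Prop := fun a b => cA a = cB b ∧ E a b ∧ ¬ (a ∈ SA ∧ b ∈ SB) ∧
    (∀ i j j', a = xs i j → E (xs i j') b) ∧ (∀ i j j', b = ys i j → E a (ys i j'))
  let C : CoreData α β k 1003 :=
    { cA := cA, cB := cB, H := H, xs := xs, ys := ys, xinj := xinj, yinj := yinj
      xcl := xcl, ycl := ycl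
      Hcl := fun a b h => h.1
      Hx := by
        rintro i j j' b ⟨h1, h2, h3, h4, h5⟩
        have hb : b ∉ SB := fun hb => h3 ⟨hxS _ _, hb⟩
        refine ⟨by rw [xcl, ← h1, xcl], h4 i j j' rfl, fun h => hb h.2, ?_, ?_⟩
        · intro i2 j2 j3 h
          obtain ⟨rfl, rfl⟩ := xinj _ _ _ _ h
          exact h4 _ _ _ rfl
        · intro i2 j2 j3 h
          exact absurd (h ▸ hyS _ _) hb
      Hy := by
        rintro i j j' a ⟨h1, h2, h3, h4, h5⟩
        have ha : a ∉ SA := fun ha => h3 ⟨ha, hyS _ _⟩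
        refine ⟨by rw [ycl, h1, ycl], h5 i j j' rfl, fun h => ha h.1, ?_, ?_⟩
        · intro i2 j2 j3 h
          exact absurd (h ▸ hxS _ _) ha
        · intro i2 j2 j3 h
          obtain ⟨rfl, rfl⟩ := yinj _ _ _ _ h
          exact h5 _ _ _ rfl }
  have memA : ∀ a b, b ∈ C.nA a ↔ H a b := by
    intro a b; simp [CoreData.nA, C]
  have memB : ∀ b a, a ∈ C.nB b ↔ H a b := by
    intro a b; simp [CoreData.nB, C]
  -- upper degree bounds
  have upA : ∀ a, ((C.nA a).card : ℝ) ≤ N / 2 + N / 10 ^ 6 := by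
    intro a
    refine le_trans ?_ (hB (cA a)).2
    norm_cast
    apply card_le_card
    intro b hb
    have := (memA a b).1 hb
    simp [this.1]
  have upB : ∀ b, ((C.nB b).card : ℝ) ≤ N / 2 + N / 10 ^ 6 := by
    intro b
    refine le_trans ?_ (hA (cB b)).2
    norm_cast
    apply card_le_card
    intro a ha
    have := (memB b a).1 ha
    simp [this.1]
  -- non-special vertices
  have nsA : ∀ a, a ∉ SA → ((univ.filter (fun b => cB b = cA a)).card : ℝ) ≤
      (C.nA a).card + 3 * (N / 10 ^ 6) := by
    intro a ha
    have h1 : univ.filter (fun b => cB b = cA a) ⊆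
        C.nA a ∪ (SB ∪ univ.filter (fun b => cB b = cA a ∧ ¬ E a b)) := by
      intro b hb
      simp only [mem_filter, mem_univ, true_and] at hb
      simp only [mem_union, mem_filter, mem_univ, true_and, memA]
      by_cases h2 : b ∈ SB
      · exact Or.inr (Or.inl h2)
      by_cases h3 : E a b
      · refine Or.inl ⟨hb.symm, h3, fun h => h2 h.2, ?_, ?_⟩
        · rintro i j j' rfl
          exact absurd (hxS _ _) ha
        · rintro i j j' rfl
          exact absurd (hyS _ _) h2
      · exact Or.inr (Or.inr ⟨hb, h3⟩)
    have h2 := (card_le_card h1).trans ((card_union_le _ _).trans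
      (Nat.add_le_add_left (card_union_le _ _) _))
    have h3 : ((univ.filter (fun b => cB b = cA a)).card : ℝ) ≤ (C.nA a).card + (SB.card +
      (univ.filter (fun b => cB b = cA a ∧ ¬ E a b)).card) := by exact_mod_cast h2
    linarith [hnsA a ha]
  have nsB : ∀ b, b ∉ SB → ((univ.filter (fun a => cA a = cB b)).card : ℝ) ≤
      (C.nB b).card + 3 * (N / 10 ^ 6) := by
    intro b hbS
    have h1 : univ.filter (fun a => cA a = cB b) ⊆
        C.nB b ∪ (SA ∪ univ.filter (fun a => cA a = cB b ∧ ¬ E a b)) := by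
      intro a hb
      simp only [mem_filter, mem_univ, true_and] at hb
      simp only [mem_union, mem_filter, mem_univ, true_and, memB]
      by_cases h2 : a ∈ SA
      · exact Or.inr (Or.inl h2)
      by_cases h3 : E a b
      · refine Or.inl ⟨hb, h3, fun h => h2 h.1, ?_, ?_⟩
        · rintro i j j' rfl
          exact absurd (hxS _ _) h2
        · rintro i j j' rfl
          exact absurd (hyS _ _) hbS
      · exact Or.inr (Or.inr ⟨hb, h3⟩)
    have h2 := (card_le_card h1).trans ((card_union_le _ _).trans
      (Nat.add_le_add_left (card_union_le _ _) _))
    have h3 : ((univ.filter (fun a => cA a = cB b)).card : ℝ) ≤ (C.nB b).card + (SA.card +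
      (univ.filter (fun a => cA a = cB b ∧ ¬ E a b)).card) := by exact_mod_cast h2
    linarith [hnsB b hbS]
  have nsA' : ∀ a, a ∉ SA → N / 2 - 4 * (N / 10 ^ 6) ≤ (C.nA a).card := by
    intro a ha
    linarith [nsA a ha, (hB (cA a)).1]
  have nsB' : ∀ b, b ∉ SB → N / 2 - 4 * (N / 10 ^ 6) ≤ (C.nB b).card := by
    intro a ha
    linarith [nsB a ha, (hA (cB a)).1]
  have dA : ∀ a, 40 * (N / 10 ^ 6) ≤ ((C.nA a).card : ℝ) := by
    intro a
    by_cases ha : a ∈ SA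
    swap
    · linarith [nsA' a ha]
    by_cases hx : ∃ i j, a = xs i j
    · obtain ⟨i, j, rfl⟩ := hx
      have h1 : univ.filter (fun b => cB b = true) ⊆
        C.nA (xs i j) ∪ (SB ∪ univ.biUnion
          (fun j' => univ.filter (fun b => cB b = true ∧ ¬ E (xs i j') b))) := by
        intro b hb
        simp only [mem_filter, mem_univ, true_and] at hb
        simp only [mem_union, mem_biUnion, mem_filter, mem_univ, true_and, memA]
        by_cases h2 : b ∈ SB
        · exact Or.inr (Or.inl h2)
        by_cases h3 : ∀ j', E (xs i j') b
        · refine Or.inl ⟨by rw [hb, xcl], h3 _, fun h => h2 h.2, ?_, ?_⟩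
          · intro i' j' j'' h
            obtain ⟨rfl, rfl⟩ := xinj _ _ _ _ h
            exact h3 _
          · rintro i j j' rfl
            exact absurd (hyS _ _) h2
        · push Not at h3
          obtain ⟨j', h3⟩ := h3
          exact Or.inr (Or.inr ⟨j', hb, h3⟩)
      have h2 := (card_le_card h1).trans ((card_union_le _ _).trans
        (Nat.add_le_add_left ((card_union_le _ _).trans
          (Nat.add_le_add_left card_biUnion_le _)) _))
      have h3 : ((univ.filter (fun b => cB b = true)).card : ℝ) ≤ (C.nA (xs i j)).card + (SB.card +
        ∑ j', ((univ.filter (fun b => cB b = true ∧ ¬ E (xs i j') b)).card : ℝ)) := by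
        exact_mod_cast h2
      have h4 : ∑ j', ((univ.filter (fun b => cB b = true ∧ ¬ E (xs i j') b)).card : ℝ) ≤
          ∑ j' : Fin 1003, 100 * (N / 10 ^ 6) := sum_le_sum (fun j' _ => hxd i j')
      simp only [sum_const, card_univ, Fintype.card_fin, nsmul_eq_mul] at h4
      push_cast at h4
      linarith [(hB true).1]
    · have h1 : univ.filter (fun b => cB b = cA a ∧ E a b) ⊆ C.nA a ∪ SB := by
        intro b hb
        simp only [mem_filter, mem_univ, true_and] at hb
        simp only [mem_union, memA]
        by_cases h2 : b ∈ SB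
        · exact Or.inr h2
        refine Or.inl ⟨hb.1.symm, hb.2, fun h => h2 h.2, ?_, ?_⟩
        · rintro i j j' rfl
          exact absurd ⟨_, _, rfl⟩ hx
        · rintro i j j' rfl
          exact absurd (hyS _ _) h2
      have h2 := (card_le_card h1).trans (card_union_le _ _)
      have h3 : ((univ.filter (fun b => cB b = cA a ∧ E a b)).card : ℝ) ≤ (C.nA a).card + SB.card := by
        exact_mod_cast h2
      linarith [hspA a ha]
  have dB : ∀ b, 40 * (N / 10 ^ 6) ≤ ((C.nB b).card : ℝ) := by
    intro b
    by_cases hbS : b ∈ SB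
    swap
    · linarith [nsB' b hbS]
    by_cases hx : ∃ i j, b = ys i j
    · obtain ⟨i, j, rfl⟩ := hx
      have h1 : univ.filter (fun a => cA a = false) ⊆
        C.nB (ys i j) ∪ (SA ∪ univ.biUnion
          (fun j' => univ.filter (fun a => cA a = false ∧ ¬ E a (ys i j')))) := by
        intro a ha
        simp only [mem_filter, mem_univ, true_and] at ha
        simp only [mem_union, mem_biUnion, mem_filter, mem_univ, true_and, memB]
        by_cases h2 : a ∈ SA
        · exact Or.inr (Or.inl h2)
        by_cases h3 : ∀ j', E a (ys i j')
        · refine Or.inl ⟨by rw [ha, ycl], h3 _, fun h => h2 h.1, ?_, ?_⟩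
          · rintro i j j' rfl
            exact absurd (hxS _ _) h2
          · intro i' j' j'' h
            obtain ⟨rfl, rfl⟩ := yinj _ _ _ _ h
            exact h3 _
        · push Not at h3
          obtain ⟨j', h3⟩ := h3
          exact Or.inr (Or.inr ⟨j', ha, h3⟩)
      have h2 := (card_le_card h1).trans ((card_union_le _ _).trans
        (Nat.add_le_add_left ((card_union_le _ _).trans
          (Nat.add_le_add_left card_biUnion_le _)) _))
      have h3 : ((univ.filter (fun a => cA a = false)).card : ℝ) ≤ (C.nB (ys i j)).card + (SA.card +
        ∑ j', ((univ.filter (fun a => cA a = false ∧ ¬ E a (ys i j'))).card : ℝ)) := by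
        exact_mod_cast h2
      have h4 : ∑ j', ((univ.filter (fun a => cA a = false ∧ ¬ E a (ys i j'))).card : ℝ) ≤
          ∑ j' : Fin 1003, 100 * (N / 10 ^ 6) := sum_le_sum (fun j' _ => hyd i j')
      simp only [sum_const, card_univ, Fintype.card_fin, nsmul_eq_mul] at h4
      push_cast at h4
      linarith [(hA false).1]
    · have h1 : univ.filter (fun a => cA a = cB b ∧ E a b) ⊆ C.nB b ∪ SA := by
        intro a ha
        simp only [mem_filter, mem_univ, true_and] at ha
        simp only [mem_union, memB]
        by_cases h2 : a ∈ SA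
        · exact Or.inr h2
        refine Or.inl ⟨ha.1, ha.2, fun h => h2 h.1, ?_, ?_⟩
        · rintro i j j' rfl
          exact absurd (hxS _ _) h2
        · rintro i j j' rfl
          exact absurd ⟨_, _, rfl⟩ hx
      have h2 := (card_le_card h1).trans (card_union_le _ _)
      have h3 : ((univ.filter (fun a => cA a = cB b ∧ E a b)).card : ℝ) ≤ (C.nB b).card + SA.card := by
        exact_mod_cast h2
      linarith [hspB b hbS]
  have hNp : 0 < N := by linarith
  -- the size of k
  have hk : (k : ℝ) ≤ N / 10 ^ 6 := by
    refine le_trans ?_ hSA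
    have : (univ.image (fun i => xs i 0)).card = k := by
      rw [card_image_of_injective]
      · simp
      · intro i i' h; exact (xinj _ _ _ _ h).1
    rw [← this]
    norm_cast
    apply card_le_card
    intro a ha
    obtain ⟨i, _, rfl⟩ := mem_image.1 ha
    exact hxS _ _
  have hne : ∃ σ : α ≃ β, C.Good σ := by
    have hD1 := Nat.floor_le (show 0 ≤ 20 * (N / 10 ^ 6) by positivity)
    have hD2 := Nat.lt_floor_add_one (20 * (N / 10 ^ 6))
    refine C.exists_good 0 hc1 hc2 ⌊20 * (N / 10 ^ 6)⌋₊ ?_ ?_ SA ?_ ?_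
    · intro a
      have : ((⌊20 * (N / 10 ^ 6)⌋₊ : ℝ) + k) ≤ (C.nA a).card := by linarith [dA a]
      exact_mod_cast this
    · intro a
      have : ((⌊20 * (N / 10 ^ 6)⌋₊ : ℝ) + k) ≤ (C.nB a).card := by linarith [dB a]
      exact_mod_cast this
    · have : (SA.card : ℝ) ≤ ⌊20 * (N / 10 ^ 6)⌋₊ := by linarith
      exact_mod_cast this
    · intro a ha
      have h := nsA a ha
      have : ((univ.filter (fun b => cB b = cA a)).card : ℝ) <
        (C.nA a).card + ⌊20 * (N / 10 ^ 6)⌋₊ := by linarith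
      exact_mod_cast this
  obtain ⟨m, hm1, hm2, hm⟩ : ∃ m : ℕ, (univ.filter (fun a => cA a = true)).card ≤ m ∧
      (univ.filter (fun b => cB b = false)).card ≤ m ∧ (m : ℝ) ≤ N / 2 + N / 10 ^ 6 := by
    refine ⟨_, le_max_left _ _, le_max_right _ _, ?_⟩
    push_cast
    exact max_le (hA true).2 (hB false).2
  have nspec : ∀ a b, H a b → a ∉ SA ∨ b ∉ SB := by
    intro a b h
    by_contra h'
    push Not at h'
    exact h.2.2.1 h'
  obtain ⟨σ, h1, h2⟩ := C.core χ m hm1 hm2 (40 * (N / 10 ^ 6)) (by positivity) dA dB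
    (by
      intro a b h
      have a1 := dA a
      have a2 := dB b
      have b1 := min_le_left ((C.nA a).card : ℝ) ((C.nB b).card : ℝ)
      have b2 := min_le_right ((C.nA a).card : ℝ) ((C.nB b).card : ℝ)
      rcases nspec a b h with h | h
      · have := nsA' a h
        linarith
      · have := nsB' b h
        linarith)
    (by
      intro a
      exact hQ_aux hNp _ (C.nA a) SB (fun b => ((C.nB b).card : ℝ)) rfl (dA a) (upA a) hSB
        (fun b _ => dB b) (fun b _ hb => nsB' b hb))
    (by
      intro b
      simp only [min_comm (((C.nA _).card : ℝ))]
      exact hQ_aux hNp _ (C.nB b) SA (fun a => ((C.nA a).card : ℝ)) rfl (dB b) (upB b) hSA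
        (fun b _ => dA b) (fun b _ hb => nsA' b hb))
    (by
      intro c
      have h1 : ((univ.filter (fun e : α × β => C.H e.1 e.2 ∧ χ e.1 e.2 = c)).card : ℝ) ≤ N / 10 ^ 9 := by
        refine le_trans ?_ (hcol c)
        norm_cast
        apply card_le_card
        intro e he
        simp only [mem_filter, mem_univ, true_and] at he ⊢
        exact ⟨he.1.2.1, he.2⟩
      have h2 := mul_le_mul_of_nonneg_right h1 (show 0 ≤ 2 / (40 * (N / 10 ^ 6)) by positivity)
      have h3 : N / 10 ^ 9 * (2 / (40 * (N / 10 ^ 6))) = 1 / 20000 := by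
        field_simp; norm_num
      have h4 := h2.trans (show N / 10 ^ 9 * (2 / (40 * (N / 10 ^ 6))) ≤ 1 / 1000 by
        rw [h3]; norm_num)
      first | linarith | (convert h4; rfl))
    hrb hne
  refine ⟨σ, fun a => ?_, h2⟩
  rcases h1.1 a with h | ⟨i, j, h, h'⟩
  · exact h.2.1
  · rw [h', h]; exact hE i j

lemma cls_change {γ : Type} [Fintype γ] (f g : γ → Bool) (S : Finset γ) (h : ∀ x, x ∉ S → f x = g x)
    (c : Bool) (P : γ → Prop) :
    (cnt (fun x => f x = c ∧ P x) : ℝ) ≤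
      (cnt (fun x => g x = c ∧ P x)) + S.card := by
  simp only [cnt_eq]
  norm_cast
  refine (card_le_card ?_).trans (card_union_le _ _)
  intro x hx
  simp only [mem_filter, mem_univ, true_and, mem_union] at hx ⊢
  by_cases hS : x ∈ S
  · exact Or.inr hS
  · exact Or.inl ⟨by rw [← h x hS]; exact hx.1, hx.2⟩

lemma cls_change' {γ : Type} [Fintype γ] (f g : γ → Bool) (S : Finset γ) (h : ∀ x, x ∉ S → f x = g x)
    (c : Bool) :
    (cnt (fun x => f x = c) : ℝ) ≤
      (cnt (fun x => g x = c)) + S.card := by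
  have := cls_change f g S h c (fun _ => True)
  simpa using this

lemma deg_split {γ : Type} [Fintype γ] (f : γ → Bool) (P : γ → Prop) (c : Bool) :
    (cnt (fun x => P x) : ℝ) ≤
      (cnt (fun x => f x = c ∧ P x)) + (cnt (fun x => f x = !c)) := by
  simp only [cnt_eq]
  norm_cast
  refine (card_le_card ?_).trans (card_union_le _ _)
  intro x hx
  simp only [mem_filter, mem_univ, true_and, mem_union] at hx ⊢
  by_cases hS : f x = c
  · exact Or.inl ⟨hS, hx⟩
  · right
    cases c <;> simpa using hS

lemma cls_split {γ : Type} [Fintype γ] (f : γ → Bool) (P : γ → Prop) (c : Bool) :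
    (cnt (fun x => f x = c) : ℝ) =
      (cnt (fun x => f x = c ∧ P x)) + (cnt (fun x => f x = c ∧ ¬ P x)) := by
  simp only [cnt_eq]
  have := card_filter_add_card_filter_not (s := univ.filter (fun x => f x = c)) P
  rw [filter_filter, filter_filter] at this
  exact_mod_cast this.symm

lemma cls_compl {γ : Type} [Fintype γ] (f : γ → Bool) (c : Bool) :
    (cnt (fun x => f x = c)) + (cnt (fun x => f x = !c)) = Fintype.card γ := by
  simp only [cnt_eq]
  have := card_filter_add_card_filter_not (s := (univ : Finset γ)) (fun x => f x = c)
  rw [← card_univ, ← this]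
  congr 2
  ext x
  cases c <;> simp

/-- greedy rainbow matching -/
lemma greedy {α β : Type} (χ : α → β → ℕ) (Ed : Finset (α × β)) (K : ℝ)
    (hK : ∀ e ∈ Ed, ((Ed.filter (fun f => f.1 = e.1 ∨ f.2 = e.2 ∨
      χ f.1 f.2 = χ e.1 e.2)).card : ℝ) ≤ K) (hK0 : 0 ≤ K) (s : ℕ) (hs : s * K < Ed.card) :
    ∃ S ⊆ Ed, S.card = s ∧ ∀ e ∈ S, ∀ f ∈ S,
      (f.1 = e.1 ∨ f.2 = e.2 ∨ χ f.1 f.2 = χ e.1 e.2) → f = e := by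
  induction s with
  | zero => exact ⟨∅, by simp, by simp, by simp⟩
  | succ s ih =>
    push_cast at hs
    obtain ⟨S, hS, hc, hp⟩ := ih (by linarith)
    let Fb := S.biUnion (fun e => Ed.filter (fun f => f.1 = e.1 ∨ f.2 = e.2 ∨
      χ f.1 f.2 = χ e.1 e.2))
    have h1 : (Fb.card : ℝ) ≤ s * K := by
      have : (Fb.card : ℝ) ≤ ∑ e ∈ S, ((Ed.filter (fun f => f.1 = e.1 ∨ f.2 = e.2 ∨
        χ f.1 f.2 = χ e.1 e.2)).card : ℝ) := by
        have := card_biUnion_le (s := S) (t := fun e => Ed.filter (fun f => f.1 = e.1 ∨ f.2 = e.2 ∨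
          χ f.1 f.2 = χ e.1 e.2))
        exact_mod_cast this
      refine this.trans ((sum_le_sum (fun e he => hK e (hS he))).trans ?_)
      rw [sum_const, hc, nsmul_eq_mul]
    have h2 : ∃ g ∈ Ed, g ∉ Fb := by
      by_contra h
      push Not at h
      have h3 := card_le_card (show Ed ⊆ Fb from h)
      have h4 : (Ed.card : ℝ) ≤ Fb.card := by exact_mod_cast h3
      linarith
    obtain ⟨g, hg, hgF⟩ := h2
    have hgn : ∀ e ∈ S, ¬ (g.1 = e.1 ∨ g.2 = e.2 ∨ χ g.1 g.2 = χ e.1 e.2) := by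
      intro e he h
      exact hgF (mem_biUnion.2 ⟨e, he, mem_filter.2 ⟨hg, h⟩⟩)
    have hgS : g ∉ S := fun h => hgn g h (Or.inl rfl)
    refine ⟨insert g S, insert_subset hg hS, by rw [card_insert_of_notMem hgS, hc], ?_⟩
    intro e he f hf h
    rw [mem_insert] at he hf
    rcases he with rfl | he <;> rcases hf with rfl | hf
    · rfl
    · exact absurd (h.imp Eq.symm (Or.imp Eq.symm Eq.symm)) (hgn f hf)
    · exact absurd h (hgn e he)
    · exact hp e he f hf h

lemma edge_count {α β : Type} [Fintype α] [Fintype β] (p : α → Prop) (P : α → β → Prop) (r : ℝ)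
    (h : ∀ a, p a → r ≤ (cnt (fun b => P a b) : ℝ)) :
    (cnt (fun a => p a) : ℝ) * r ≤
      (cnt (fun e : α × β => p e.1 ∧ P e.1 e.2) : ℝ) := by
  simp only [cnt_eq] at h ⊢
  have h1 := card_eq_sum_card_fiberwise (f := Prod.fst)
    (s := univ.filter (fun e : α × β => p e.1 ∧ P e.1 e.2))
    (t := univ.filter (fun a => p a)) (by
      intro e he
      simp only [coe_filter, mem_univ, true_and, Set.mem_ofPred_eq] at he ⊢
      exact he.1)
  rw [h1]
  push_cast
  rw [← nsmul_eq_mul]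
  apply card_nsmul_le_sum
  intro a ha
  have ha' : p a := (mem_filter.1 ha).2
  refine (h a ha').trans ?_
  norm_cast
  apply card_le_card_of_injOn (fun b => (a, b))
  · intro b hb
    simp only [coe_filter, mem_filter, mem_univ, true_and, Set.mem_ofPred_eq] at hb ⊢
    exact ⟨⟨ha', hb⟩, trivial⟩
  · intro b _ b' _ h
    exact (Prod.mk.inj h).2

lemma edge_count' {α β : Type} [Fintype α] [Fintype β] (p : β → Prop) (P : α → β → Prop) (r : ℝ)
    (h : ∀ b, p b → r ≤ (cnt (fun a => P a b) : ℝ)) :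
    (cnt (fun b => p b) : ℝ) * r ≤
      (cnt (fun e : α × β => p e.2 ∧ P e.1 e.2) : ℝ) := by
  refine (edge_count p (fun b a => P a b) r h).trans ?_
  simp only [cnt_eq]
  norm_cast
  apply card_le_card_of_injOn Prod.swap
  · intro b hb
    simpa using hb
  · exact Prod.swap_injective.injOn

/-- crossing rainbow matching -/
lemma crossing {α β : Type} [Fintype α] [Fintype β] {k : ℕ} (N : ℝ) (hN : 10 ^ 9 ≤ N)
    (E : α → β → Prop) (χ : α → β → ℕ) (cA : α → Bool) (cB : β → Bool)
    (hNA : (Fintype.card α : ℝ) = N)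
    (hA : ∀ c, N / 2 - N / 10 ^ 6 ≤ (cnt (fun a => cA a = c) : ℝ) ∧
      (cnt (fun a => cA a = c) : ℝ) ≤ N / 2 + N / 10 ^ 6)
    (hB : ∀ c, N / 2 - N / 10 ^ 6 ≤ (cnt (fun b => cB b = c) : ℝ) ∧
      (cnt (fun b => cB b = c) : ℝ) ≤ N / 2 + N / 10 ^ 6)
    (hc1 : (cnt (fun a => cA a = true)) = (cnt (fun b => cB b = true)) + k)
    (degA : ∀ a, N / 2 ≤ (cnt (fun b => E a b) : ℝ))
    (degB : ∀ b, N / 2 ≤ (cnt (fun a => E a b) : ℝ))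
    (hxA : 0 < k → ∀ a, cA a = true →
      (cnt (fun b => cB b = false ∧ E a b) : ℝ) ≤ 60 * (N / 10 ^ 6))
    (hxB : 0 < k → ∀ b, cB b = false →
      (cnt (fun a => cA a = true ∧ E a b) : ℝ) ≤ 60 * (N / 10 ^ 6))
    (hcol : ∀ c, (cnt (fun e : α × β => E e.1 e.2 ∧ χ e.1 e.2 = c) : ℝ) ≤ N / 10 ^ 9) :
    ∃ (xs : Fin k → Fin 1003 → α) (ys : Fin k → Fin 1003 → β),
      (∀ i j i' j', xs i j = xs i' j' → i = i' ∧ j = j') ∧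
      (∀ i j i' j', ys i j = ys i' j' → i = i' ∧ j = j') ∧
      (∀ i j, cA (xs i j) = true) ∧ (∀ i j, cB (ys i j) = false) ∧
      (∀ i j, E (xs i j) (ys i j)) ∧
      (∀ i j i' j', χ (xs i j) (ys i j) = χ (xs i' j') (ys i' j') → i = i' ∧ j = j') := by
  rcases Nat.eq_zero_or_pos k with rfl | hk
  · exact ⟨fun i => i.elim0, fun i => i.elim0, fun i => i.elim0, fun i => i.elim0, fun i => i.elim0,
      fun i => i.elim0, fun i => i.elim0, fun i => i.elim0⟩
  have hNp : 0 < N := by linarith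
  have hk1 : (1 : ℝ) ≤ k := by exact_mod_cast hk
  let Ed := univ.filter (fun e : α × β => cA e.1 = true ∧ cB e.2 = false ∧ E e.1 e.2)
  have hcount : 0.24 * N * k ≤ Ed.card := by
    have e1 := edge_count (fun a => cA a = true) (fun a b => cB b = false ∧ E a b)
      (N / 2 - (cnt (fun b => cB b = true))) (by
        intro a _
        have := deg_split cB (fun b => E a b) false
        have := degA a
        simp only [Bool.not_false] at *
        linarith)
    have e2 := edge_count' (fun b => cB b = false) (fun a b => cA a = true ∧ E a b)
      (N / 2 - (cnt (fun a => cA a = false))) (by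
        intro a _
        have := deg_split cA (fun b => E b a) true
        have := degB a
        simp only [Bool.not_true] at *
        linarith)
    have e3 : (cnt (fun e : α × β => cB e.2 = false ∧ cA e.1 = true ∧ E e.1 e.2) : ℝ)
        = Ed.card := by
      rw [cnt_eq]
      congr 2
      ext e
      simp only [Ed, mem_filter, mem_univ, true_and]
      tauto
    have e4 : (cnt (fun e : α × β => cA e.1 = true ∧ cB e.2 = false ∧ E e.1 e.2) : ℝ)
        = Ed.card := by
      rw [cnt_eq]
    rw [e3] at e2
    rw [e4] at e1
    have c1 : (cnt (fun a => cA a = true) : ℝ) =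
      (cnt (fun b => cB b = true)) + k := by exact_mod_cast hc1
    have c2 : (cnt (fun a => cA a = true) : ℝ) +
      (cnt (fun a => cA a = false)) = N := by
      rw [← hNA]
      exact_mod_cast cls_compl cA true
    have s1 := (hA true).1
    have s2 := (hB false).1
    have hor : (k : ℝ) / 2 ≤ N / 2 - (cnt (fun b => cB b = true)) ∨
      (k : ℝ) / 2 ≤ N / 2 - (cnt (fun a => cA a = false)) := by
      by_contra h
      push Not at h
      linarith [h.1, h.2]
    rcases hor with h | h
    · refine le_trans ?_ e1
      have : (0.48 * N) * (k / 2) ≤ (cnt (fun a => cA a = true) : ℝ) *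
          (N / 2 - (cnt (fun b => cB b = true))) :=
        mul_le_mul (by linarith) h (by positivity) (by positivity)
      linarith
    · refine le_trans ?_ e2
      have : (0.48 * N) * (k / 2) ≤ (cnt (fun b => cB b = false) : ℝ) *
          (N / 2 - (cnt (fun a => cA a = false))) :=
        mul_le_mul (by linarith) h (by positivity) (by positivity)
      linarith
  obtain ⟨S, hS, hSc, hSp⟩ := greedy χ Ed (130 * (N / 10 ^ 6)) (by
      intro e he
      simp only [Ed, mem_filter, mem_univ, true_and] at he
      have f1 : (Ed.filter (fun f => f.1 = e.1 ∨ f.2 = e.2 ∨ χ f.1 f.2 = χ e.1 e.2)) ⊆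
        ((univ.filter (fun b => cB b = false ∧ E e.1 b)).image (fun b => (e.1, b))) ∪
        (((univ.filter (fun a => cA a = true ∧ E a e.2)).image (fun a => (a, e.2))) ∪
        univ.filter (fun f : α × β => E f.1 f.2 ∧ χ f.1 f.2 = χ e.1 e.2)) := by
        rintro ⟨x, y⟩ hf
        simp only [Ed, mem_filter, mem_univ, true_and] at hf
        obtain ⟨⟨h1, h2, h3⟩, h4⟩ := hf
        simp only [mem_union, mem_image, mem_filter, mem_univ, true_and]
        rcases h4 with rfl | rfl | h4
        · exact Or.inl ⟨y, ⟨h2, h3⟩, rfl⟩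
        · exact Or.inr (Or.inl ⟨x, ⟨h1, h3⟩, rfl⟩)
        · exact Or.inr (Or.inr ⟨h3, h4⟩)
      have f2 := (card_le_card f1).trans ((card_union_le _ _).trans (add_le_add card_image_le
        ((card_union_le _ _).trans (add_le_add card_image_le le_rfl))))
      have f3 : ((Ed.filter (fun f => f.1 = e.1 ∨ f.2 = e.2 ∨ χ f.1 f.2 = χ e.1 e.2)).card : ℝ) ≤
        (cnt (fun b => cB b = false ∧ E e.1 b)) +
        ((cnt (fun a => cA a = true ∧ E a e.2)) +
        (cnt (fun f : α × β => E f.1 f.2 ∧ χ f.1 f.2 = χ e.1 e.2))) := by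
        simp only [cnt_eq]
        exact_mod_cast f2
      linarith [hxA hk e.1 he.1, hxB hk e.2 he.2.1, hcol (χ e.1 e.2)])
    (by positivity) (k * 1003) (by
      refine lt_of_lt_of_le ?_ hcount
      have : 0 < N * k := by positivity
      push_cast
      linarith)
  let φ : Fin k × Fin 1003 ≃ S := finProdFinEquiv.trans
    ((finCongr hSc.symm).trans S.equivFin.symm)
  have hφ : ∀ i j, ((φ (i, j)).1 : α × β) ∈ Ed := fun i j => hS (φ (i, j)).2
  have inj : ∀ i j i' j', (φ (i, j)).1 = (φ (i', j')).1 → i = i' ∧ j = j' := by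
    intro i j i' j' h
    have := φ.injective (Subtype.ext h)
    exact Prod.mk.inj this
  refine ⟨fun i j => (φ (i, j)).1.1, fun i j => (φ (i, j)).1.2, ?_, ?_, ?_, ?_, ?_, ?_⟩
  · intro i j i' j' h
    exact inj _ _ _ _ (hSp _ (φ (i', j')).2 _ (φ (i, j)).2 (Or.inl h))
  · intro i j i' j' h
    exact inj _ _ _ _ (hSp _ (φ (i', j')).2 _ (φ (i, j)).2 (Or.inr (Or.inl h)))
  · intro i j
    exact (mem_filter.1 (hφ i j)).2.1
  · intro i j
    exact (mem_filter.1 (hφ i j)).2.2.1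
  · intro i j
    exact (mem_filter.1 (hφ i j)).2.2.2
  · intro i j i' j' h
    exact inj _ _ _ _ (hSp _ (φ (i', j')).2 _ (φ (i, j)).2 (Or.inr (Or.inr h)))

lemma deg_split2 {γ : Type} [Fintype γ] (f : γ → Bool) (P : γ → Prop) :
    (cnt (fun x => P x) : ℝ) ≤ cnt (fun x => f x = true ∧ P x) + cnt (fun x => f x = false ∧ P x) := by
  simp only [cnt_eq]
  norm_cast
  refine (card_le_card ?_).trans (card_union_le _ _)
  intro x hx
  simp only [mem_filter, mem_univ, true_and, mem_union] at hx ⊢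
  cases f x <;> simp [hx]

lemma flip_card {γ : Type} [Fintype γ] (f : γ → Bool) (c : Bool) (S : Finset γ)
    (hS : ∀ x ∈ S, f x = c) :
    cnt (fun x => (if x ∈ S then !c else f x) = c) + S.card = cnt (fun x => f x = c) := by
  simp only [cnt_eq]
  have h : univ.filter (fun x => f x = c) =
      univ.filter (fun x => (if x ∈ S then !c else f x) = c) ∪ S := by
    ext x
    simp only [mem_filter, mem_univ, true_and, mem_union]
    by_cases hx : x ∈ S
    · simp [hx, hS x hx]
    · simp [hx]
  rw [h, card_union_of_disjoint]
  rw [disjoint_left]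
  intro x hx hxS
  simp [hxS] at hx

set_option maxHeartbeats 2000000 in
/-- Structure lemma, oriented. -/
theorem struct1 {α β : Type} [Fintype α] [Fintype β] (N : ℝ) (hN : 10 ^ 9 ≤ N)
    (E : α → β → Prop) (χ : α → β → ℕ) (pA qA : α → Bool) (pB qB : β → Bool)
    (TA : Finset α) (TB : Finset β)
    (hNA : (Fintype.card α : ℝ) = N) (hNB : (Fintype.card β : ℝ) = N)
    (hpA : ∀ c, N / 2 - N / 10 ^ 10 ≤ (cnt (fun a => pA a = c) : ℝ) ∧
      (cnt (fun a => pA a = c) : ℝ) ≤ N / 2 + N / 10 ^ 10)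
    (hpB : ∀ c, N / 2 - N / 10 ^ 10 ≤ (cnt (fun b => pB b = c) : ℝ) ∧
      (cnt (fun b => pB b = c) : ℝ) ≤ N / 2 + N / 10 ^ 10)
    (hTA : (TA.card : ℝ) ≤ N / 10 ^ 10) (hTB : (TB.card : ℝ) ≤ N / 10 ^ 10)
    (hqA : ∀ a, a ∉ TA → qA a = pA a) (hqB : ∀ b, b ∉ TB → qB b = pB b)
    (tyA : ∀ a, a ∉ TA → (cnt (fun b => pB b = pA a ∧ ¬ E a b) : ℝ) ≤ N / 10 ^ 6)
    (tyB : ∀ b, b ∉ TB → (cnt (fun a => pA a = pB b ∧ ¬ E a b) : ℝ) ≤ N / 10 ^ 6)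
    (atA : ∀ a ∈ TA, N / 4 ≤ (cnt (fun b => pB b = qA a ∧ E a b) : ℝ))
    (atB : ∀ b ∈ TB, N / 4 ≤ (cnt (fun a => pA a = qB b ∧ E a b) : ℝ))
    (degA : ∀ a, N / 2 ≤ (cnt (fun b => E a b) : ℝ))
    (degB : ∀ b, N / 2 ≤ (cnt (fun a => E a b) : ℝ))
    (hcol : ∀ c, (cnt (fun e : α × β => E e.1 e.2 ∧ χ e.1 e.2 = c) : ℝ) ≤ N / 10 ^ 9)
    (hle : cnt (fun b => qB b = true) ≤ cnt (fun a => qA a = true)) :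
    ∃ σ : α ≃ β, (∀ a, E a (σ a)) ∧ ∀ a a', χ a (σ a) = χ a' (σ a') → a = a' := by
  have hNp : 0 < N := by linarith
  have cardEq : Fintype.card α = Fintype.card β := by
    have : (Fintype.card α : ℝ) = Fintype.card β := by rw [hNA, hNB]
    exact_mod_cast this
  obtain ⟨k0, hk0⟩ := Nat.exists_eq_add_of_le hle
  have hk0b : (k0 : ℝ) ≤ 4 * (N / 10 ^ 10) := by
    have h1 := cls_change' qA pA TA hqA true
    have h2 := cls_change' pB qB TB (fun x hx => (hqB x hx).symm) true
    have h3 : (cnt (fun a => qA a = true) : ℝ) = cnt (fun b => qB b = true) + k0 := by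
      exact_mod_cast hk0
    linarith [(hpA true).2, (hpB true).1]
  let PA : Finset α := univ.filter (fun a => qA a = true ∧
    50 * (N / 10 ^ 6) ≤ (cnt (fun b => pB b = false ∧ E a b) : ℝ))
  let PB : Finset β := univ.filter (fun b => qB b = false ∧
    50 * (N / 10 ^ 6) ≤ (cnt (fun a => pA a = true ∧ E a b) : ℝ))
  obtain ⟨PA', hPA', hrA⟩ := exists_subset_card_eq (min_le_right k0 PA.card)
  obtain ⟨PB', hPB', hrB⟩ := exists_subset_card_eq (min_le_right (k0 - PA'.card) PB.card)
  obtain ⟨k, hk⟩ : ∃ k, k0 = k + PA'.card + PB'.card := ⟨k0 - PA'.card - PB'.card, by omega⟩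
  have hfull : 0 < k → PA' = PA ∧ PB' = PB := by
    intro hkp
    exact ⟨eq_of_subset_of_card_le hPA' (by omega), eq_of_subset_of_card_le hPB' (by omega)⟩
  have memPA : ∀ a ∈ PA', qA a = true ∧
      50 * (N / 10 ^ 6) ≤ (cnt (fun b => pB b = false ∧ E a b) : ℝ) := by
    intro a ha
    have := hPA' ha
    simpa [PA] using this
  have memPB : ∀ b ∈ PB', qB b = false ∧
      50 * (N / 10 ^ 6) ≤ (cnt (fun a => pA a = true ∧ E a b) : ℝ) := by
    intro a ha
    have := hPB' ha
    simpa [PB] using this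
  let cA : α → Bool := fun a => if a ∈ PA' then false else qA a
  let cB : β → Bool := fun b => if b ∈ PB' then true else qB b
  let SA0 := TA ∪ PA'
  let SB0 := TB ∪ PB'
  have hPAc : (PA'.card : ℝ) ≤ 4 * (N / 10 ^ 10) := by
    refine le_trans ?_ hk0b
    have : PA'.card ≤ k0 := by omega
    exact_mod_cast this
  have hPBc : (PB'.card : ℝ) ≤ 4 * (N / 10 ^ 10) := by
    refine le_trans ?_ hk0b
    have : PB'.card ≤ k0 := by omega
    exact_mod_cast this
  have hkc : (k : ℝ) ≤ 4 * (N / 10 ^ 10) := by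
    refine le_trans ?_ hk0b
    have : k ≤ k0 := by omega
    exact_mod_cast this
  have hSA0 : (SA0.card : ℝ) ≤ 5 * (N / 10 ^ 10) := by
    have : (SA0.card : ℝ) ≤ TA.card + PA'.card := by exact_mod_cast card_union_le TA PA'
    linarith
  have hSB0 : (SB0.card : ℝ) ≤ 5 * (N / 10 ^ 10) := by
    have : (SB0.card : ℝ) ≤ TB.card + PB'.card := by exact_mod_cast card_union_le TB PB'
    linarith
  have hcA : ∀ a, a ∉ SA0 → cA a = pA a := by
    intro a ha
    simp only [SA0, mem_union, not_or] at ha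
    simp only [cA, if_neg ha.2]
    exact hqA a ha.1
  have hcB : ∀ b, b ∉ SB0 → cB b = pB b := by
    intro a ha
    simp only [SB0, mem_union, not_or] at ha
    simp only [cB, if_neg ha.2]
    exact hqB a ha.1
  have hcA' : ∀ a, a ∉ SA0 → pA a = cA a := fun a ha => (hcA a ha).symm
  have hcB' : ∀ a, a ∉ SB0 → pB a = cB a := fun a ha => (hcB a ha).symm
  -- class sizes
  have hA : ∀ c, N / 2 - N / 10 ^ 6 ≤ (cnt (fun a => cA a = c) : ℝ) ∧
      (cnt (fun a => cA a = c) : ℝ) ≤ N / 2 + N / 10 ^ 6 := by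
    intro c
    have h1 := cls_change' cA pA SA0 hcA c
    have h2 := cls_change' pA cA SA0 hcA' c
    have h3 := hpA c
    constructor <;> linarith
  have hB : ∀ c, N / 2 - N / 10 ^ 6 ≤ (cnt (fun a => cB a = c) : ℝ) ∧
      (cnt (fun a => cB a = c) : ℝ) ≤ N / 2 + N / 10 ^ 6 := by
    intro c
    have h1 := cls_change' cB pB SB0 hcB c
    have h2 := cls_change' pB cB SB0 hcB' c
    have h3 := hpB c
    constructor <;> linarith
  have fA : cnt (fun a => cA a = true) + PA'.card = cnt (fun a => qA a = true) :=
    flip_card qA true PA' (fun a ha => (memPA a ha).1)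
  have fB : cnt (fun b => cB b = false) + PB'.card = cnt (fun b => qB b = false) :=
    flip_card qB false PB' (fun b hb => (memPB b hb).1)
  have g1 : cnt (fun a => cA a = true) + cnt (fun a => cA a = false) = Fintype.card α := cls_compl cA true
  have g2 : cnt (fun a => qA a = true) + cnt (fun a => qA a = false) = Fintype.card α := cls_compl qA true
  have g3 : cnt (fun a => cB a = true) + cnt (fun a => cB a = false) = Fintype.card β := cls_compl cB true
  have g4 : cnt (fun a => qB a = true) + cnt (fun a => qB a = false) = Fintype.card β := cls_compl qB true
  have hc1 : cnt (fun a => cA a = true) = cnt (fun b => cB b = true) + k := by omega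
  have hc2 : cnt (fun a => cA a = false) + k = cnt (fun b => cB b = false) := by omega
  -- typical vertices
  have nsA : ∀ a, a ∉ SA0 → (cnt (fun b => cB b = cA a ∧ ¬ E a b) : ℝ) ≤ 2 * (N / 10 ^ 6) := by
    intro a ha
    have h1 := cls_change cB pB SB0 hcB (cA a) (fun b => ¬ E a b)
    have h2 := tyA a (fun h => ha (mem_union_left _ h))
    rw [← hcA a ha] at h2
    linarith
  have nsB : ∀ b, b ∉ SB0 → (cnt (fun a => cA a = cB b ∧ ¬ E a b) : ℝ) ≤ 2 * (N / 10 ^ 6) := by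
    intro b hb
    have h1 := cls_change cA pA SA0 hcA (cB b) (fun a => ¬ E a b)
    have h2 := tyB b (fun h => hb (mem_union_left _ h))
    rw [← hcB b hb] at h2
    linarith
  have spA : ∀ a, 45 * (N / 10 ^ 6) ≤ (cnt (fun b => cB b = cA a ∧ E a b) : ℝ) := by
    intro a
    by_cases ha : a ∈ SA0
    · have h1 := cls_change pB cB SB0 hcB' (cA a) (fun b => E a b)
      by_cases haP : a ∈ PA'
      · have h2 : cA a = false := by simp only [cA, if_pos haP]
        rw [h2] at h1 ⊢
        linarith [(memPA a haP).2]
      · have h2 : cA a = qA a := by simp only [cA, if_neg haP]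
        have h3 : a ∈ TA := by
          rcases mem_union.1 ha with h | h
          · exact h
          · exact absurd h haP
        rw [h2] at h1 ⊢
        linarith [atA a h3]
    · have h1 := cls_split cB (fun b => E a b) (cA a)
      linarith [nsA a ha, (hB (cA a)).1]
  have spB : ∀ b, 45 * (N / 10 ^ 6) ≤ (cnt (fun a => cA a = cB b ∧ E a b) : ℝ) := by
    intro b
    by_cases hb : b ∈ SB0
    · have h1 := cls_change pA cA SA0 hcA' (cB b) (fun a => E a b)
      by_cases hbP : b ∈ PB'
      · have h2 : cB b = true := by simp only [cB, if_pos hbP]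
        rw [h2] at h1 ⊢
        linarith [(memPB b hbP).2]
      · have h2 : cB b = qB b := by simp only [cB, if_neg hbP]
        have h3 : b ∈ TB := by
          rcases mem_union.1 hb with h | h
          · exact h
          · exact absurd h hbP
        rw [h2] at h1 ⊢
        linarith [atB b h3]
    · have h1 := cls_split cA (fun a => E a b) (cB b)
      linarith [nsB b hb, (hA (cB b)).1]
  have xA : 0 < k → ∀ a, cA a = true →
      (cnt (fun b => cB b = false ∧ E a b) : ℝ) ≤ 60 * (N / 10 ^ 6) := by
    intro hkp a ha
    have haP : a ∉ PA' := by
      intro h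
      simp only [cA, if_pos h] at ha
      exact absurd ha (by decide)
    have hq : qA a = true := by simpa only [cA, if_neg haP] using ha
    have h1 := cls_change cB pB SB0 hcB false (fun b => E a b)
    rw [(hfull hkp).1] at haP
    have h2 : (cnt (fun b => pB b = false ∧ E a b) : ℝ) < 50 * (N / 10 ^ 6) := by
      by_contra h
      exact haP (mem_filter.2 ⟨mem_univ _, hq, not_lt.1 h⟩)
    linarith
  have xB : 0 < k → ∀ b, cB b = false →
      (cnt (fun a => cA a = true ∧ E a b) : ℝ) ≤ 60 * (N / 10 ^ 6) := by
    intro hkp b hb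
    have hbP : b ∉ PB' := by
      intro h
      simp only [cB, if_pos h] at hb
      exact absurd hb (by decide)
    have hq : qB b = false := by simpa only [cB, if_neg hbP] using hb
    have h1 := cls_change cA pA SA0 hcA true (fun a => E a b)
    rw [(hfull hkp).2] at hbP
    have h2 : (cnt (fun a => pA a = true ∧ E a b) : ℝ) < 50 * (N / 10 ^ 6) := by
      by_contra h
      exact hbP (mem_filter.2 ⟨mem_univ _, hq, not_lt.1 h⟩)
    linarith
  obtain ⟨xs, ys, xinj, yinj, xcl, ycl, hE, hrb⟩ :=
    crossing N hN E χ cA cB hNA hA hB hc1 degA degB xA xB hcol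
  have kpos : ∀ i : Fin k, 0 < k := fun i => i.pos
  let XS : Finset α := univ.image (fun e : Fin k × Fin 1003 => xs e.1 e.2)
  let YS : Finset β := univ.image (fun e : Fin k × Fin 1003 => ys e.1 e.2)
  have hXS : (XS.card : ℝ) ≤ k * 1003 := by
    have : XS.card ≤ k * 1003 := card_image_le.trans (by simp)
    exact_mod_cast this
  have hYS : (YS.card : ℝ) ≤ k * 1003 := by
    have : YS.card ≤ k * 1003 := card_image_le.trans (by simp)
    exact_mod_cast this
  refine assemble N hN E χ cA cB (SA0 ∪ XS) (SB0 ∪ YS) xs ys hA hB hc1 hc2 ?_ ?_ ?_ ?_ ?_ ?_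
    xinj yinj xcl ycl ?_ ?_ hE ?_ ?_ hrb hcol
  · have : ((SA0 ∪ XS).card : ℝ) ≤ SA0.card + XS.card := by exact_mod_cast card_union_le SA0 XS
    linarith
  · have : ((SB0 ∪ YS).card : ℝ) ≤ SB0.card + YS.card := by exact_mod_cast card_union_le SB0 YS
    linarith
  · intro a ha
    exact nsA a (fun h => ha (mem_union_left _ h))
  · intro b hb
    exact nsB b (fun h => hb (mem_union_left _ h))
  · intro a _
    exact spA a
  · intro b _
    exact spB b
  · intro i j
    exact mem_union_right _ (mem_image.2 ⟨(i, j), mem_univ _, rfl⟩)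
  · intro i j
    exact mem_union_right _ (mem_image.2 ⟨(i, j), mem_univ _, rfl⟩)
  · intro i j
    have h2 := cls_split cB (fun b => E (xs i j) b) true
    have h4 := xA (kpos i) (xs i j) (xcl i j)
    have h5 := degA (xs i j)
    have h7 := (hB true).2
    have h8 : (cnt (fun b => E (xs i j) b) : ℝ) ≤ cnt (fun b => cB b = true ∧ E (xs i j) b) +
      cnt (fun b => cB b = false ∧ E (xs i j) b) := deg_split2 _ _
    linarith
  · intro i j
    have h2 := cls_split cA (fun a => E a (ys i j)) false
    have h4 := xB (kpos i) (ys i j) (ycl i j)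
    have h5 := degB (ys i j)
    have h7 := (hA false).2
    have h8 : (cnt (fun a => E a (ys i j)) : ℝ) ≤ cnt (fun a => cA a = true ∧ E a (ys i j)) +
      cnt (fun a => cA a = false ∧ E a (ys i j)) := deg_split2 _ _
    linarith

lemma cnt_prod {α β : Type} [Fintype α] [Fintype β] (p : α → Prop) (q : β → Prop) :
    cnt (fun e : α × β => p e.1 ∧ q e.2) = cnt p * cnt q := by
  simp only [cnt_eq]
  rw [← card_product]
  congr 1
  ext e
  simp

lemma cnt_mono {γ : Type} [Fintype γ] {P Q : γ → Prop} (h : ∀ x, P x → Q x) : cnt P ≤ cnt Q := by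
  simp only [cnt_eq]
  apply card_le_card
  intro x hx
  simp only [mem_filter, mem_univ, true_and] at hx ⊢
  exact h x hx

lemma cnt_add_le {γ : Type} [Fintype γ] {P Q R : γ → Prop} (h : ∀ x, P x → Q x ∨ R x) :
    (cnt P : ℝ) ≤ cnt Q + cnt R := by
  simp only [cnt_eq]
  norm_cast
  refine (card_le_card ?_).trans (card_union_le _ _)
  intro x hx
  simp only [mem_filter, mem_univ, true_and, mem_union] at hx ⊢
  exact h x hx

lemma cnt_add_eq {γ : Type} [Fintype γ] {P Q R : γ → Prop} (h : ∀ x, P x ↔ Q x ∨ R x)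
    (h' : ∀ x, ¬ (Q x ∧ R x)) :
    (cnt P : ℝ) = cnt Q + cnt R := by
  simp only [cnt_eq]
  norm_cast
  rw [← card_union_of_disjoint]
  · congr 1
    ext x
    simp [h]
  · rw [disjoint_left]
    intro x hx hxb
    simp only [mem_filter, mem_univ, true_and] at hx hxb
    exact h' x ⟨hx, hxb⟩

/-- Structure lemma, from few non-edges. -/
theorem struct2 {α β : Type} [Fintype α] [Fintype β] (N : ℝ) (hN : 10 ^ 9 ≤ N)
    (E : α → β → Prop) (χ : α → β → ℕ) (pA : α → Bool) (pB : β → Bool)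
    (hNA : (Fintype.card α : ℝ) = N) (hNB : (Fintype.card β : ℝ) = N)
    (hpA : ∀ c, N / 2 - N / 10 ^ 20 ≤ (cnt (fun a => pA a = c) : ℝ) ∧
      (cnt (fun a => pA a = c) : ℝ) ≤ N / 2 + N / 10 ^ 20)
    (hpB : ∀ c, N / 2 - N / 10 ^ 20 ≤ (cnt (fun b => pB b = c) : ℝ) ∧
      (cnt (fun b => pB b = c) : ℝ) ≤ N / 2 + N / 10 ^ 20)
    (hX : (cnt (fun e : α × β => pA e.1 = true ∧ pB e.2 = false ∧ E e.1 e.2) : ℝ) ≤ N ^ 2 / 10 ^ 20)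
    (degA : ∀ a, N / 2 ≤ (cnt (fun b => E a b) : ℝ))
    (degB : ∀ b, N / 2 ≤ (cnt (fun a => E a b) : ℝ))
    (hcol : ∀ c, (cnt (fun e : α × β => E e.1 e.2 ∧ χ e.1 e.2 = c) : ℝ) ≤ N / 10 ^ 9) :
    ∃ σ : α ≃ β, (∀ a, E a (σ a)) ∧ ∀ a a', χ a (σ a) = χ a' (σ a') → a = a' := by
  have hNp : 0 < N := by linarith
  have hNN : 0 < N ^ 2 := by positivity
  have n1 : (cnt (fun e : α × β => (pA e.1 = true ∧ pB e.2 = true) ∧ ¬ E e.1 e.2) : ℝ) ≤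
      2 * (N ^ 2 / 10 ^ 20) := by
    have h1 := edge_count (fun a => pA a = true) E (N / 2) (fun a _ => degA a)
    have h2 : (cnt (fun e : α × β => pA e.1 = true ∧ E e.1 e.2) : ℝ) ≤
        cnt (fun e : α × β => (pA e.1 = true ∧ pB e.2 = true) ∧ E e.1 e.2) +
        cnt (fun e : α × β => pA e.1 = true ∧ pB e.2 = false ∧ E e.1 e.2) := by
      apply cnt_add_le
      rintro ⟨a, b⟩ ⟨h, h'⟩
      cases hb : pB b <;> simp_all
    have h3 : (cnt (fun e : α × β => pA e.1 = true ∧ pB e.2 = true) : ℝ) =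
        cnt (fun e : α × β => (pA e.1 = true ∧ pB e.2 = true) ∧ E e.1 e.2) +
        cnt (fun e : α × β => (pA e.1 = true ∧ pB e.2 = true) ∧ ¬ E e.1 e.2) := by
      apply cnt_add_eq
      · intro x; tauto
      · intro x; tauto
    have h4 := cnt_prod (fun a => pA a = true) (fun b => pB b = true)
    rw [h4] at h3
    push_cast at h3
    have h5 := hpA true
    have h6 := hpB true
    have h7 : (cnt (fun a => pA a = true) : ℝ) * cnt (fun b => pB b = true) ≤
      (cnt (fun a => pA a = true) : ℝ) * (N / 2 + N / 10 ^ 20) :=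
      mul_le_mul_of_nonneg_left h6.2 (by positivity)
    have h8 : (cnt (fun a => pA a = true) : ℝ) * (N / 10 ^ 20) ≤ N * (N / 10 ^ 20) :=
      mul_le_mul_of_nonneg_right (by linarith) (by positivity)
    have h9 : N * (N / 10 ^ 20) = N ^ 2 / 10 ^ 20 := by ring
    rw [mul_add] at h7
    linarith
  have n2 : (cnt (fun e : α × β => (pA e.1 = false ∧ pB e.2 = false) ∧ ¬ E e.1 e.2) : ℝ) ≤
      2 * (N ^ 2 / 10 ^ 20) := by
    have h1 := edge_count' (fun b => pB b = false) E (N / 2) (fun a _ => degB a)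
    have h2 : (cnt (fun e : α × β => pB e.2 = false ∧ E e.1 e.2) : ℝ) ≤
        cnt (fun e : α × β => (pA e.1 = false ∧ pB e.2 = false) ∧ E e.1 e.2) +
        cnt (fun e : α × β => pA e.1 = true ∧ pB e.2 = false ∧ E e.1 e.2) := by
      apply cnt_add_le
      rintro ⟨a, b⟩ ⟨h, h'⟩
      cases ha : pA a <;> simp_all
    have h3 : (cnt (fun e : α × β => pA e.1 = false ∧ pB e.2 = false) : ℝ) =
        cnt (fun e : α × β => (pA e.1 = false ∧ pB e.2 = false) ∧ E e.1 e.2) +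
        cnt (fun e : α × β => (pA e.1 = false ∧ pB e.2 = false) ∧ ¬ E e.1 e.2) := by
      apply cnt_add_eq
      · intro x; tauto
      · intro x; tauto
    have h4 := cnt_prod (fun a => pA a = false) (fun b => pB b = false)
    rw [h4] at h3
    push_cast at h3
    have h5 := hpA false
    have h6 := hpB false
    have h7 : (cnt (fun a => pA a = false) : ℝ) * cnt (fun b => pB b = false) ≤
      (N / 2 + N / 10 ^ 20) * (cnt (fun b => pB b = false) : ℝ) :=
      mul_le_mul_of_nonneg_right h5.2 (by positivity)
    have h8 : (cnt (fun b => pB b = false) : ℝ) * (N / 10 ^ 20) ≤ N * (N / 10 ^ 20) :=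
      mul_le_mul_of_nonneg_right (by linarith) (by positivity)
    have h9 : N * (N / 10 ^ 20) = N ^ 2 / 10 ^ 20 := by ring
    rw [add_mul] at h7
    linarith
  have ntot : (cnt (fun e : α × β => pA e.1 = pB e.2 ∧ ¬ E e.1 e.2) : ℝ) ≤ 4 * (N ^ 2 / 10 ^ 20) := by
    have := cnt_add_le (P := fun e : α × β => pA e.1 = pB e.2 ∧ ¬ E e.1 e.2)
      (Q := fun e : α × β => (pA e.1 = true ∧ pB e.2 = true) ∧ ¬ E e.1 e.2)
      (R := fun e : α × β => (pA e.1 = false ∧ pB e.2 = false) ∧ ¬ E e.1 e.2) (by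
        rintro ⟨a, b⟩ ⟨h, h'⟩
        cases ha : pA a <;> cases hb : pB b <;> simp_all)
    linarith
  let TA : Finset α := univ.filter (fun a => N / 10 ^ 6 < (cnt (fun b => pB b = pA a ∧ ¬ E a b) : ℝ))
  let TB : Finset β := univ.filter (fun b => N / 10 ^ 6 < (cnt (fun a => pA a = pB b ∧ ¬ E a b) : ℝ))
  have key : ∀ t : ℝ, t * (N / 10 ^ 6) ≤ 4 * (N ^ 2 / 10 ^ 20) → t ≤ N / 10 ^ 10 := by
    intro t ht
    have h0 : 4 * (N ^ 2 / 10 ^ 20) ≤ N / 10 ^ 10 * (N / 10 ^ 6) := by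
      have : N / 10 ^ 10 * (N / 10 ^ 6) = N ^ 2 / 10 ^ 16 := by ring
      rw [this]
      linarith
    exact le_of_mul_le_mul_right (ht.trans h0) (by positivity)
  have cTA : cnt (fun a => N / 10 ^ 6 < (cnt (fun b => pB b = pA a ∧ ¬ E a b) : ℝ)) = TA.card := by
    rw [cnt_eq]
  have cTB : cnt (fun b => N / 10 ^ 6 < (cnt (fun a => pA a = pB b ∧ ¬ E a b) : ℝ)) = TB.card := by
    rw [cnt_eq]
  have hTA : (TA.card : ℝ) ≤ N / 10 ^ 10 := by
    apply key
    have h1 := edge_count (fun a => N / 10 ^ 6 < (cnt (fun b => pB b = pA a ∧ ¬ E a b) : ℝ))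
      (fun a b => pB b = pA a ∧ ¬ E a b) (N / 10 ^ 6) (fun a ha => ha.le)
    rw [cTA] at h1
    refine h1.trans (le_trans ?_ ntot)
    norm_cast
    apply cnt_mono
    rintro e ⟨_, h, h'⟩
    exact ⟨h.symm, h'⟩
  have hTB : (TB.card : ℝ) ≤ N / 10 ^ 10 := by
    apply key
    have h1 := edge_count' (fun b => N / 10 ^ 6 < (cnt (fun a => pA a = pB b ∧ ¬ E a b) : ℝ))
      (fun a b => pA a = pB b ∧ ¬ E a b) (N / 10 ^ 6) (fun a ha => ha.le)
    rw [cTB] at h1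
    refine h1.trans (le_trans ?_ ntot)
    norm_cast
    apply cnt_mono
    rintro e ⟨_, h, h'⟩
    exact ⟨h, h'⟩
  have exA : ∀ a, ∃ c, N / 4 ≤ (cnt (fun b => pB b = c ∧ E a b) : ℝ) := by
    intro a
    have h1 := deg_split2 pB (fun b => E a b)
    have h2 := degA a
    by_contra h
    push Not at h
    linarith [h true, h false]
  have exB : ∀ b, ∃ c, N / 4 ≤ (cnt (fun a => pA a = c ∧ E a b) : ℝ) := by
    intro b
    have h1 := deg_split2 pA (fun a => E a b)
    have h2 := degB b
    by_contra h
    push Not at h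
    linarith [h true, h false]
  choose gA hgA using exA
  choose gB hgB using exB
  let qA : α → Bool := fun a => if a ∈ TA then gA a else pA a
  let qB : β → Bool := fun b => if b ∈ TB then gB b else pB b
  have hqA : ∀ a, a ∉ TA → qA a = pA a := fun a ha => if_neg ha
  have hqB : ∀ b, b ∉ TB → qB b = pB b := fun a ha => if_neg ha
  have tyA : ∀ a, a ∉ TA → (cnt (fun b => pB b = pA a ∧ ¬ E a b) : ℝ) ≤ N / 10 ^ 6 := by
    intro a ha
    by_contra h
    exact ha (mem_filter.2 ⟨mem_univ _, not_le.1 h⟩)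
  have tyB : ∀ b, b ∉ TB → (cnt (fun a => pA a = pB b ∧ ¬ E a b) : ℝ) ≤ N / 10 ^ 6 := by
    intro a ha
    by_contra h
    exact ha (mem_filter.2 ⟨mem_univ _, not_le.1 h⟩)
  have atA : ∀ a ∈ TA, N / 4 ≤ (cnt (fun b => pB b = qA a ∧ E a b) : ℝ) := by
    intro a ha
    have : qA a = gA a := if_pos ha
    rw [this]
    exact hgA a
  have atB : ∀ b ∈ TB, N / 4 ≤ (cnt (fun a => pA a = qB b ∧ E a b) : ℝ) := by
    intro b hb
    have : qB b = gB b := if_pos hb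
    rw [this]
    exact hgB b
  have hpA' : ∀ c, N / 2 - N / 10 ^ 10 ≤ (cnt (fun a => pA a = c) : ℝ) ∧
      (cnt (fun a => pA a = c) : ℝ) ≤ N / 2 + N / 10 ^ 10 := by
    intro c
    have := hpA c
    constructor <;> linarith
  have hpB' : ∀ c, N / 2 - N / 10 ^ 10 ≤ (cnt (fun a => pB a = c) : ℝ) ∧
      (cnt (fun a => pB a = c) : ℝ) ≤ N / 2 + N / 10 ^ 10 := by
    intro c
    have := hpB c
    constructor <;> linarith
  rcases le_total (cnt (fun b => qB b = true)) (cnt (fun a => qA a = true)) with hle | hle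
  · exact struct1 N hN E χ pA qA pB qB TA TB hNA hNB hpA' hpB' hTA hTB hqA hqB tyA tyB atA atB
      degA degB hcol hle
  · have cardEq : Fintype.card α = Fintype.card β := by
      have : (Fintype.card α : ℝ) = Fintype.card β := by rw [hNA, hNB]
      exact_mod_cast this
    have nn : ∀ c d : Bool, ((!c) = d) = (c = !d) := by decide
    have nn2 : ∀ c d : Bool, ((!c) = !d) = (c = d) := by decide
    refine struct1 N hN E χ (fun a => !(pA a)) (fun a => !(qA a)) (fun b => !(pB b))
      (fun b => !(qB b)) TA TB hNA hNB ?_ ?_ hTA hTB ?_ ?_ ?_ ?_ ?_ ?_ degA degB hcol ?_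
    · intro c
      simp only [nn]
      exact hpA' (!c)
    · intro c
      simp only [nn]
      exact hpB' (!c)
    · intro a ha
      simp only [hqA a ha]
    · intro a ha
      simp only [hqB a ha]
    · intro a ha
      simp only [nn2]
      exact tyA a ha
    · intro a ha
      simp only [nn2]
      exact tyB a ha
    · intro a ha
      simp only [nn2]
      exact atA a ha
    · intro a ha
      simp only [nn2]
      exact atB a ha
    · have e1 : cnt (fun b => (!(qB b)) = true) = cnt (fun b => qB b = !true) := by simp only [nn]
      have e2 : cnt (fun b => (!(qA b)) = true) = cnt (fun b => qA b = !true) := by simp only [nn]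
      rw [e1, e2]
      have g2 := cls_compl qA true
      have g4 := cls_compl qB true
      omega

lemma cnt_le_ncard {γ δ : Type} [Fintype γ] [Finite δ] {P : γ → Prop} (f : γ → δ)
    (hf : Function.Injective f) (S : Set δ) (h : ∀ x, P x → f x ∈ S) : cnt P ≤ S.ncard := by
  rw [cnt_eq, ← Set.ncard_coe_finset, ← Set.ncard_image_of_injective _ hf]
  apply Set.ncard_le_ncard _ (Set.toFinite S)
  rintro _ ⟨x, hx, rfl⟩
  exact h x (by simpa using hx)

lemma ncard_le_cnt {γ δ : Type} [Fintype γ] {P : γ → Prop} (f : γ → δ)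
    (S : Set δ) (h : ∀ s ∈ S, ∃ x, P x ∧ f x = s) : S.ncard ≤ cnt P := by
  rw [cnt_eq, ← Set.ncard_coe_finset]
  refine le_trans ?_ (Set.ncard_image_le (f := f) (Set.toFinite _))
  apply Set.ncard_le_ncard _ (Set.toFinite _)
  intro s hs
  obtain ⟨x, hx, hxs⟩ := h s hs
  exact ⟨x, by simpa using hx, hxs⟩

lemma cnt_eq_ncard {V : Type} [Finite V] (A : Set V) [Fintype A] (P : A → Prop) (S : Set V)
    (h1 : ∀ x : A, P x ↔ (x : V) ∈ S) (h2 : S ⊆ A) : cnt P = S.ncard := by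
  apply le_antisymm
  · exact cnt_le_ncard Subtype.val Subtype.val_injective S (fun x hx => (h1 x).1 hx)
  · exact ncard_le_cnt Subtype.val S (fun s hs => ⟨⟨s, h2 hs⟩, (h1 _).2 hs, rfl⟩)

theorem rainbow_aux (n : ℕ) (hn : 10 ^ 9 ≤ n) (ε : ℝ) (hε : ε ≤ 1 / 10 ^ 20)
    (V : Type) [Fintype V] (G : SimpleGraph V) (A B : Set V)
    (hAB : A ∪ B = Set.univ) (hdis : Disjoint A B) (hAn : A.ncard = n) (hBn : B.ncard = n)
    (hbip : ∀ u v : V, G.Adj u v → (u ∈ A ∧ v ∈ B) ∨ (u ∈ B ∧ v ∈ A))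
    (hdeg : ∀ v : V, (n : ℝ) / 2 ≤ ((G.neighborSet v).ncard : ℝ))
    (hext : EpsExtremal G A B n ε) (χ : Sym2 V → ℕ)
    (hcol : ∀ c : ℕ, (({e : Sym2 V | e ∈ G.edgeSet ∧ χ e = c}).ncard : ℝ) ≤ 1 / 10 ^ 9 * n) :
    ∃ M : G.Subgraph, M.IsPerfectMatching ∧
      ∀ e ∈ M.edgeSet, ∀ f ∈ M.edgeSet, χ e = χ f → e = f := by
  have hNr : (10 : ℝ) ^ 9 ≤ n := by exact_mod_cast hn
  have hNp : (0 : ℝ) < n := by linarith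
  obtain ⟨A₁, A₂, B₁, B₂, hA, hA12, hB, hB12, hAc, hBc, hX⟩ := hext
  have nAB : ∀ v, v ∈ A → v ∈ B → False := fun v h h' => Set.disjoint_left.1 hdis h h'
  have eε : ε * n ≤ 1 / 10 ^ 20 * n := mul_le_mul_of_nonneg_right hε hNp.le
  have sizes : ∀ (X Y Z : Set V), X ∪ Y = Z → Disjoint X Y → Z.ncard = n →
      |(X.ncard : ℝ) - (Y.ncard : ℝ)| ≤ ε * n →
      ((n : ℝ) / 2 - n / 10 ^ 20 ≤ X.ncard ∧ (X.ncard : ℝ) ≤ n / 2 + n / 10 ^ 20) ∧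
      ((n : ℝ) / 2 - n / 10 ^ 20 ≤ Y.ncard ∧ (Y.ncard : ℝ) ≤ n / 2 + n / 10 ^ 20) := by
    intro X Y Z h1 h2 h3 h4
    have h5 := Set.ncard_union_eq h2 (Set.toFinite _) (Set.toFinite _)
    rw [h1, h3] at h5
    have h6 : (n : ℝ) = X.ncard + Y.ncard := by exact_mod_cast h5
    rw [abs_le] at h4
    refine ⟨⟨?_, ?_⟩, ?_, ?_⟩ <;> linarith [h4.1, h4.2]
  have sA := sizes A₁ A₂ A hA hA12 hAn hAc
  have sB := sizes B₁ B₂ B hB hB12 hBn hBc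
  let E : A → B → Prop := fun a b => G.Adj a b
  let pA : A → Bool := fun a => decide ((a : V) ∈ A₁)
  let pB : B → Bool := fun b => decide ((b : V) ∈ B₁)
  have memA2 : ∀ a ∈ A, a ∉ A₁ ↔ a ∈ A₂ := by
    intro a ha
    rw [← hA] at ha
    constructor
    · intro h; exact ha.resolve_left h
    · intro h h'; exact Set.disjoint_left.1 hA12 h' h
  have memB2 : ∀ a ∈ B, a ∉ B₁ ↔ a ∈ B₂ := by
    intro a ha
    rw [← hB] at ha
    constructor
    · intro h; exact ha.resolve_left h
    · intro h h'; exact Set.disjoint_left.1 hB12 h' h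
  have cA1 : cnt (fun a => pA a = true) = A₁.ncard :=
    cnt_eq_ncard A _ A₁ (fun x => by simp [pA]) (hA ▸ Set.subset_union_left)
  have cA2 : cnt (fun a => pA a = false) = A₂.ncard :=
    cnt_eq_ncard A _ A₂ (fun x => by simp [pA, memA2 x.1 x.2]) (hA ▸ Set.subset_union_right)
  have cB1 : cnt (fun a => pB a = true) = B₁.ncard :=
    cnt_eq_ncard B _ B₁ (fun x => by simp [pB]) (hB ▸ Set.subset_union_left)
  have cB2 : cnt (fun a => pB a = false) = B₂.ncard :=
    cnt_eq_ncard B _ B₂ (fun x => by simp [pB, memB2 x.1 x.2]) (hB ▸ Set.subset_union_right)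
  obtain ⟨σ, hσE, hσ⟩ := struct2 (n : ℝ) hNr E (fun a b => χ s(a.1, b.1)) pA pB
    (by rw [← Nat.card_eq_fintype_card, Nat.card_coe_set_eq, hAn])
    (by rw [← Nat.card_eq_fintype_card, Nat.card_coe_set_eq, hBn])
    (by
      rintro (_ | _)
      · rw [cA2]; exact sA.2
      · rw [cA1]; exact sA.1)
    (by
      rintro (_ | _)
      · rw [cB2]; exact sB.2
      · rw [cB1]; exact sB.1)
    (by
      have h1 : cnt (fun e : A × B => pA e.1 = true ∧ pB e.2 = false ∧ E e.1 e.2) ≤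
          ({p : V × V | p.1 ∈ A₁ ∧ p.2 ∈ B₂ ∧ G.Adj p.1 p.2}).ncard := by
        apply cnt_le_ncard (fun e => ((e.1 : V), (e.2 : V)))
        · rintro ⟨a, b⟩ ⟨a', b'⟩ h
          simp only [Prod.mk.injEq] at h
          exact Prod.ext (Subtype.ext h.1) (Subtype.ext h.2)
        · rintro ⟨a, b⟩ ⟨h1, h2, h3⟩
          refine ⟨by simpa [pA] using h1, ?_, h3⟩
          rw [← memB2 b.1 b.2]
          simpa [pB] using h2
      have h2 : (cnt (fun e : A × B => pA e.1 = true ∧ pB e.2 = false ∧ E e.1 e.2) : ℝ) ≤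
          ({p : V × V | p.1 ∈ A₁ ∧ p.2 ∈ B₂ ∧ G.Adj p.1 p.2}).ncard := by exact_mod_cast h1
      have h3 : ε * (n : ℝ) ^ 2 ≤ 1 / 10 ^ 20 * (n : ℝ) ^ 2 :=
        mul_le_mul_of_nonneg_right hε (by positivity)
      linarith)
    (by
      intro a
      refine (hdeg a).trans ?_
      norm_cast
      apply ncard_le_cnt Subtype.val
      intro v hv
      have hadj : G.Adj a v := hv
      have hvB : v ∈ B := by
        rcases hbip _ _ hadj with h | h
        · exact h.2
        · exact absurd h.1 (fun h' => nAB _ a.2 h')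
      exact ⟨⟨v, hvB⟩, hadj, rfl⟩)
    (by
      intro b
      refine (hdeg b).trans ?_
      norm_cast
      apply ncard_le_cnt Subtype.val
      intro v hv
      have hadj : G.Adj b v := hv
      have hvA : v ∈ A := by
        rcases hbip _ _ hadj with h | h
        · exact absurd h.1 (fun h' => nAB _ h' b.2)
        · exact h.2
      exact ⟨⟨v, hvA⟩, hadj.symm, rfl⟩)
    (by
      intro c
      have h1 : cnt (fun e : A × B => E e.1 e.2 ∧ χ s(e.1.1, e.2.1) = c) ≤
          ({e : Sym2 V | e ∈ G.edgeSet ∧ χ e = c}).ncard := by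
        apply cnt_le_ncard (fun e => s((e.1 : V), (e.2 : V)))
        · rintro ⟨a, b⟩ ⟨a', b'⟩ h
          simp only [Sym2.eq_iff] at h
          rcases h with h | h
          · exact Prod.ext (Subtype.ext h.1) (Subtype.ext h.2)
          · exact (nAB a.1 a.2 (h.1 ▸ b'.2)).elim
        · rintro ⟨a, b⟩ ⟨h1, h2⟩
          exact ⟨h1, h2⟩
      have h2 : (cnt (fun e : A × B => E e.1 e.2 ∧ χ s(e.1.1, e.2.1) = c) : ℝ) ≤
          ({e : Sym2 V | e ∈ G.edgeSet ∧ χ e = c}).ncard := by exact_mod_cast h1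
      have h3 := hcol c
      linarith)
  let M : G.Subgraph :=
    { verts := Set.univ
      Adj := fun u v => ∃ a : A, (u = a ∧ v = σ a) ∨ (v = a ∧ u = σ a)
      adj_sub := by
        rintro u v ⟨a, ⟨rfl, rfl⟩ | ⟨rfl, rfl⟩⟩
        · exact hσE a
        · exact (hσE a).symm
      edge_vert := fun _ => Set.mem_univ _
      symm := by
        constructor
        rintro u v ⟨a, h⟩
        exact ⟨a, h.symm⟩ }
  refine ⟨M, ⟨?_, fun v => Set.mem_univ v⟩, ?_⟩
  · intro v _
    have hv : v ∈ A ∪ B := hAB ▸ Set.mem_univ v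
    rcases hv with hv | hv
    · refine ⟨σ ⟨v, hv⟩, ⟨⟨v, hv⟩, Or.inl ⟨rfl, rfl⟩⟩, ?_⟩
      rintro w ⟨a, ⟨h1, h2⟩ | ⟨h1, h2⟩⟩
      · have : a = ⟨v, hv⟩ := Subtype.ext h1.symm
        rw [h2, this]
      · exact (nAB v hv (h2 ▸ (σ a).2)).elim
    · refine ⟨σ.symm ⟨v, hv⟩, ⟨σ.symm ⟨v, hv⟩, Or.inr ⟨rfl, by simp⟩⟩, ?_⟩
      rintro w ⟨a, ⟨h1, h2⟩ | ⟨h1, h2⟩⟩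
      · exact (nAB v (h1 ▸ a.2) hv).elim
      · have : σ a = ⟨v, hv⟩ := Subtype.ext h2.symm
        rw [h1, ← this, Equiv.symm_apply_apply]
  · have hedge : ∀ e ∈ M.edgeSet, ∃ a : A, e = s((a : V), (σ a : V)) := by
      intro e
      induction e using Sym2.ind with
      | _ u v =>
        intro h
        rw [SimpleGraph.Subgraph.mem_edgeSet] at h
        obtain ⟨a, ⟨h1, h2⟩ | ⟨h1, h2⟩⟩ := h
        · exact ⟨a, by rw [h1, h2]⟩
        · exact ⟨a, by rw [h1, h2, Sym2.eq_swap]⟩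
    intro e he f hf h
    obtain ⟨a, rfl⟩ := hedge e he
    obtain ⟨a', rfl⟩ := hedge f hf
    rw [hσ a a' h]

end RainbowHelpers

/-- there is ε₀ ∈ (0,1) such that for every ε ∈ (0,ε₀] there are μ > 0 and
n₀ such that for every n ≥ n₀: every μn-bounded edge colouring of an ε-extremal Dirac
bipartite graph on 2n vertices contains a rainbow perfect matching. -/
theorem rainbow_PM_in_extremal :
    ∃ ε₀ ∈ Set.Ioo (0 : ℝ) 1, ∀ ε ∈ Set.Ioc (0 : ℝ) ε₀,
    ∃ μ : ℝ, 0 < μ ∧ ∃ n₀ : ℕ, ∀ n : ℕ, n₀ ≤ n →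
      ∀ (V : Type) [Fintype V] (G : SimpleGraph V) (A B : Set V),
        A ∪ B = Set.univ → Disjoint A B → A.ncard = n → B.ncard = n →
        (∀ u v : V, G.Adj u v → (u ∈ A ∧ v ∈ B) ∨ (u ∈ B ∧ v ∈ A)) →
        (∀ v : V, (n : ℝ) / 2 ≤ ((G.neighborSet v).ncard : ℝ)) →
        EpsExtremal G A B n ε →
        ∀ χ : Sym2 V → ℕ,
          (∀ c : ℕ, (({e : Sym2 V | e ∈ G.edgeSet ∧ χ e = c}).ncard : ℝ) ≤ μ * n) →
          ∃ M : G.Subgraph, M.IsPerfectMatching ∧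
            ∀ e ∈ M.edgeSet, ∀ f ∈ M.edgeSet, χ e = χ f → e = f := by
  refine ⟨1 / 10 ^ 20, ⟨by norm_num, by norm_num⟩, ?_⟩
  rintro ε ⟨_, hε⟩
  refine ⟨1 / 10 ^ 9, by norm_num, 10 ^ 9, ?_⟩
  intro n hn V _ G A B hAB hdis hAn hBn hbip hdeg hext χ hcol
  exact rainbow_aux n hn ε hε V G A B hAB hdis hAn hBn hbip hdeg hext χ hcol
end
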